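/- Let n be a natural number and p a prime with p ≥ n, and let λ_1 ≥ ⋯ ≥ λ_t be a partition of n. Then there is a bijection between: (i) the set of isomorphism classes of groups P of order p^n of type (λ_1,…,λ_t) — meaning that for every i ≥ 0 the number of elements x ∈ P with x^{p^i} = 1 equals p^{∑_{j=1}^t min(λ_j, i)} — in which ⁅x,y⁆^p = 1 for all x,y ∈ P; and (ii) the set of isomorphism classes of nilpotent Lie algebras L over R_n = (ℤ/pℤ)[X]/(X^n) with p^n elements, of type (λ_1,…,λ_t) — meaning that for every i ≥ 0 the number of elements x ∈ L with T^i • x = 0 equals p^{∑_{j=1}^t min(λ_j, i)} — in which T•⁅a,b⁆ = 0 for all a,b ∈ L, where T is the image of X in R_n. -/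

import Mathlib

set_option synthInstance.maxHeartbeats 1000000

open Polynomial
open scoped commutatorElement

/-- The ring `R_n = (ℤ/pℤ)[X]/(Xⁿ)`. -/
noncomputable abbrev Rn (p n : ℕ) : Type :=
  Polynomial (ZMod p) ⧸ Ideal.span {(X : Polynomial (ZMod p)) ^ n}

/-- `T`, the image of `X` in `R_n`. -/
noncomputable def Tn (p n : ℕ) : Rn p n := Ideal.Quotient.mk _ X

/-- Bundled groups `P` of order `p ^ n`, of type `(λ₁, …, λ_t)` (i.e. with
`|{x : x ^ (p ^ i) = 1}| = p ^ ∑ⱼ min (λⱼ) i` for all `i`), in which `⁅x, y⁆ ^ p = 1`. -/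
def TypedGroup (p n t : ℕ) (lam : Fin t → ℕ) : Type 1 :=
  { q : Σ G : Type, Group G //
      letI := q.2
      Nat.card q.1 = p ^ n ∧
        (∀ i : ℕ, Nat.card {x : q.1 // x ^ p ^ i = 1} = p ^ (∑ j, min (lam j) i)) ∧
        ∀ x y : q.1, ⁅x, y⁆ ^ p = 1 }

/-- Group isomorphism between two bundled groups. -/
def typedGroupIsoRel (p n t : ℕ) (lam : Fin t → ℕ)
    (q₁ q₂ : TypedGroup p n t lam) : Prop :=
  letI := q₁.1.2; letI := q₂.1.2
  Nonempty (q₁.1.1 ≃* q₂.1.1)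

/-- Bundled nilpotent `R_n`-Lie algebras `L` with `p ^ n` elements, of type `(λ₁, …, λ_t)`
(i.e. with `|{x : Tⁱ • x = 0}| = p ^ ∑ⱼ min (λⱼ) i` for all `i`), in which `T • ⁅a, b⁆ = 0`. -/
def TypedLie (p n t : ℕ) (lam : Fin t → ℕ) : Type 1 :=
  { q : Σ (L : Type) (lr : LieRing L), @LieAlgebra (Rn p n) L _ lr //
      letI := q.2.1; letI := q.2.2
      Nat.card q.1 = p ^ n ∧
        (∀ i : ℕ, Nat.card {x : q.1 // (Tn p n) ^ i • x = 0} = p ^ (∑ j, min (lam j) i)) ∧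
        LieRing.IsNilpotent q.1 ∧
        ∀ a b : q.1, Tn p n • ⁅a, b⁆ = 0 }

/-- `R_n`-linear Lie algebra isomorphism between two bundled Lie algebras. -/
def typedLieIsoRel (p n t : ℕ) (lam : Fin t → ℕ)
    (q₁ q₂ : TypedLie p n t lam) : Prop :=
  letI := q₁.1.2.1; letI := q₁.1.2.2; letI := q₂.1.2.1; letI := q₂.1.2.2
  Nonempty (q₁.1.1 ≃ₗ⁅Rn p n⁆ q₂.1.1)

namespace Laz
open Finset

/-! ## Truncated exponentials -/

section Exp
variable {k : Type*} [CommRing k]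

/-- inverse factorials -/
noncomputable def fi (k : Type*) [CommRing k] (m : ℕ) : k := Ring.inverse ((m.factorial : ℕ) : k)

/-- truncated exponential -/
noncomputable def pexp (k : Type*) [CommRing k] {R : Type*} [Ring R] [Algebra k R] (p : ℕ) (u : R) : R :=
  ∑ m ∈ range p, fi k m • u ^ m

lemma map_pexp {R S : Type*} [Ring R] [Algebra k R] [Ring S] [Algebra k S] (f : R →ₐ[k] S)
    (p : ℕ) (u : R) : f (pexp k p u) = pexp k p (f u) := by
  simp [pexp, map_sum]

lemma fi_mul {p : ℕ} (hk : ∀ m < p, IsUnit ((m.factorial : ℕ) : k)) {i j : ℕ} (h : i + j < p) :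
    fi k (i + j) * (((i + j).choose i : ℕ) : k) = fi k i * fi k j := by
  have h1 := hk _ h
  have h2 := hk i (by omega)
  have h3 := hk j (by omega)
  have e : (((i + j).choose i : ℕ) : k) * ((i.factorial : ℕ) : k) * ((j.factorial : ℕ) : k)
      = (((i + j).factorial : ℕ) : k) := by
    rw [← Nat.add_choose_mul_factorial_mul_factorial i j, Nat.choose_symm_add]; push_cast; ring
  unfold fi
  have a1 := Ring.inverse_mul_cancel _ h1
  have a2 := Ring.inverse_mul_cancel _ h2
  have a3 := Ring.inverse_mul_cancel _ h3
  set x := Ring.inverse (((i + j).factorial : ℕ) : k)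
  set y := Ring.inverse ((i.factorial : ℕ) : k)
  set z := Ring.inverse ((j.factorial : ℕ) : k)
  calc x * (((i + j).choose i : ℕ) : k)
      = x * (((i + j).choose i : ℕ) : k) * (y * ((i.factorial : ℕ) : k)) *
          (z * ((j.factorial : ℕ) : k)) := by rw [a2, a3]; ring
    _ = y * z * (x * ((((i + j).choose i : ℕ) : k) * ((i.factorial : ℕ) : k) *
          ((j.factorial : ℕ) : k))) := by ring
    _ = y * z := by rw [e, a1, mul_one]

lemma sum_trunc {V : Type*} [AddCommMonoid V] (p : ℕ) (f : ℕ → ℕ → V)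
    (hf : ∀ i j, p ≤ i + j → f i j = 0) :
    ∑ i ∈ range p, ∑ j ∈ range p, f i j =
      ∑ m ∈ range p, ∑ x ∈ antidiagonal m, f x.1 x.2 := by
  rw [← sum_product', Finset.sum_sigma']
  symm
  refine Finset.sum_bij_ne_zero (fun x _ _ => x.2) ?_ ?_ ?_ ?_
  · rintro ⟨m, i, j⟩ h _
    simp at h ⊢; omega
  · rintro ⟨m, i, j⟩ h _ ⟨m', i', j'⟩ h' _ e
    simp at h h' e
    obtain ⟨rfl, rfl⟩ := e
    obtain ⟨_, rfl⟩ := h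
    obtain ⟨_, rfl⟩ := h'
    rfl
  · rintro ⟨i, j⟩ h h0
    have : i + j < p := by
      by_contra hc
      exact h0 (hf _ _ (by omega))
    exact ⟨⟨i + j, i, j⟩, by simpa using this, h0, rfl⟩
  · intros; rfl

lemma pexp_add_apply {V : Type*} [AddCommGroup V] [Module k V] {p : ℕ}
    (hk : ∀ m < p, IsUnit ((m.factorial : ℕ) : k))
    (s t : Module.End k V) (hst : Commute s t) (b : V)
    (hb : ∀ i j, p ≤ i + j → (s ^ i) ((t ^ j) b) = 0) :
    pexp k p (s + t) b = pexp k p s (pexp k p t b) := by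
  have h1 : pexp k p s (pexp k p t b) = ∑ i ∈ range p, ∑ j ∈ range p,
      (fi k i * fi k j) • (s ^ i) ((t ^ j) b) := by
    simp only [pexp, LinearMap.sum_apply, LinearMap.smul_apply, map_sum, map_smul, Finset.smul_sum,
      smul_smul]
    rw [Finset.sum_comm]
    refine sum_congr rfl fun _ _ => sum_congr rfl fun _ _ => ?_
    rw [mul_comm]
  rw [h1, sum_trunc p (fun i j => (fi k i * fi k j) • (s ^ i) ((t ^ j) b))]
  · simp only [pexp, LinearMap.sum_apply, LinearMap.smul_apply]
    refine sum_congr rfl fun m hm => ?_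
    rw [hst.add_pow', LinearMap.sum_apply, Finset.smul_sum]
    refine sum_congr rfl fun x hx => ?_
    obtain ⟨i, j⟩ := x
    simp only [HasAntidiagonal.mem_antidiagonal] at hx
    subst hx
    simp only [mem_range] at hm
    simp only [LinearMap.smul_apply, Module.End.mul_apply]
    rw [← Nat.cast_smul_eq_nsmul k, smul_smul, fi_mul hk hm]
  · intro i j h
    simp [hb i j h]

lemma pexp_add {R : Type*} [Ring R] [Algebra k R] {p : ℕ}
    (hk : ∀ m < p, IsUnit ((m.factorial : ℕ) : k))
    (s t : R) (hst : Commute s t) (hb : ∀ i j, p ≤ i + j → s ^ i * t ^ j = 0) :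
    pexp k p (s + t) = pexp k p s * pexp k p t := by
  have := pexp_add_apply hk (Algebra.lmul k R s) (Algebra.lmul k R t)
    (hst.map (Algebra.lmul k R)) 1 (by
      intro i j h
      rw [← map_pow, ← map_pow]
      simpa using hb i j h)
  rw [← map_add, ← map_pexp, ← map_pexp, ← map_pexp] at this
  simpa using this

lemma pexp_conj {R : Type*} [Ring R] [Algebra k R] {p : ℕ}
    (hk : ∀ m < p, IsUnit ((m.factorial : ℕ) : k))
    (a b : R) (hb : ∀ i j, p ≤ i + j → a ^ i * b * a ^ j = 0) :
    pexp k p (LinearMap.mulLeft k a - LinearMap.mulRight k a) b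
      = pexp k p a * b * pexp k p (-a) := by
  rw [sub_eq_add_neg, pexp_add_apply hk]
  · have h1 : ∀ c : R, pexp k p (LinearMap.mulLeft k a) c = pexp k p a * c := by
      intro c
      simp [pexp, LinearMap.sum_apply, LinearMap.pow_mulLeft, Finset.sum_mul]
    have hneg : ∀ m : ℕ, (-LinearMap.mulRight k a) ^ m = LinearMap.mulRight k ((-a) ^ m) := by
      intro m
      rw [← LinearMap.pow_mulRight]
      congr 1
      ext; simp
    have h2 : ∀ c : R, pexp k p (-LinearMap.mulRight k a) c = c * pexp k p (-a) := by
      intro c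
      simp [pexp, LinearMap.sum_apply, hneg, Finset.mul_sum]
    rw [h1, h2, mul_assoc]
  · have hc : Commute (LinearMap.mulLeft k a) (LinearMap.mulRight k a) := by
      ext c; simp [mul_assoc]
    exact hc.neg_right
  · intro i j h
    have hneg : ∀ m : ℕ, (-LinearMap.mulRight k a) ^ m = LinearMap.mulRight k ((-a) ^ m) := by
      intro m
      rw [← LinearMap.pow_mulRight]
      congr 1
      ext; simp
    rw [hneg, LinearMap.pow_mulLeft]
    simp only [LinearMap.mulRight_apply, LinearMap.mulLeft_apply]
    rcases Nat.even_or_odd j with hj | hj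
    · rw [hj.neg_pow, ← mul_assoc]; exact hb i j h
    · rw [hj.neg_pow, mul_neg, mul_neg, ← mul_assoc, hb i j h, neg_zero]

lemma pexp_zero {R : Type*} [Ring R] [Algebra k R] {p : ℕ} (hp : 0 < p) :
    pexp k p (0 : R) = 1 := by
  obtain ⟨q, rfl⟩ : ∃ q, p = q + 1 := ⟨p - 1, by omega⟩
  rw [pexp, sum_range_succ']
  simp [fi]

/-- filtered setting -/
structure NFil (k : Type*) [CommRing k] (R : Type*) [Ring R] [Algebra k R] (p : ℕ) where
  F : ℕ → Submodule k R
  anti : Antitone F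
  mul : ∀ {i j a b}, a ∈ F i → b ∈ F j → a * b ∈ F (i + j)
  bot : F p = ⊥

namespace NFil
variable {R : Type*} [Ring R] [Algebra k R] {p : ℕ} (N : NFil k R p)

lemma pow_mem {u : R} {m : ℕ} (hu : u ∈ N.F m) (j : ℕ) : u ^ (j + 1) ∈ N.F (m * (j + 1)) := by
  induction j with
  | zero => simpa using hu
  | succ j ih =>
    rw [pow_succ]
    exact N.mul ih hu

lemma eq_zero {a : R} {m : ℕ} (h : p ≤ m) (ha : a ∈ N.F m) : a = 0 := by
  have := N.anti h ha
  rwa [N.bot, Submodule.mem_bot] at this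

lemma pow_mul_pow (hp : 0 < p) {u : R} (hu : u ∈ N.F 1) {v : R} (hv : v ∈ N.F 1) (i j : ℕ)
    (h : p ≤ i + j) : u ^ i * v ^ j = 0 := by
  rcases i with _ | i
  · rcases j with _ | j
    · omega
    · have := N.pow_mem hv j
      rw [pow_zero, one_mul]
      exact N.eq_zero (by omega) this
  · rcases j with _ | j
    · have := N.pow_mem hu i
      rw [pow_zero, mul_one]
      exact N.eq_zero (by omega) this
    · exact N.eq_zero (by omega) (N.mul (N.pow_mem hu i) (N.pow_mem hv j))

lemma pexp_split (hp : 2 ≤ p) (u : R) :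
    pexp k p u = 1 + u + ∑ m ∈ range (p - 2), fi k (m + 2) • u ^ (m + 2) := by
  obtain ⟨q, rfl⟩ : ∃ q, p = q + 2 := ⟨p - 2, by omega⟩
  rw [pexp, sum_range_succ', sum_range_succ']
  simp [fi]
  abel

include N in
lemma pexp_sub_mem (hp : 2 ≤ p) {u : R} {m : ℕ} (hm : 1 ≤ m) (hu : u ∈ N.F m) :
    pexp k p u - 1 - u ∈ N.F (m + 1) := by
  rw [pexp_split hp]
  have : (1 + u + ∑ m ∈ range (p - 2), fi k (m + 2) • u ^ (m + 2)) - 1 - u =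
    ∑ m ∈ range (p - 2), fi k (m + 2) • u ^ (m + 2) := by abel
  rw [this]
  refine Submodule.sum_mem _ fun j _ => Submodule.smul_mem _ _ ?_
  refine N.anti ?_ (N.pow_mem hu (j + 1))
  nlinarith

lemma pexp_sub_one_mem (hp : 2 ≤ p) {u : R} {m : ℕ} (hm : 1 ≤ m) (hu : u ∈ N.F m) :
    pexp k p u - 1 ∈ N.F m := by
  have := N.anti (Nat.le_succ m) (N.pexp_sub_mem hp hm hu)
  simpa using Submodule.add_mem _ this hu

lemma pow_sub_pow_mem {S T : R} {j : ℕ} (hS : S ∈ N.F 1) (hT : T ∈ N.F 1) (h : S - T ∈ N.F j)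
    (m : ℕ) : S ^ (m + 2) - T ^ (m + 2) ∈ N.F (j + 1) := by
  induction m with
  | zero =>
    have e : S ^ (0 + 2) - T ^ (0 + 2) = S * (S - T) + (S - T) * T := by noncomm_ring
    rw [e]
    refine Submodule.add_mem _ ?_ (N.mul h hT)
    have := N.mul hS h
    rwa [add_comm] at this
  | succ m ih =>
    have e : S ^ (m + 1 + 2) - T ^ (m + 1 + 2) =
        S * (S ^ (m + 2) - T ^ (m + 2)) + (S - T) * T ^ (m + 1 + 1) := by
      rw [pow_succ' S (m + 2), pow_succ' T (m + 2), pow_succ' T (m + 1)]; noncomm_ring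
    rw [e]
    refine Submodule.add_mem _ ?_ ?_
    · exact N.anti (by omega) (N.mul hS ih)
    · exact N.anti (by nlinarith) (N.mul h (N.pow_mem hT (m + 1)))

lemma pexp_diff_mem (hp : 2 ≤ p) {S T : R} {j : ℕ} (hS : S ∈ N.F 1) (hT : T ∈ N.F 1)
    (h : S - T ∈ N.F j) : (pexp k p S - pexp k p T) - (S - T) ∈ N.F (j + 1) := by
  rw [pexp_split hp, pexp_split hp]
  have : (1 + S + ∑ m ∈ range (p - 2), fi k (m + 2) • S ^ (m + 2)) -
      (1 + T + ∑ m ∈ range (p - 2), fi k (m + 2) • T ^ (m + 2)) - (S - T) =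
    ∑ m ∈ range (p - 2), fi k (m + 2) • (S ^ (m + 2) - T ^ (m + 2)) := by
    simp only [smul_sub, sum_sub_distrib]; abel
  rw [this]
  exact Submodule.sum_mem _ fun j _ => Submodule.smul_mem _ _ (N.pow_sub_pow_mem hS hT h j)

include N in
lemma pexp_inj (hp : 2 ≤ p) {S T : R} (hS : S ∈ N.F 1) (hT : T ∈ N.F 1)
    (h : pexp k p S = pexp k p T) : S = T := by
  have key : ∀ j, S - T ∈ N.F (j + 1) := by
    intro j
    induction j with
    | zero => exact Submodule.sub_mem _ hS hT
    | succ j ih =>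
      have := N.pexp_diff_mem hp hS hT ih
      rw [h, sub_self, zero_sub] at this
      simpa using Submodule.neg_mem _ this
  exact sub_eq_zero.1 (N.eq_zero (Nat.le_succ p) (key p))

lemma pexp_surj (hp : 2 ≤ p) {g : R} (hg : g - 1 ∈ N.F 1) :
    ∃ u ∈ N.F 1, pexp k p u = g := by
  have key : ∀ j, ∃ u ∈ N.F 1, pexp k p u - g ∈ N.F (j + 1) := by
    intro j
    induction j with
    | zero =>
      refine ⟨0, Submodule.zero_mem _, ?_⟩
      rw [pexp_zero (by omega)]
      simpa using Submodule.neg_mem _ hg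
    | succ j ih =>
      obtain ⟨u, hu, h⟩ := ih
      refine ⟨u - (pexp k p u - g), Submodule.sub_mem _ hu (N.anti (by omega) h), ?_⟩
      have := N.pexp_diff_mem hp (j := j + 1)
        (Submodule.sub_mem _ hu (N.anti (by omega) h) : u - (pexp k p u - g) ∈ N.F 1) hu (by
        simpa using Submodule.neg_mem _ h)
      convert this using 1
      abel
  obtain ⟨u, hu, h⟩ := key p
  exact ⟨u, hu, sub_eq_zero.1 (N.eq_zero (Nat.le_succ p) h)⟩

lemma mem_of_pexp (hp : 2 ≤ p) {u : R} (hu : u ∈ N.F 1) {m : ℕ} (h : pexp k p u - 1 ∈ N.F m) :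
    u ∈ N.F m := by
  have key : ∀ j, j + 1 ≤ m → u ∈ N.F (j + 1) := by
    intro j
    induction j with
    | zero => intro _; exact hu
    | succ j ih =>
      intro hj
      have h1 := N.pexp_sub_mem hp (by omega) (ih (by omega))
      have := Submodule.sub_mem _ (N.anti hj h) h1
      simpa using this
  rcases m with _ | m
  · exact N.anti (by omega) hu
  · exact key m le_rfl

end NFil
end Exp
end Laz

namespace Laz

/-! ## The truncated free associative algebra on letters indexed by `ℕ` -/

section Alg
variable (k : Type) [CommRing k] (p : ℕ)

/-- span of long words -/
noncomputable def longSpan : Submodule k (MonoidAlgebra k (FreeMonoid ℕ)) :=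
  Submodule.span k {a | ∃ w : FreeMonoid ℕ, p ≤ w.length ∧ a = MonoidAlgebra.single w 1}

lemma single_mem_longSpan {w : FreeMonoid ℕ} (h : p ≤ w.length) (c : k) :
    MonoidAlgebra.single w c ∈ longSpan k p := by
  have : (MonoidAlgebra.single w c : MonoidAlgebra k (FreeMonoid ℕ)) =
    c • MonoidAlgebra.single w 1 := by simp
  rw [this]
  exact Submodule.smul_mem _ _ (Submodule.subset_span ⟨w, h, rfl⟩)

lemma longSpan_mul_left (a b : MonoidAlgebra k (FreeMonoid ℕ)) (hb : b ∈ longSpan k p) :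
    a * b ∈ longSpan k p := by
  induction hb using Submodule.span_induction with
  | mem x hx =>
    obtain ⟨w, hw, rfl⟩ := hx
    induction a using MonoidAlgebra.induction_linear with
    | zero => simp
    | add f g hf hg => rw [add_mul]; exact Submodule.add_mem _ hf hg
    | single v c =>
      rw [MonoidAlgebra.single_mul_single]
      apply single_mem_longSpan
      rw [FreeMonoid.length_mul]; omega
  | zero => simp
  | add x y _ _ hx hy => rw [mul_add]; exact Submodule.add_mem _ hx hy
  | smul c x _ hx => rw [mul_smul_comm]; exact Submodule.smul_mem _ _ hx

lemma longSpan_mul_right (a b : MonoidAlgebra k (FreeMonoid ℕ)) (hb : b ∈ longSpan k p) :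
    b * a ∈ longSpan k p := by
  induction hb using Submodule.span_induction with
  | mem x hx =>
    obtain ⟨w, hw, rfl⟩ := hx
    induction a using MonoidAlgebra.induction_linear with
    | zero => simp
    | add f g hf hg => rw [mul_add]; exact Submodule.add_mem _ hf hg
    | single v c =>
      rw [MonoidAlgebra.single_mul_single]
      apply single_mem_longSpan
      rw [FreeMonoid.length_mul]; omega
  | zero => simp
  | add x y _ _ hx hy => rw [add_mul]; exact Submodule.add_mem _ hx hy
  | smul c x _ hx => rw [smul_mul_assoc]; exact Submodule.smul_mem _ _ hx

/-- the ideal of long words -/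
noncomputable def longIdeal : Ideal (MonoidAlgebra k (FreeMonoid ℕ)) where
  carrier := longSpan k p
  add_mem' := Submodule.add_mem _
  zero_mem' := Submodule.zero_mem _
  smul_mem' a b hb := longSpan_mul_left k p a b hb

instance : (longIdeal k p).IsTwoSided := ⟨fun {a} b hb => longSpan_mul_right k p b a hb⟩

/-- truncated free associative algebra -/
def Al : Type := MonoidAlgebra k (FreeMonoid ℕ) ⧸ longIdeal k p

/-- ring structure -/
noncomputable def alRing : Ring (Al k p) := Ideal.Quotient.ring (longIdeal k p)
noncomputable instance : Ring (Al k p) := alRing k p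
/-- algebra structure -/
noncomputable def alAlgebra : Algebra k (Al k p) :=
  inferInstanceAs (Algebra k (MonoidAlgebra k (FreeMonoid ℕ) ⧸ longIdeal k p))
noncomputable instance : Algebra k (Al k p) := alAlgebra k p

noncomputable instance : LieRing (Al k p) := LieRing.ofAssociativeRing
noncomputable instance : LieAlgebra k (Al k p) := LieAlgebra.ofAssociativeAlgebra

lemma lie_smulA (s : k) (a b : Al k p) : ⁅a, s • b⁆ = s • ⁅a, b⁆ := by
  simp only [Ring.lie_def, mul_smul_comm, smul_mul_assoc, smul_sub]
lemma smul_lieA (s : k) (a b : Al k p) : ⁅s • a, b⁆ = s • ⁅a, b⁆ := by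
  simp only [Ring.lie_def, mul_smul_comm, smul_mul_assoc, smul_sub]

/-- the quotient map -/
noncomputable def mkA : MonoidAlgebra k (FreeMonoid ℕ) →ₐ[k] Al k p := Ideal.Quotient.mkₐ k _

variable {k p}

lemma mkA_surj : Function.Surjective (mkA k p) := Ideal.Quotient.mkₐ_surjective k _

lemma mkA_eq_zero {a : MonoidAlgebra k (FreeMonoid ℕ)} : mkA k p a = 0 ↔ a ∈ longSpan k p :=
  Ideal.Quotient.eq_zero_iff_mem

variable (k p) in
/-- words -/
noncomputable def wd (w : FreeMonoid ℕ) : Al k p := mkA k p (MonoidAlgebra.single w 1)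

variable (k p) in
/-- letters -/
noncomputable def xx (i : ℕ) : Al k p := wd k p (FreeMonoid.of i)

lemma wd_one : wd k p 1 = 1 := map_one (mkA k p)

lemma wd_mul (v w : FreeMonoid ℕ) : wd k p (v * w) = wd k p v * wd k p w := by
  unfold wd
  rw [← map_mul, MonoidAlgebra.single_mul_single, mul_one]

lemma wd_of_mul (i : ℕ) (w : FreeMonoid ℕ) :
    wd k p (FreeMonoid.of i * w) = xx k p i * wd k p w := wd_mul _ _

lemma wd_long {w : FreeMonoid ℕ} (h : p ≤ w.length) : wd k p w = 0 :=
  mkA_eq_zero.2 (single_mem_longSpan k p h 1)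

lemma Al.induction {P : Al k p → Prop} (h0 : P 0) (hadd : ∀ a b, P a → P b → P (a + b))
    (hs : ∀ (c : k) (w : FreeMonoid ℕ), P (c • wd k p w)) (a : Al k p) : P a := by
  obtain ⟨b, rfl⟩ := mkA_surj a
  induction b using MonoidAlgebra.induction_linear with
  | zero => simpa using h0
  | add f g hf hg => rw [map_add]; exact hadd _ _ hf hg
  | single v c =>
    have := hs c v
    unfold wd at this
    rw [← map_smul] at this
    simpa using this

lemma Al.lin_ext {M : Type*} [AddCommMonoid M] [Module k M] {f g : Al k p →ₗ[k] M}
    (h : ∀ w, f (wd k p w) = g (wd k p w)) : f = g := by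
  ext a
  induction a using Al.induction with
  | h0 => simp
  | hadd a b ha hb => rw [map_add, map_add, ha, hb]
  | hs c w => rw [map_smul, map_smul, h]

/-- linear extension -/
noncomputable def linA {M : Type*} [AddCommGroup M] [Module k M] (f : FreeMonoid ℕ → M)
    (hf : ∀ w, p ≤ w.length → f w = 0) : Al k p →ₗ[k] M :=
  let F : MonoidAlgebra k (FreeMonoid ℕ) →ₗ[k] M :=
    (Finsupp.linearCombination k f).comp (MonoidAlgebra.coeffLinearEquiv k).toLinearMap
  have hF : ∀ a ∈ longIdeal k p, F a = 0 := by
    intro a ha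
    have : longSpan k p ≤ LinearMap.ker F := by
      refine Submodule.span_le.2 ?_
      rintro _ ⟨w, hw, rfl⟩
      simp [F, hf w hw]
    exact this ha
  { QuotientAddGroup.lift _ F.toAddMonoidHom hF with
    map_smul' := by
      intro c a
      obtain ⟨b, rfl⟩ := mkA_surj a
      exact (F.map_smul c b) }

lemma linA_wd {M : Type*} [AddCommGroup M] [Module k M] (f : FreeMonoid ℕ → M)
    (hf : ∀ w, p ≤ w.length → f w = 0) (w : FreeMonoid ℕ) : linA (k := k) f hf (wd k p w) = f w := by
  change (Finsupp.linearCombination k f)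
    ((MonoidAlgebra.coeffLinearEquiv k) (MonoidAlgebra.single w 1)) = f w
  simp

/-- algebra homs -/
noncomputable def algA {S : Type*} [Ring S] [Algebra k S] (f : ℕ → S)
    (hf : ∀ w : FreeMonoid ℕ, p ≤ w.length → FreeMonoid.lift f w = 0) : Al k p →ₐ[k] S :=
  AlgHom.ofLinearMap (linA (fun w => FreeMonoid.lift f w) hf)
    (by rw [← wd_one, linA_wd, map_one])
    (by
      intro a b
      induction a using Al.induction with
      | h0 => simp
      | hadd a b ha hb => rw [add_mul, map_add, map_add, ha, hb, add_mul]
      | hs c w =>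
        induction b using Al.induction with
        | h0 => simp
        | hadd a b ha hb => rw [mul_add, map_add, map_add, ha, hb, mul_add]
        | hs d v =>
          rw [smul_mul_smul_comm, ← wd_mul, map_smul, map_smul, map_smul, linA_wd, linA_wd,
            linA_wd, map_mul, smul_mul_smul_comm])

lemma algA_wd {S : Type*} [Ring S] [Algebra k S] (f : ℕ → S)
    (hf : ∀ w : FreeMonoid ℕ, p ≤ w.length → FreeMonoid.lift f w = 0) (w : FreeMonoid ℕ) :
    algA (k := k) f hf (wd k p w) = FreeMonoid.lift f w :=
  linA_wd (fun w => FreeMonoid.lift f w) hf w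

lemma algA_xx {S : Type*} [Ring S] [Algebra k S] (f : ℕ → S)
    (hf : ∀ w : FreeMonoid ℕ, p ≤ w.length → FreeMonoid.lift f w = 0) (i : ℕ) :
    algA (k := k) f hf (xx k p i) = f i := by
  rw [xx, algA_wd, FreeMonoid.lift_eval_of]

/-! ### filtration -/

variable (k p) in
/-- filtration by word length -/
noncomputable def Fil (d : ℕ) : Submodule k (Al k p) :=
  Submodule.span k {a | ∃ w : FreeMonoid ℕ, d ≤ w.length ∧ a = wd k p w}

lemma wd_mem_Fil {d : ℕ} {w : FreeMonoid ℕ} (h : d ≤ w.length) : wd k p w ∈ Fil k p d :=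
  Submodule.subset_span ⟨w, h, rfl⟩

lemma xx_mem_Fil (i : ℕ) : xx k p i ∈ Fil k p 1 := wd_mem_Fil (by simp)

lemma Fil_anti : Antitone (Fil k p) := by
  intro i j h
  refine Submodule.span_mono ?_
  rintro _ ⟨w, hw, rfl⟩
  exact ⟨w, h.trans hw, rfl⟩

lemma Fil_bot : Fil k p p = ⊥ := by
  refine Submodule.span_eq_bot.2 ?_
  rintro _ ⟨w, hw, rfl⟩
  exact wd_long hw

lemma Fil_zero (a : Al k p) : a ∈ Fil k p 0 := by
  induction a using Al.induction with
  | h0 => exact Submodule.zero_mem _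
  | hadd a b ha hb => exact Submodule.add_mem _ ha hb
  | hs c w => exact Submodule.smul_mem _ _ (wd_mem_Fil (Nat.zero_le _))

lemma Fil_le {d : ℕ} {S : Submodule k (Al k p)} (h : ∀ w : FreeMonoid ℕ, d ≤ w.length → wd k p w ∈ S) :
    Fil k p d ≤ S := by
  refine Submodule.span_le.2 ?_
  rintro _ ⟨w, hw, rfl⟩
  exact h w hw

lemma Fil_mul {i j : ℕ} {a b : Al k p} (ha : a ∈ Fil k p i) (hb : b ∈ Fil k p j) :
    a * b ∈ Fil k p (i + j) := by
  have h1 : ∀ w : FreeMonoid ℕ, i ≤ w.length → wd k p w * b ∈ Fil k p (i + j) := by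
    intro w hw
    have : Fil k p j ≤ (Fil k p (i + j)).comap (LinearMap.mulLeft k (wd k p w)) := by
      refine Fil_le ?_
      intro v hv
      rw [Submodule.mem_comap, LinearMap.mulLeft_apply, ← wd_mul]
      exact wd_mem_Fil (by rw [FreeMonoid.length_mul]; omega)
    exact this hb
  have : Fil k p i ≤ (Fil k p (i + j)).comap (LinearMap.mulRight k b) := Fil_le h1
  exact this ha

variable (k p) in
/-- the filtered structure -/
noncomputable def AFil : NFil k (Al k p) p where
  F := Fil k p
  anti := Fil_anti
  mul := Fil_mul
  bot := Fil_bot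

lemma Fil_pow {a : Al k p} {i : ℕ} (ha : a ∈ Fil k p i) (j : ℕ) : a ^ j ∈ Fil k p (i * j) := by
  cases j with
  | zero => exact Fil_zero _
  | succ j => exact (AFil k p).pow_mem ha j

lemma Fil_eq_zero {a : Al k p} {d : ℕ} (h : p ≤ d) (ha : a ∈ Fil k p d) : a = 0 :=
  (AFil k p).eq_zero h ha

lemma Fil_lie {i j : ℕ} {a b : Al k p} (ha : a ∈ Fil k p i) (hb : b ∈ Fil k p j) :
    ⁅a, b⁆ ∈ Fil k p (i + j) := by
  rw [Ring.lie_def]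
  refine Submodule.sub_mem _ (Fil_mul ha hb) ?_
  rw [add_comm]; exact Fil_mul hb ha

lemma lift_mem_Fil {f : ℕ → Al k p} (hf : ∀ i, f i ∈ Fil k p 1) (w : FreeMonoid ℕ) :
    FreeMonoid.lift f w ∈ Fil k p w.length := by
  induction w using FreeMonoid.recOn with
  | one => exact Fil_zero _
  | of_mul i w ih =>
    rw [map_mul, FreeMonoid.lift_eval_of, FreeMonoid.length_mul]
    exact Fil_mul (by simpa using hf i) ih

/-- substitution endomorphism -/
noncomputable def substA (f : ℕ → Al k p) (hf : ∀ i, f i ∈ Fil k p 1) : Al k p →ₐ[k] Al k p :=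
  algA f (fun w hw => Fil_eq_zero hw (lift_mem_Fil hf w))

/-! ### Euler derivation and its inverse, counit -/

variable (k p) in
/-- Euler derivation -/
noncomputable def EE : Al k p →ₗ[k] Al k p :=
  linA (fun w => ((w.length : ℕ) : k) • wd k p w) (fun w hw => by rw [wd_long hw, smul_zero])

variable (k p) in
/-- inverse of the Euler derivation -/
noncomputable def JJ : Al k p →ₗ[k] Al k p :=
  linA (fun w => Ring.inverse ((w.length : ℕ) : k) • wd k p w)
    (fun w hw => by rw [wd_long hw, smul_zero])

lemma EE_wd (w : FreeMonoid ℕ) : EE k p (wd k p w) = ((w.length : ℕ) : k) • wd k p w :=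
  linA_wd _ _ _

lemma JJ_wd (w : FreeMonoid ℕ) :
    JJ k p (wd k p w) = Ring.inverse ((w.length : ℕ) : k) • wd k p w :=
  linA_wd _ _ _

lemma EE_mul (a b : Al k p) : EE k p (a * b) = EE k p a * b + a * EE k p b := by
  induction a using Al.induction with
  | h0 => simp
  | hadd a b ha hb => rw [add_mul, map_add, map_add, ha, hb]; noncomm_ring
  | hs c w =>
    induction b using Al.induction with
    | h0 => simp
    | hadd a b ha hb => rw [mul_add, map_add, map_add, ha, hb]; noncomm_ring
    | hs d v =>
      rw [smul_mul_smul_comm, ← wd_mul, map_smul, map_smul, map_smul, EE_wd, EE_wd, EE_wd,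
        FreeMonoid.length_mul, wd_mul]
      simp only [smul_mul_assoc, mul_smul_comm, smul_smul, ← add_smul]
      congr 1
      push_cast; ring

lemma EE_one : EE k p 1 = 0 := by
  rw [← wd_one, EE_wd]; simp

lemma EE_xx (i : ℕ) : EE k p (xx k p i) = xx k p i := by
  rw [xx, EE_wd]; simp

lemma EE_lie (a b : Al k p) : EE k p ⁅a, b⁆ = ⁅EE k p a, b⁆ + ⁅a, EE k p b⁆ := by
  simp only [Ring.lie_def, map_sub, EE_mul]; abel

lemma EE_mem {d : ℕ} {a : Al k p} (ha : a ∈ Fil k p d) : EE k p a ∈ Fil k p d := by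
  have : Fil k p d ≤ (Fil k p d).comap (EE k p) := by
    refine Fil_le fun w hw => ?_
    rw [Submodule.mem_comap, EE_wd]
    exact Submodule.smul_mem _ _ (wd_mem_Fil hw)
  exact this ha

lemma EE_mem_one (a : Al k p) : EE k p a ∈ Fil k p 1 := by
  induction a using Al.induction with
  | h0 => simp
  | hadd a b ha hb => rw [map_add]; exact Submodule.add_mem _ ha hb
  | hs c w =>
    rw [map_smul, EE_wd]
    refine Submodule.smul_mem _ _ ?_
    by_cases h : w.length = 0
    · simp [h]
    · exact Submodule.smul_mem _ _ (wd_mem_Fil (by omega))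

lemma JJ_mem {d : ℕ} {a : Al k p} (ha : a ∈ Fil k p d) : JJ k p a ∈ Fil k p d := by
  have : Fil k p d ≤ (Fil k p d).comap (JJ k p) := by
    refine Fil_le fun w hw => ?_
    rw [Submodule.mem_comap, JJ_wd]
    exact Submodule.smul_mem _ _ (wd_mem_Fil hw)
  exact this ha

lemma unit_of_fact (hk : ∀ m < p, IsUnit ((m.factorial : ℕ) : k)) {m : ℕ} (h0 : 0 < m) (h : m < p) :
    IsUnit (m : k) := by
  obtain ⟨q, rfl⟩ : ∃ q, m = q + 1 := ⟨m - 1, by omega⟩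
  have := hk _ h
  rw [Nat.factorial_succ, Nat.cast_mul] at this
  exact isUnit_of_mul_isUnit_left this

lemma EE_JJ (hk : ∀ m < p, IsUnit ((m.factorial : ℕ) : k)) {a : Al k p} (ha : a ∈ Fil k p 1) :
    EE k p (JJ k p a) = a := by
  have : Fil k p 1 ≤ LinearMap.eqLocus (EE k p ∘ₗ JJ k p) LinearMap.id := by
    refine Fil_le fun w hw => ?_
    rw [LinearMap.mem_eqLocus, LinearMap.comp_apply, JJ_wd, map_smul, EE_wd, smul_smul,
      LinearMap.id_apply]
    by_cases h : w.length < p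
    · rw [Ring.inverse_mul_cancel _ (unit_of_fact hk hw h), one_smul]
    · rw [wd_long (by omega), smul_zero]
  exact this ha

lemma JJ_EE (hk : ∀ m < p, IsUnit ((m.factorial : ℕ) : k)) {a : Al k p} (ha : a ∈ Fil k p 1) :
    JJ k p (EE k p a) = a := by
  have : Fil k p 1 ≤ LinearMap.eqLocus (JJ k p ∘ₗ EE k p) LinearMap.id := by
    refine Fil_le fun w hw => ?_
    rw [LinearMap.mem_eqLocus, LinearMap.comp_apply, EE_wd, map_smul, JJ_wd, smul_smul,
      LinearMap.id_apply]
    by_cases h : w.length < p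
    · rw [Ring.mul_inverse_cancel _ (unit_of_fact hk hw h), one_smul]
    · rw [wd_long (by omega), smul_zero]
  exact this ha

lemma EE_inj (hk : ∀ m < p, IsUnit ((m.factorial : ℕ) : k)) {a : Al k p} (ha : a ∈ Fil k p 1)
    (h : EE k p a = 0) : a = 0 := by
  rw [← JJ_EE hk ha, h, map_zero]

end Alg
end Laz

namespace Laz

/-- standing assumptions -/
class PC (k : Type) [CommRing k] (p : ℕ) : Prop where
  two : 2 ≤ p
  unit : ∀ m < p, IsUnit ((m.factorial : ℕ) : k)

section Dyn
variable {k : Type} [CommRing k] {p : ℕ} {Λ : Type} [LieRing Λ] [LieAlgebra k Λ]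

variable (k p) in
/-- counit -/
noncomputable def eps [PC k p] : Al k p →ₐ[k] k :=
  algA (fun _ => 0) (fun w hw => by
    have h2 := PC.two (k := k) (p := p)
    induction w using FreeMonoid.recOn with
    | one => simp at hw; omega
    | of_mul i w _ => simp)

lemma eps_xx [PC k p] (i : ℕ) : eps k p (xx k p i) = 0 := algA_xx _ _ _

lemma eps_Fil [PC k p] {a : Al k p} (ha : a ∈ Fil k p 1) : eps k p a = 0 := by
  have : Fil k p 1 ≤ LinearMap.ker (eps k p).toLinearMap := by
    refine Fil_le fun w hw => ?_
    rw [LinearMap.mem_ker, AlgHom.toLinearMap_apply]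
    induction w using FreeMonoid.recOn with
    | one => simp at hw
    | of_mul i w _ => rw [wd_of_mul, map_mul, eps_xx, zero_mul]
  exact this ha

variable (k) in
/-- iterated adjoint -/
noncomputable def fold (f : ℕ → Λ) (w : FreeMonoid ℕ) : Module.End k Λ :=
  FreeMonoid.lift (fun i => (LieAlgebra.ad k Λ (f i) : Module.End k Λ)) w

lemma fold_one (f : ℕ → Λ) (v : Λ) : fold k f 1 v = v := by simp [fold]
lemma fold_of_mul (f : ℕ → Λ) (i : ℕ) (w : FreeMonoid ℕ) (v : Λ) :
    fold k f (FreeMonoid.of i * w) v = ⁅f i, fold k f w v⁆ := by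
  simp [fold]

variable (k p) in
/-- letters act nilpotently -/
structure Nl (f : ℕ → Λ) : Prop where
  h1 : ∀ w : FreeMonoid ℕ, p ≤ w.length → ∀ v, fold k f w v = 0
  h2 : ∀ w : FreeMonoid ℕ, p ≤ w.length + 1 → ∀ j, fold k f w (f j) = 0

variable (k) in
/-- the basic operators on `Λ × k` -/
noncomputable def mm (f : ℕ → Λ) (i : ℕ) : Module.End k (Λ × k) :=
  LinearMap.inl k Λ k ∘ₗ
    ((LieAlgebra.ad k Λ (f i) : Module.End k Λ).coprod ((LinearMap.id).smulRight (f i)))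

lemma mm_apply (f : ℕ → Λ) (i : ℕ) (v : Λ) (s : k) :
    mm k f i (v, s) = (⁅f i, v⁆ + s • f i, 0) := by
  simp [mm]

lemma lift_mm_zero (f : ℕ → Λ) (w : FreeMonoid ℕ) (v : Λ) :
    FreeMonoid.lift (mm k f) w (v, 0) = (fold k f w v, 0) := by
  induction w using FreeMonoid.recOn with
  | one => simp [fold]
  | of_mul i w ih =>
    rw [map_mul, FreeMonoid.lift_eval_of, Module.End.mul_apply, ih, mm_apply, fold_of_mul, zero_smul,
      add_zero]

lemma FM_right (w : FreeMonoid ℕ) : w = 1 ∨ ∃ w' j, w = w' * FreeMonoid.of j := by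
  induction w using FreeMonoid.recOn with
  | one => exact Or.inl rfl
  | of_mul i w ih =>
    right
    rcases ih with rfl | ⟨w', j, rfl⟩
    · exact ⟨1, i, by simp⟩
    · exact ⟨FreeMonoid.of i * w', j, by rw [mul_assoc]⟩

lemma lift_mm_long [PC k p] {f : ℕ → Λ} (hf : Nl k p f) (w : FreeMonoid ℕ) (hw : p ≤ w.length) :
    FreeMonoid.lift (mm k f) w = 0 := by
  have hp := PC.two (k := k) (p := p)
  rcases FM_right w with rfl | ⟨w, j, rfl⟩
  · simp at hw; omega
  · refine LinearMap.ext fun x => ?_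
    obtain ⟨v, s⟩ := x
    rw [map_mul, FreeMonoid.lift_eval_of, Module.End.mul_apply, mm_apply, lift_mm_zero, map_add,
      map_smul]
    rw [FreeMonoid.length_mul, FreeMonoid.length_of] at hw
    rw [hf.h2 w hw j, smul_zero, add_zero]
    have := hf.h1 (w * FreeMonoid.of j) (by simpa using hw) v
    have e : fold k f (w * FreeMonoid.of j) v = fold k f w ⁅f j, v⁆ := by simp [fold]
    rw [← e, this]; rfl

/-- The representation on `Λ × k`. -/
noncomputable def MM [PC k p] {f : ℕ → Λ} (hf : Nl k p f) : Al k p →ₐ[k] Module.End k (Λ × k) :=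
  algA (mm k f) (lift_mm_long hf)

lemma MM_xx [PC k p] {f : ℕ → Λ} (hf : Nl k p f) (i : ℕ) (v : Λ) (s : k) :
    MM hf (xx k p i) (v, s) = (⁅f i, v⁆ + s • f i, 0) := by
  rw [MM, algA_xx, mm_apply]

lemma MM_snd [PC k p] {f : ℕ → Λ} (hf : Nl k p f) (a : Al k p) (x : Λ × k) :
    (MM hf a x).2 = eps k p a * x.2 := by
  induction a using Al.induction with
  | h0 => simp
  | hadd a b ha hb => rw [map_add, map_add, add_mul, LinearMap.add_apply, Prod.snd_add, ha, hb]
  | hs c w =>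
    rw [map_smul, map_smul, LinearMap.smul_apply, Prod.smul_snd, smul_mul_assoc]
    congr 1
    induction w using FreeMonoid.recOn with
    | one => simp [wd_one]
    | of_mul i w ih =>
      rw [wd_of_mul, map_mul, map_mul, eps_xx, Module.End.mul_apply]
      rw [← Prod.mk.eta (p := MM hf (wd k p w) x), MM_xx]
      simp

/-- Dynkin operator -/
noncomputable def DD [PC k p] {f : ℕ → Λ} (hf : Nl k p f) : Al k p →ₗ[k] Λ :=
  LinearMap.fst k Λ k ∘ₗ LinearMap.applyₗ (0, 1) ∘ₗ (MM hf).toLinearMap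

lemma MM_zero_one [PC k p] {f : ℕ → Λ} (hf : Nl k p f) (a : Al k p) :
    MM hf a (0, 1) = (DD hf a, eps k p a) := by
  refine Prod.ext rfl ?_
  rw [MM_snd, mul_one]

lemma DD_mul [PC k p] {f : ℕ → Λ} (hf : Nl k p f) (a b : Al k p) :
    DD hf (a * b) = (MM hf a (DD hf b, eps k p b)).1 := by
  rw [← MM_zero_one, ← Module.End.mul_apply, ← map_mul]; rfl

lemma DD_xx_mul [PC k p] {f : ℕ → Λ} (hf : Nl k p f) (i : ℕ) (b : Al k p) :
    DD hf (xx k p i * b) = ⁅f i, DD hf b⁆ + eps k p b • f i := by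
  rw [DD_mul, MM_xx]

lemma DD_one [PC k p] {f : ℕ → Λ} (hf : Nl k p f) : DD hf 1 = 0 := by
  simp [DD]

lemma DD_xx [PC k p] {f : ℕ → Λ} (hf : Nl k p f) (i : ℕ) : DD hf (xx k p i) = f i := by
  have := DD_xx_mul hf i 1
  rw [mul_one, DD_one] at this
  simpa using this

/-! ### the case of the algebra itself -/

lemma fold_mem (w : FreeMonoid ℕ) {d : ℕ} {v : Al k p} (hv : v ∈ Fil k p d) :
    fold k (xx k p) w v ∈ Fil k p (w.length + d) := by
  induction w using FreeMonoid.recOn with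
  | one => simpa [fold] using hv
  | of_mul i w ih =>
    rw [fold_of_mul, FreeMonoid.length_mul, FreeMonoid.length_of, add_assoc]
    exact Fil_lie (xx_mem_Fil i) ih

lemma NlA : Nl k p (xx k p) where
  h1 w hw v := Fil_eq_zero (by omega) (fold_mem w (Fil_zero v))
  h2 w hw j := Fil_eq_zero (by omega) (fold_mem w (xx_mem_Fil j))

variable (k p) in
/-- Dynkin operator on `A` -/
noncomputable abbrev DA [PC k p] : Al k p →ₗ[k] Al k p := DD (NlA (k := k) (p := p))

lemma DA_mem [PC k p] {d : ℕ} {a : Al k p} (ha : a ∈ Fil k p d) : DA k p a ∈ Fil k p d := by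
  have : Fil k p d ≤ (Fil k p d).comap (DA k p) := by
    refine Fil_le fun w hw => ?_
    rw [Submodule.mem_comap]
    have key : ∀ w : FreeMonoid ℕ, DA k p (wd k p w) ∈ Fil k p w.length := by
      intro w
      induction w using FreeMonoid.recOn with
      | one => rw [wd_one, DD_one]; exact Submodule.zero_mem _
      | of_mul i w ih =>
        rw [wd_of_mul, DD_xx_mul, FreeMonoid.length_mul]
        refine Submodule.add_mem _ (Fil_lie (by simpa using xx_mem_Fil i) ih) ?_
        by_cases h : w.length = 0
        · exact Submodule.smul_mem _ _ (by simpa [h] using xx_mem_Fil i)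
        · rw [eps_Fil (wd_mem_Fil (by omega)), zero_smul]; exact Submodule.zero_mem _
    exact Fil_anti hw (key w)
  exact this ha

lemma DA_mem_one [PC k p] (a : Al k p) : DA k p a ∈ Fil k p 1 := by
  induction a using Al.induction with
  | h0 => simp
  | hadd a b ha hb => rw [map_add]; exact Submodule.add_mem _ ha hb
  | hs c w =>
    rw [map_smul]
    refine Submodule.smul_mem _ _ ?_
    induction w using FreeMonoid.recOn with
    | one => rw [wd_one, DD_one]; exact Submodule.zero_mem _
    | of_mul i w ih => exact DA_mem (wd_mem_Fil (by simp))

lemma EE_DA [PC k p] (a : Al k p) : EE k p (DA k p a) = DA k p (EE k p a) := by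
  induction a using Al.induction with
  | h0 => simp
  | hadd a b ha hb => simp only [map_add, ha, hb]
  | hs c w =>
    simp only [map_smul]
    congr 1
    induction w using FreeMonoid.recOn with
    | one => simp [wd_one, EE_one, DD_one]
    | of_mul i w ih =>
      rw [wd_of_mul, EE_mul, EE_xx, map_add, DD_xx_mul, DD_xx_mul, map_add, EE_lie, ih, EE_xx,
        map_smul, EE_xx, eps_Fil (EE_mem_one _)]
      rw [zero_smul]; abel

lemma DA_JJ [PC k p] {a : Al k p} (ha : a ∈ Fil k p 1) : DA k p (JJ k p a) = JJ k p (DA k p a) := by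
  have hk := PC.unit (k := k) (p := p)
  rw [← sub_eq_zero]
  refine EE_inj hk (Submodule.sub_mem _ (DA_mem (JJ_mem ha)) (JJ_mem (DA_mem ha))) ?_
  rw [map_sub, EE_DA, EE_JJ hk ha, EE_JJ hk (DA_mem ha), sub_self]

/-- Dynkin lemma -/
lemma MM_DA [PC k p] {f : ℕ → Λ} (hf : Nl k p f) (a : Al k p) (v : Λ) (s : k) :
    MM hf (DA k p a) (v, s) = (⁅DD hf a, v⁆ + s • DD hf (EE k p a), 0) := by
  induction a using Al.induction with
  | h0 => simp; rfl
  | hadd a b ha hb =>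
    simp only [map_add, LinearMap.add_apply, ha, hb, add_lie, smul_add, Prod.mk_add_mk, add_zero]
    congr 1; abel
  | hs c w =>
    suffices h : MM hf (DA k p (wd k p w)) (v, s) =
        (⁅DD hf (wd k p w), v⁆ + s • DD hf (EE k p (wd k p w)), 0) by
      simp only [map_smul, LinearMap.smul_apply, h, Prod.smul_mk, smul_zero, smul_add, smul_lie]
      rw [smul_comm c s]
    induction w using FreeMonoid.recOn generalizing v s with
    | one => simp [wd_one, DD_one, EE_one]; rfl
    | of_mul i w ih =>
      rw [wd_of_mul, DD_xx_mul, EE_mul, EE_xx, DD_xx_mul, map_add (DD hf), DD_xx_mul, DD_xx_mul,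
        map_add (MM hf), map_smul (MM hf),
        LinearMap.add_apply, LinearMap.smul_apply, MM_xx, Ring.lie_def, map_sub, map_mul, map_mul,
        LinearMap.sub_apply, Module.End.mul_apply, Module.End.mul_apply, ih, MM_xx, MM_xx, ih,
        eps_Fil (EE_mem_one _)]
      simp only [zero_smul, add_zero, lie_add, add_lie, smul_add, lie_smul, smul_lie, lie_lie,
        Prod.smul_mk, smul_zero, Prod.mk_sub_mk, Prod.mk_add_mk, sub_self]
      congr 1
      rw [← lie_skew (f i) (DD hf (wd k p w)), smul_comm s, smul_neg]
      abel

/-! ### Lie elements -/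

variable (k p) in
/-- The Lie subalgebra of Lie elements. -/
noncomputable def PP [PC k p] : LieSubalgebra k (Al k p) where
  carrier := {u | u ∈ Fil k p 1 ∧ ∀ (v : Al k p) (s : k),
    MM (NlA (k := k) (p := p)) u (v, s) = (⁅u, v⁆ + s • EE k p u, 0)}
  add_mem' := by
    rintro a b ⟨ha, ha'⟩ ⟨hb, hb'⟩
    refine ⟨Submodule.add_mem _ ha hb, fun v s => ?_⟩
    simp only [map_add, LinearMap.add_apply, ha', hb', add_lie, smul_add, Prod.mk_add_mk, add_zero]
    congr 1; abel
  zero_mem' := ⟨Submodule.zero_mem _, by intros; simp; rfl⟩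
  smul_mem' := by
    rintro c a ⟨ha, ha'⟩
    refine ⟨Submodule.smul_mem _ _ ha, fun v s => ?_⟩
    simp only [map_smul, LinearMap.smul_apply, ha', Prod.smul_mk, smul_zero, smul_add, smul_lie]
    rw [smul_comm c s]
  lie_mem' := by
    rintro a b ⟨ha, ha'⟩ ⟨hb, hb'⟩
    refine ⟨Fil_anti (by omega) (Fil_lie ha hb), fun v s => ?_⟩
    have : MM (NlA (k := k) (p := p)) ⁅a, b⁆ = ⁅MM (NlA (k := k) (p := p)) a, MM NlA b⁆ := by
      simp only [Ring.lie_def, map_sub, map_mul]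
    rw [this]
    rw [Ring.lie_def, LinearMap.sub_apply, Module.End.mul_apply, Module.End.mul_apply, ha', hb',
      ha', hb', EE_lie, Prod.mk_sub_mk]
    congr 1
    · simp only [lie_add, lie_lie, lie_smulA, zero_smul, add_zero, smul_add]
      rw [← lie_skew b (EE k p a), smul_neg]; abel
    · simp

lemma mem_PP [PC k p] {u : Al k p} : u ∈ PP k p ↔ u ∈ Fil k p 1 ∧ ∀ (v : Al k p) (s : k),
    MM (NlA (k := k) (p := p)) u (v, s) = (⁅u, v⁆ + s • EE k p u, 0) := Iff.rfl

lemma DA_mem_PP [PC k p] (a : Al k p) : DA k p a ∈ PP k p := by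
  refine ⟨DA_mem_one a, fun v s => ?_⟩
  rw [MM_DA, EE_DA]

lemma PP_eq [PC k p] {u : Al k p} (hu : u ∈ PP k p) : DA k p (JJ k p u) = u := by
  have h1 := hu.2 0 1
  rw [MM_zero_one] at h1
  have h2 : DA k p u = EE k p u := by simpa using congrArg Prod.fst h1
  rw [DA_JJ hu.1, h2, JJ_EE PC.unit hu.1]

lemma xx_mem_PP [PC k p] (i : ℕ) : xx k p i ∈ PP k p := by
  have := DA_mem_PP (xx k p i)
  rwa [DD_xx] at this

variable (k p) in
/-- the letters as Lie elements -/
noncomputable def yy [PC k p] (i : ℕ) : PP k p := ⟨xx k p i, xx_mem_PP i⟩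

lemma PP_induction [PC k p] {C : PP k p → Prop} (h0 : C 0) (ha : ∀ u v, C u → C v → C (u + v))
    (hs : ∀ (c : k) u, C u → C (c • u)) (hx : ∀ i, C (yy k p i))
    (hl : ∀ i u, C u → C ⁅yy k p i, u⁆) (u : PP k p) : C u := by
  have key : ∀ a : Al k p, C ⟨DA k p a, DA_mem_PP a⟩ := by
    intro a
    induction a using Al.induction with
    | h0 => convert h0; simp
    | hadd a b h1 h2 =>
      convert ha _ _ h1 h2
      simp
    | hs c w =>
      have : C ⟨DA k p (wd k p w), DA_mem_PP _⟩ := by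
        induction w using FreeMonoid.recOn with
        | one => convert h0; simp [wd_one, DD_one]
        | of_mul i w ih =>
          convert ha _ _ (hl i _ ih) (hs (eps k p (wd k p w)) _ (hx i)) using 1
          apply Subtype.ext
          rw [wd_of_mul]
          simp only [DD_xx_mul]
          rfl
      convert hs c _ this
      simp
  have := key (JJ k p u)
  convert this
  exact (PP_eq u.2).symm

/-- uniqueness of Lie homs from `PP` -/
lemma PP_hom_ext [PC k p] {θ η : PP k p →ₗ⁅k⁆ Λ} (h : ∀ i, θ (yy k p i) = η (yy k p i)) : θ = η := by
  ext u
  induction u using PP_induction with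
  | h0 => simp
  | ha u v hu hv => rw [map_add, map_add, hu, hv]
  | hs c u hu => rw [map_smul, map_smul, hu]
  | hx i => exact h i
  | hl i u hu => rw [LieHom.map_lie, LieHom.map_lie, hu, h]

lemma DD_DA [PC k p] {f : ℕ → Λ} (hf : Nl k p f) (a : Al k p) :
    DD hf (DA k p a) = DD hf (EE k p a) := by
  have := MM_DA hf a 0 1
  rw [MM_zero_one] at this
  simpa using congrArg Prod.fst this

/-- the universal Lie hom -/
noncomputable def psi [PC k p] {f : ℕ → Λ} (hf : Nl k p f) : PP k p →ₗ⁅k⁆ Λ where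
  toFun u := DD hf (JJ k p u)
  map_add' u v := by simp
  map_smul' c u := by simp
  map_lie' := by
    rintro ⟨u, hu⟩ ⟨v, hv⟩
    have h1 : DA k p (u * JJ k p v) = ⁅u, v⁆ := by
      rw [DD_mul, PP_eq hv, hu.2, eps_Fil (JJ_mem hv.1)]; simp
    have h2 : u * JJ k p v ∈ Fil k p 1 := Fil_anti (by omega) (Fil_mul hu.1 (JJ_mem hv.1))
    have h3 : JJ k p ⁅u, v⁆ = DA k p (JJ k p (u * JJ k p v)) := by
      rw [← h1, DA_JJ h2]
    change DD hf (JJ k p ⁅u, v⁆) = ⁅DD hf (JJ k p u), DD hf (JJ k p v)⁆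
    rw [h3, DD_DA, EE_JJ PC.unit h2, DD_mul, eps_Fil (JJ_mem hv.1)]
    conv_lhs => rw [← PP_eq hu]
    rw [MM_DA]; simp

lemma psi_yy [PC k p] {f : ℕ → Λ} (hf : Nl k p f) (i : ℕ) : psi hf (yy k p i) = f i := by
  change DD hf (JJ k p (xx k p i)) = f i
  have : JJ k p (xx k p i) = xx k p i := by rw [xx, JJ_wd]; simp
  rw [this, DD_xx]

end Dyn
end Laz

namespace Laz

section ModFil
variable {k : Type*} [CommRing k] {V : Type*} [AddCommGroup V] [Module k V] {p : ℕ}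

/-- operators raising a filtration -/
def endFil (G : ℕ → Submodule k V) (hG : Antitone G) (h0 : G 0 = ⊤) (hp : G p = ⊥) :
    NFil k (Module.End k V) p where
  F d := 
    { carrier := {f | ∀ m, ∀ v ∈ G m, f v ∈ G (m + d)}
      add_mem' := fun ha hb m v hv => Submodule.add_mem _ (ha m v hv) (hb m v hv)
      zero_mem' := fun m v _ => Submodule.zero_mem _
      smul_mem' := fun c f hf m v hv => Submodule.smul_mem _ _ (hf m v hv) }
  anti := fun i j h f hf m v hv => hG (by omega) (hf m v hv)
  mul := by
    intro i j a b ha hb m v hv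
    have := ha _ _ (hb m v hv)
    rwa [add_assoc, add_comm j i] at this
  bot := by
    rw [eq_bot_iff]
    intro f hf
    rw [Submodule.mem_bot]
    ext v
    have := hf 0 v (by rw [h0]; trivial)
    rw [zero_add, hp, Submodule.mem_bot] at this
    simpa using this

lemma mem_endFil {G : ℕ → Submodule k V} {hG : Antitone G} {h0 : G 0 = ⊤} {hp : G p = ⊥} {d : ℕ}
    {f : Module.End k V} : f ∈ (endFil G hG h0 hp).F d ↔ ∀ m, ∀ v ∈ G m, f v ∈ G (m + d) := Iff.rfl

end ModFil

section Star
variable {k : Type} [CommRing k] {p : ℕ}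

variable (k p) in
/-- truncated exponential on `A` -/
noncomputable def ex (u : Al k p) : Al k p := pexp k p u

variable [PC k p]

lemma ex_zero : ex k p 0 = 1 := pexp_zero (by have := PC.two (k := k) (p := p); omega)

lemma ex_inj {u v : Al k p} (hu : u ∈ Fil k p 1) (hv : v ∈ Fil k p 1) (h : ex k p u = ex k p v) :
    u = v := (AFil k p).pexp_inj (PC.two (k := k)) hu hv h

lemma ex_add {u v : Al k p} (hu : u ∈ Fil k p 1) (hv : v ∈ Fil k p 1) (h : Commute u v) :
    ex k p (u + v) = ex k p u * ex k p v :=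
  pexp_add PC.unit _ _ h (fun i j hij => (AFil k p).pow_mul_pow
    (by have := PC.two (k := k) (p := p); omega) hu hv i j hij)

lemma ex_neg_mul {u : Al k p} (hu : u ∈ Fil k p 1) : ex k p (-u) * ex k p u = 1 := by
  rw [← ex_add (Submodule.neg_mem _ hu) hu (Commute.refl u).neg_left, neg_add_cancel, ex_zero]

lemma ex_mul_neg {u : Al k p} (hu : u ∈ Fil k p 1) : ex k p u * ex k p (-u) = 1 := by
  rw [← ex_add hu (Submodule.neg_mem _ hu) (Commute.refl u).neg_right, add_neg_cancel, ex_zero]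

lemma ex_pow {u : Al k p} (hu : u ∈ Fil k p 1) (m : ℕ) : ex k p u ^ m = ex k p (m • u) := by
  induction m with
  | zero => rw [pow_zero, zero_smul, ex_zero]
  | succ m ih =>
    rw [pow_succ, ih, succ_nsmul, ex_add ((Fil k p 1).nsmul_mem hu m) hu]
    exact (Commute.refl u).smul_left m

lemma ex_sub_one {u : Al k p} {m : ℕ} (hm : 1 ≤ m) (hu : u ∈ Fil k p m) : ex k p u - 1 ∈ Fil k p m :=
  (AFil k p).pexp_sub_one_mem (PC.two (k := k)) hm hu

lemma ex_sub {u : Al k p} {m : ℕ} (hm : 1 ≤ m) (hu : u ∈ Fil k p m) :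
    ex k p u - 1 - u ∈ Fil k p (m + 1) :=
  (AFil k p).pexp_sub_mem (PC.two (k := k)) hm hu

lemma ex_surj {g : Al k p} (hg : g - 1 ∈ Fil k p 1) : ∃ u ∈ Fil k p 1, ex k p u = g :=
  (AFil k p).pexp_surj (PC.two (k := k)) hg

lemma mem_of_ex {u : Al k p} (hu : u ∈ Fil k p 1) {m : ℕ} (h : ex k p u - 1 ∈ Fil k p m) :
    u ∈ Fil k p m := (AFil k p).mem_of_pexp (PC.two (k := k)) hu h

variable (k p) in
/-- filtration on `A × k` -/
noncomputable def GG (m : ℕ) : Submodule k (Al k p × k) :=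
  (Fil k p m).prod (if m = 0 then ⊤ else ⊥)

lemma GG_anti : Antitone (GG k p) := by
  intro i j h
  refine Submodule.prod_mono (Fil_anti h) ?_
  split_ifs <;> simp
  omega

variable (k p) in
/-- NFil structure on endomorphisms of `A × k` -/
noncomputable def GFil : NFil k (Module.End k (Al k p × k)) p :=
  endFil (GG k p) GG_anti
    (by
      rw [eq_top_iff]
      rintro ⟨a, s⟩ _
      simp [GG, Fil_zero])
    (by
      have := PC.two (k := k) (p := p)
      rw [GG, if_neg (by omega), Fil_bot, Submodule.prod_bot])

variable (k p) in
/-- NFil structure on endomorphisms of `A` -/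
noncomputable def HFil : NFil k (Module.End k (Al k p)) p :=
  endFil (Fil k p) Fil_anti (by rw [eq_top_iff]; intro a _; exact Fil_zero a) Fil_bot

variable (k p) in
/-- the operator `N u` -/
noncomputable def NN (u : Al k p) : Module.End k (Al k p × k) :=
  LinearMap.inl k (Al k p) k ∘ₗ
    ((LinearMap.mulLeft k u - LinearMap.mulRight k u).coprod ((LinearMap.id).smulRight (EE k p u)))

lemma NN_apply (u v : Al k p) (s : k) : NN k p u (v, s) = (⁅u, v⁆ + s • EE k p u, 0) := by
  simp [NN, Ring.lie_def]

lemma NN_mem {u : Al k p} (hu : u ∈ Fil k p 1) : NN k p u ∈ (GFil k p).F 1 := by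
  rintro m ⟨v, s⟩ ⟨hv, hs⟩
  rw [NN_apply]
  refine ⟨Submodule.add_mem _ ?_ ?_, ?_⟩
  · have := Fil_lie hu hv
    rwa [add_comm] at this
  · by_cases hm : m = 0
    · subst hm
      exact Submodule.smul_mem _ _ (EE_mem hu)
    · simp only [if_neg hm, SetLike.mem_coe, Submodule.mem_bot] at hs
      rw [show s = 0 from hs, zero_smul]; exact Submodule.zero_mem _
  · simp

lemma MM_mem {u : Al k p} (hu : u ∈ Fil k p 1) :
    MM (NlA (k := k) (p := p)) u ∈ (GFil k p).F 1 := by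
  have : Fil k p 1 ≤ ((GFil k p).F 1).comap (MM (NlA (k := k) (p := p))).toLinearMap := by
    refine Fil_le ?_
    intro w hw
    rw [Submodule.mem_comap, AlgHom.toLinearMap_apply]
    have hx : ∀ i, MM (NlA (k := k) (p := p)) (xx k p i) ∈ (GFil k p).F 1 := by
      intro i
      convert NN_mem (xx_mem_Fil (k := k) (p := p) i) using 1
      refine LinearMap.ext fun x => ?_
      obtain ⟨v, s⟩ := x
      rw [MM_xx, NN_apply, EE_xx]
    induction w using FreeMonoid.recOn with
    | one => simp at hw
    | of_mul i w ih =>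
      rw [wd_of_mul, map_mul]
      by_cases h : w.length = 0
      · have : w = 1 := by simpa using h
        rw [this, wd_one, map_one, mul_one]; exact hx i
      · exact (GFil k p).anti (by omega) ((GFil k p).mul (hx i) (ih (by omega)))
  exact this hu

/-- conjugation data -/
noncomputable def tau (x : Al k p × k) : Module.End k (Al k p) :=
  LinearMap.mulLeft k x.1 - x.2 • EE k p

lemma tau_lin (u : Al k p) (x : Al k p × k) :
    tau (NN k p u x) = (LinearMap.mulLeft k (LinearMap.mulLeft k u : Module.End k (Al k p)) -
      LinearMap.mulRight k (LinearMap.mulLeft k u : Module.End k (Al k p))) (tau x) := by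
  obtain ⟨v, s⟩ := x
  rw [NN_apply]
  refine LinearMap.ext fun a => ?_
  simp only [tau, LinearMap.sub_apply, LinearMap.mulLeft_apply, LinearMap.mulRight_apply,
    Module.End.mul_apply, LinearMap.smul_apply, zero_smul, sub_zero, EE_mul, Ring.lie_def]
  simp only [add_mul, sub_mul, mul_sub, smul_mul_assoc, smul_add, mul_smul_comm, mul_assoc]
  abel

lemma tau_pexp {u : Al k p} (hu : u ∈ Fil k p 1) (x : Al k p × k) :
    tau (pexp k p (NN k p u) x) = LinearMap.mulLeft k (ex k p u) * tau x *
      LinearMap.mulLeft k (ex k p (-u)) := by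
  set Lu : Module.End k (Al k p) := LinearMap.mulLeft k u with hLu
  have hadd : ∀ x y : Al k p × k, tau (x + y) = tau x + tau y := by
    intro x y; ext a; simp [tau, add_mul, add_smul]; abel
  have hsm : ∀ (c : k) (x : Al k p × k), tau (c • x) = c • tau x := by
    intro c x; ext a; simp [tau, smul_sub, smul_smul]
  let T : (Al k p × k) →ₗ[k] Module.End k (Al k p) := ⟨⟨tau, hadd⟩, hsm⟩
  have hpow : ∀ (m : ℕ) x, T ((NN k p u ^ m) x) =
      ((LinearMap.mulLeft k Lu - LinearMap.mulRight k Lu) ^ m) (T x) := by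
    intro m
    induction m with
    | zero => intro x; simp
    | succ m ih =>
      intro x
      rw [pow_succ', pow_succ', Module.End.mul_apply, Module.End.mul_apply, ← ih]
      exact tau_lin u _
  have h1 : T (pexp k p (NN k p u) x) =
      pexp k p (LinearMap.mulLeft k Lu - LinearMap.mulRight k Lu) (T x) := by
    simp only [pexp, LinearMap.sum_apply, LinearMap.smul_apply, map_sum, map_smul, hpow]
  have hL : ∀ c : Al k p, pexp k p (LinearMap.mulLeft k c : Module.End k (Al k p)) =
      LinearMap.mulLeft k (pexp k p c) := fun c => (map_pexp (Algebra.lmul k (Al k p)) p c).symm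
  have hlu : ∀ j m, ∀ v ∈ Fil k p m, (Lu ^ j) v ∈ Fil k p (m + j) := by
    intro j m v hv
    rw [hLu, LinearMap.pow_mulLeft, LinearMap.mulLeft_apply, add_comm]
    have := Fil_mul (Fil_pow hu j) hv
    rwa [one_mul] at this
  change T (pexp k p (NN k p u) x) = _
  rw [h1, pexp_conj PC.unit]
  · have : -Lu = LinearMap.mulLeft k (-u) := by ext; simp [hLu]
    rw [this, hLu, hL, hL]; rfl
  · intro i j hij
    refine LinearMap.ext fun a => ?_
    rw [LinearMap.zero_apply]
    refine Fil_eq_zero (d := 0 + j + i) (by omega) ?_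
    rw [Module.End.mul_apply, Module.End.mul_apply]
    apply hlu
    have h2 := hlu j 0 a (Fil_zero a)
    change x.1 * _ - x.2 • EE k p _ ∈ _
    refine Submodule.sub_mem _ ?_ (Submodule.smul_mem _ _ (EE_mem h2))
    have := Fil_mul (Fil_zero x.1) h2
    rwa [zero_add] at this

lemma NN_pexp_snd {u : Al k p} (x : Al k p × k) : (pexp k p (NN k p u) x).2 = x.2 := by
  have hp := PC.two (k := k) (p := p)
  rw [pexp, LinearMap.sum_apply, Prod.snd_sum,
    Finset.sum_eq_single_of_mem 0 (Finset.mem_range.2 (by omega))]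
  · simp [fi]
  · intro m _ hm
    obtain ⟨m, rfl⟩ : ∃ q, m = q + 1 := ⟨m - 1, by omega⟩
    rw [LinearMap.smul_apply, Prod.smul_snd, pow_succ', Module.End.mul_apply,
      ← Prod.mk.eta (p := (NN k p u ^ m) x), NN_apply, smul_zero]

lemma NN_pexp_mul {u v w : Al k p} (hu : u ∈ Fil k p 1) (hv : v ∈ Fil k p 1) (hw : w ∈ Fil k p 1)
    (h : ex k p w = ex k p u * ex k p v) :
    pexp k p (NN k p w) = pexp k p (NN k p u) * pexp k p (NN k p v) := by
  have hneg : ex k p (-w) = ex k p (-v) * ex k p (-u) := by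
    have h1 : ex k p w * (ex k p (-v) * ex k p (-u)) = 1 := by
      rw [h, mul_assoc, ← mul_assoc (ex k p v), ex_mul_neg hv, one_mul, ex_mul_neg hu]
    calc ex k p (-w) = ex k p (-w) * (ex k p w * (ex k p (-v) * ex k p (-u))) := by rw [h1, mul_one]
      _ = _ := by rw [← mul_assoc, ex_neg_mul hw, one_mul]
  refine LinearMap.ext fun x => ?_
  rw [Module.End.mul_apply]
  refine Prod.ext ?_ (by rw [NN_pexp_snd, NN_pexp_snd, NN_pexp_snd])
  have ht : ∀ y : Al k p × k, tau y 1 = y.1 := by intro y; simp [tau, EE_one]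
  rw [← ht, ← ht, tau_pexp hw, tau_pexp hu, tau_pexp hv, h, hneg]
  simp only [Module.End.mul_apply, LinearMap.mulLeft_apply, mul_assoc]

lemma star_mem {u v w : Al k p} (hu : u ∈ PP k p) (hv : v ∈ PP k p) (hw : w ∈ Fil k p 1)
    (h : ex k p w = ex k p u * ex k p v) : w ∈ PP k p := by
  have hN : ∀ a ∈ PP k p, MM (NlA (k := k) (p := p)) a = NN k p a := by
    intro a ha
    refine LinearMap.ext fun x => ?_
    obtain ⟨b, s⟩ := x
    rw [ha.2, NN_apply]
  have key : pexp k p (MM (NlA (k := k) (p := p)) w) = pexp k p (NN k p w) := by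
    rw [NN_pexp_mul hu.1 hv.1 hw h, ← hN u hu, ← hN v hv, ← map_pexp, ← map_pexp, ← map_pexp,
      ← map_mul]
    congr 1
  have := (GFil k p).pexp_inj (PC.two (k := k)) (MM_mem hw) (NN_mem hw) key
  refine ⟨hw, fun b s => ?_⟩
  rw [this, NN_apply]

lemma star_exists (u v : PP k p) : ∃ w : PP k p, ex k p w = ex k p u * ex k p v := by
  have h1 : ex k p (u : Al k p) * ex k p v - 1 ∈ Fil k p 1 := by
    have e : ex k p (u : Al k p) * ex k p v - 1 =
        (ex k p (u : Al k p) - 1) * ex k p v + (ex k p (v : Al k p) - 1) := by noncomm_ring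
    rw [e]
    refine Submodule.add_mem _ ?_ (ex_sub_one le_rfl v.2.1)
    exact Fil_mul (j := 0) (ex_sub_one le_rfl u.2.1) (Fil_zero _)
  obtain ⟨w, hw, h⟩ := ex_surj h1
  exact ⟨⟨w, star_mem u.2 v.2 hw h⟩, h⟩

/-- the group law on Lie elements -/
noncomputable def star (u v : PP k p) : PP k p := (star_exists u v).choose

lemma ex_star (u v : PP k p) : ex k p (star u v : PP k p) = ex k p u * ex k p v :=
  (star_exists u v).choose_spec

lemma PP_ex_inj {u v : PP k p} (h : ex k p u = ex k p v) : u = v :=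
  Subtype.ext (ex_inj u.2.1 v.2.1 h)

lemma star_assoc (u v w : PP k p) : star (star u v) w = star u (star v w) :=
  PP_ex_inj (by simp only [ex_star, mul_assoc])

lemma star_zero (u : PP k p) : star u 0 = u :=
  PP_ex_inj (by rw [ex_star]; simp [ex_zero])

lemma zero_star (u : PP k p) : star 0 u = u :=
  PP_ex_inj (by rw [ex_star]; simp [ex_zero])

lemma neg_star (u : PP k p) : star (-u) u = 0 :=
  PP_ex_inj (by
    rw [ex_star]
    have := ex_neg_mul u.2.1
    simpa [ex_zero] using this)

/-- Lie homs of `PP` respect `star` -/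
lemma map_star_PP (θ : PP k p →ₗ⁅k⁆ PP k p) (u v : PP k p) :
    θ (star u v) = star (θ u) (θ v) := by
  have hf : ∀ i, (θ (yy k p i) : Al k p) ∈ Fil k p 1 := fun i => (θ (yy k p i)).2.1
  have key : ∀ u : PP k p, substA (fun i => (θ (yy k p i) : Al k p)) hf u = θ u := by
    intro u
    induction u using PP_induction with
    | h0 => simp
    | ha u v hu hv =>
      rw [map_add]
      change substA _ hf ((u : Al k p) + v) = (θ u : Al k p) + θ v
      rw [map_add, hu, hv]
    | hs c u hu =>
      rw [map_smul]
      change substA _ hf (c • (u : Al k p)) = c • (θ u : Al k p)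
      rw [map_smul, hu]
    | hx i => exact algA_xx _ _ i
    | hl i u hu =>
      rw [LieHom.map_lie, LieSubalgebra.coe_bracket, LieSubalgebra.coe_bracket, Ring.lie_def,
        Ring.lie_def, map_sub, map_mul, map_mul, hu]
      congr 2 <;> congr 1 <;> exact algA_xx _ _ i
  apply PP_ex_inj
  rw [ex_star, ← key, ← key, ← key]
  have hm : ∀ a, ex k p (substA (fun i => (θ (yy k p i) : Al k p)) hf a) =
    substA (fun i => (θ (yy k p i) : Al k p)) hf (ex k p a) := fun a => (map_pexp _ p a).symm
  rw [hm, hm, hm, ex_star, map_mul]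

end Star
end Laz

namespace Laz

section GrpGr
variable {H : Type} [Group H]

variable (H) in
/-- lower central series indexed from one -/
def gam (m : ℕ) : Subgroup H := (⊤ : Subgroup H).lowerCentralSeries (m - 1)

instance (m : ℕ) : (gam H m).Normal := by unfold gam; infer_instance

lemma gam_anti : Antitone (gam H) := fun _ _ h =>
  Subgroup.lowerCentralSeries_antitone _ (Nat.sub_le_sub_right h 1)

lemma gam_one (h : H) : h ∈ gam H 1 := Subgroup.mem_top h

lemma gam_succ {m : ℕ} (hm : 1 ≤ m) : gam H (m + 1) = ⁅gam H m, ⊤⁆ := by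
  obtain ⟨q, rfl⟩ : ∃ q, m = q + 1 := ⟨m - 1, by omega⟩
  rfl

/-- three subgroup lemma modulo a normal subgroup -/
lemma three_sub (A B C N : Subgroup H) [N.Normal]
    (h1 : ⁅⁅B, C⁆, A⁆ ≤ N) (h2 : ⁅⁅C, A⁆, B⁆ ≤ N) : ⁅⁅A, B⁆, C⁆ ≤ N := by
  have key : ∀ K : Subgroup H, K ≤ N ↔ K.map (QuotientGroup.mk' N) = ⊥ := by
    intro K
    rw [Subgroup.map_eq_bot_iff, QuotientGroup.ker_mk']
  rw [key, Subgroup.map_commutator, Subgroup.map_commutator] at *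
  exact Subgroup.commutator_commutator_eq_bot_of_rotate h1 h2

lemma lcs_comm (i j : ℕ) : ⁅(⊤ : Subgroup H).lowerCentralSeries i,
    (⊤ : Subgroup H).lowerCentralSeries j⁆ ≤ (⊤ : Subgroup H).lowerCentralSeries (i + j + 1) := by
  induction j generalizing i with
  | zero => exact le_of_eq rfl
  | succ j ih =>
    rw [Subgroup.commutator_comm, Subgroup.lowerCentralSeries_succ]
    refine three_sub _ _ _ _ ?_ ?_
    · rw [Subgroup.commutator_comm ⊤]
      have := ih (i + 1)
      rw [show i + (j + 1) + 1 = i + 1 + j + 1 by omega]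
      exact this
    · have := Subgroup.commutator_mono (ih i) (le_refl (⊤ : Subgroup H))
      exact this

lemma gam_comm {i j : ℕ} {g h : H} (hg : g ∈ gam H i) (hh : h ∈ gam H j) :
    ⁅g, h⁆ ∈ gam H (i + j) := by
  rcases Nat.eq_zero_or_pos i with rfl | hi
  · rw [zero_add, commutatorElement_def]
    exact (gam H j).mul_mem ((inferInstance : (gam H j).Normal).conj_mem _ hh _) ((gam H j).inv_mem hh)
  rcases Nat.eq_zero_or_pos j with rfl | hj
  · rw [add_zero, commutatorElement_def, mul_assoc, mul_assoc]
    refine (gam H i).mul_mem hg ?_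
    rw [← mul_assoc]
    exact (inferInstance : (gam H i).Normal).conj_mem _ ((gam H i).inv_mem hg) _
  · have := lcs_comm (i - 1) (j - 1) (Subgroup.commutator_mem_commutator hg hh)
    rw [show i - 1 + (j - 1) + 1 = i + j - 1 by omega] at this
    exact this

variable (H) in
/-- receptacle of the graded piece -/
abbrev QQ (m : ℕ) : Type := Additive (Subgroup.center (H ⧸ gam H (m + 1)))

instance (m : ℕ) : AddCommGroup (QQ H m) :=
  { (inferInstance : AddGroup (Additive (Subgroup.center (H ⧸ gam H (m + 1))))) with
    add_comm := fun a b => congrArg Additive.ofMul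
      (Subtype.ext (a.toMul.2.comm b.toMul) :  a.toMul * b.toMul = b.toMul * a.toMul) }

lemma cls_aux {m : ℕ} {h : H} (hm : h ∈ gam H m) :
    (QuotientGroup.mk h : H ⧸ gam H (m + 1)) ∈ Subgroup.center (H ⧸ gam H (m + 1)) := by
  rw [Subgroup.mem_center_iff]
  intro g
  induction g using QuotientGroup.induction_on with
  | H g =>
    rw [← QuotientGroup.mk_mul, ← QuotientGroup.mk_mul, QuotientGroup.eq]
    have := gam_comm (gam_one g⁻¹) ((gam H m).inv_mem hm)
    rw [add_comm] at this
    rw [commutatorElement_def] at this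
    have e : (g * h)⁻¹ * (h * g) = (h⁻¹ * g⁻¹ * h * g) := by group
    have t := (gam H (m+1)).inv_mem this
    have e2 : h⁻¹ * g⁻¹ * h * g = (g⁻¹ * h⁻¹ * g⁻¹⁻¹ * h⁻¹⁻¹)⁻¹ * 1 := by group
    have e3 : h⁻¹ * g⁻¹ * h * g = h⁻¹ * (g⁻¹ * h * g * h⁻¹) * h := by group
    rw [e, e3]
    have := (inferInstance : (gam H (m+1)).Normal).conj_mem _
      (gam_comm (gam_one g⁻¹) hm |> fun t => by rwa [add_comm] at t) h⁻¹
    simpa [commutatorElement_def] using this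

open Classical in
/-- class in the graded piece -/
noncomputable def cls (m : ℕ) (h : H) : QQ H m :=
  if hm : h ∈ gam H m then Additive.ofMul ⟨QuotientGroup.mk h, cls_aux hm⟩ else 0

lemma cls_def {m : ℕ} {h : H} (hm : h ∈ gam H m) :
    cls m h = Additive.ofMul ⟨QuotientGroup.mk h, cls_aux hm⟩ := dif_pos hm

lemma cls_mul {m : ℕ} {g h : H} (hg : g ∈ gam H m) (hh : h ∈ gam H m) :
    cls m (g * h) = cls m g + cls m h := by
  rw [cls_def hg, cls_def hh, cls_def ((gam H m).mul_mem hg hh)]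
  rfl

lemma cls_eq_zero {m : ℕ} {h : H} (hm : h ∈ gam H m) : cls m h = 0 ↔ h ∈ gam H (m + 1) := by
  rw [cls_def hm, ← QuotientGroup.eq_one_iff, ← ofMul_one, Additive.ofMul.injective.eq_iff]
  exact Subtype.ext_iff

lemma cls_zero {m : ℕ} {h : H} (hh : h ∈ gam H (m + 1)) : cls m h = 0 :=
  (cls_eq_zero (gam_anti (Nat.le_succ m) hh)).2 hh

lemma cls_one (m : ℕ) : cls m (1 : H) = 0 := cls_zero (Subgroup.one_mem _)

lemma cls_inv {m : ℕ} {h : H} (hh : h ∈ gam H m) : cls m h⁻¹ = - cls m h := by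
  rw [eq_neg_iff_add_eq_zero, ← cls_mul ((gam H m).inv_mem hh) hh, inv_mul_cancel, cls_one]

lemma cls_pow {m : ℕ} {h : H} (hh : h ∈ gam H m) (c : ℕ) : cls m (h ^ c) = c • cls m h := by
  induction c with
  | zero => rw [pow_zero, cls_one, zero_smul]
  | succ c ih => rw [pow_succ, cls_mul ((gam H m).pow_mem hh c) hh, ih, succ_nsmul]

lemma cls_conj {m : ℕ} {h : H} (hh : h ∈ gam H m) (g : H) : cls m (g * h * g⁻¹) = cls m h := by
  have e : g * h * g⁻¹ = ⁅g, h⁆ * h := by rw [commutatorElement_def]; group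
  have h1 : ⁅g, h⁆ ∈ gam H (m + 1) := by rw [add_comm]; exact gam_comm (gam_one g) hh
  rw [e, cls_mul (gam_anti (Nat.le_succ m) h1) hh, cls_zero h1, zero_add]

lemma cls_comm_mul {i j m : ℕ} (hj : 1 ≤ j) (hm : i + j = m) {g h h' : H} (hg : g ∈ gam H i)
    (hh : h ∈ gam H j) (hh' : h' ∈ gam H j) : cls m ⁅g, h * h'⁆ = cls m ⁅g, h⁆ + cls m ⁅g, h'⁆ := by
  subst hm
  have e : ⁅g, h * h'⁆ = ⁅g, h⁆ * (h * ⁅g, h'⁆ * h⁻¹) := by simp only [commutatorElement_def]; group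
  have h1 := gam_comm hg hh
  have h2 := gam_comm hg hh'
  rw [e, cls_mul h1 ((inferInstance : (gam H (i+j)).Normal).conj_mem _ h2 _), cls_conj h2]

lemma cls_comm_swap {i j m : ℕ} (hm : i + j = m) {g h : H} (hg : g ∈ gam H i)
    (hh : h ∈ gam H j) : cls m ⁅g, h⁆ = - cls m ⁅h, g⁆ := by
  subst hm
  have h2 := gam_comm hh hg
  rw [add_comm j i] at h2
  rw [← cls_inv h2, commutatorElement_inv]

lemma cls_comm_inv {i j m : ℕ} (hj : 1 ≤ j) (hm : i + j = m) {g h : H} (hg : g ∈ gam H i)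
    (hh : h ∈ gam H j) : cls m ⁅g, h⁻¹⁆ = - cls m ⁅g, h⁆ := by
  have := cls_comm_mul hj hm hg ((gam H j).inv_mem hh) hh
  rw [inv_mul_cancel, commutatorElement_one_right, cls_one] at this
  exact eq_neg_of_add_eq_zero_left this.symm

lemma cls_inv_comm {i j m : ℕ} (hi : 1 ≤ i) (hm : i + j = m) {g h : H} (hg : g ∈ gam H i)
    (hh : h ∈ gam H j) : cls m ⁅g⁻¹, h⁆ = - cls m ⁅g, h⁆ := by
  rw [cls_comm_swap hm ((gam H i).inv_mem hg) hh, cls_comm_inv hi (by omega) hh hg,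
    cls_comm_swap hm hg hh]

lemma cls_comm_pow {i j m : ℕ} (hj : 1 ≤ j) (hm : i + j = m) {g h : H} (hg : g ∈ gam H i)
    (hh : h ∈ gam H j) (c : ℕ) : cls m ⁅g, h ^ c⁆ = c • cls m ⁅g, h⁆ := by
  induction c with
  | zero => rw [pow_zero, commutatorElement_one_right, cls_one, zero_smul]
  | succ c ih => rw [pow_succ, cls_comm_mul hj hm hg ((gam H j).pow_mem hh c) hh, ih, succ_nsmul]

lemma cls_comm_congr {i j m : ℕ} (hj : 1 ≤ j) (hm : i + j = m) {g h h' : H} (hg : g ∈ gam H i)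
    (hh : h ∈ gam H j) (hh' : h' ∈ gam H j) (e : cls j h = cls j h') :
    cls m ⁅g, h⁆ = cls m ⁅g, h'⁆ := by
  have h3 : h * h'⁻¹ ∈ gam H (j + 1) := by
    rw [← cls_eq_zero ((gam H j).mul_mem hh ((gam H j).inv_mem hh')),
      cls_mul hh ((gam H j).inv_mem hh'), cls_inv hh', e, add_neg_cancel]
  have h4 := cls_comm_mul hj hm hg (gam_anti (Nat.le_succ j) h3) hh'
  rw [inv_mul_cancel_right] at h4
  rw [h4, cls_zero, zero_add]
  subst hm
  have := gam_comm hg h3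
  exact this

lemma cls_jacobi {i j m : ℕ} (hi : 1 ≤ i) (hj : 1 ≤ j) (hm : 1 + (i + j) = m) {x a b : H}
    (ha : a ∈ gam H i) (hb : b ∈ gam H j) :
    cls m ⁅⁅x, a⁆, b⁆ = cls m ⁅x, ⁅a, b⁆⁆ - cls m ⁅a, ⁅x, b⁆⁆ := by
  have hx := gam_one x
  have hx' := gam_one x⁻¹
  have ha' := (gam H i).inv_mem ha
  have hb' := (gam H j).inv_mem hb
  have e : ⁅x, ⁅a, b⁆⁆ = ((a * x) * ⁅b, ⁅x⁻¹, a⁻¹⁆⁆⁻¹ * (a * x)⁻¹) *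
    ((a * b) * ⁅a⁻¹, ⁅b⁻¹, x⁆⁆⁻¹ * (a * b)⁻¹) := by
    simp [commutatorElement_def, mul_assoc]
  have m1 : ⁅b, ⁅x⁻¹, a⁻¹⁆⁆ ∈ gam H m := by
    have := gam_comm hb (gam_comm hx' ha')
    rwa [show j + (1 + i) = m by omega] at this
  have m2 : ⁅a⁻¹, ⁅b⁻¹, x⁆⁆ ∈ gam H m := by
    have := gam_comm ha' (gam_comm hb' hx)
    rwa [show i + (j + 1) = m by omega] at this
  have n1 := (gam H m).inv_mem m1
  have n2 := (gam H m).inv_mem m2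
  have c1 : cls (1 + i) ⁅x⁻¹, a⁻¹⁆ = cls (1 + i) ⁅x, a⁆ := by
    rw [cls_inv_comm le_rfl rfl hx ha', cls_comm_inv hi rfl hx ha, neg_neg]
  have c2 : cls (j + 1) ⁅b⁻¹, x⁆ = cls (j + 1) ⁅x, b⁆ := by
    rw [cls_inv_comm hj rfl hb hx, cls_comm_swap rfl hb hx, neg_neg]
  have d2 : ⁅x, b⁆ ∈ gam H (j + 1) := by rw [add_comm]; exact gam_comm hx hb
  rw [e, cls_mul ((inferInstance : (gam H m).Normal).conj_mem _ n1 _)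
    ((inferInstance : (gam H m).Normal).conj_mem _ n2 _), cls_conj n1, cls_conj n2, cls_inv m1,
    cls_inv m2, cls_inv_comm hi (j := j + 1) (by omega) ha (gam_comm hb' hx),
    cls_comm_congr (by omega) (by omega) hb (gam_comm hx' ha') (gam_comm hx ha) c1,
    cls_comm_congr (by omega) (by omega) ha (gam_comm hb' hx) d2 c2,
    cls_comm_swap (i := 1 + i) (j := j) (by omega) (gam_comm hx ha) hb, neg_neg,
    add_sub_cancel_right]

end GrpGr
end Laz

namespace Laz

/-- exponent divides `N` -/
class ExpN (N : ℕ) (H : Type) [Group H] : Prop where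
  pow : ∀ g : H, g ^ N = 1

/-- class less than `p` -/
class NilC (p : ℕ) (H : Type) [Group H] : Prop where
  bot : gam H p = ⊥

section Beta
variable {N p : ℕ} [NeZero N] [PC (ZMod N) p] {H : Type} [Group H] [ExpN N H] [NilC p H]

instance (m : ℕ) : Module (ZMod N) (QQ H m) :=
  AddCommGroup.zmodModule (by
    intro q
    obtain ⟨g, hg⟩ := q
    apply Additive.toMul.injective
    apply Subtype.ext
    change g ^ N = 1
    induction g using QuotientGroup.induction_on with
    | H g => rw [← QuotientGroup.mk_pow, ExpN.pow, QuotientGroup.mk_one])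

lemma val_smul {M : Type*} [AddCommGroup M] [Module (ZMod N) M] (c : ZMod N) (q : M) :
    c.val • q = c • q := by
  rw [← Nat.cast_smul_eq_nsmul (ZMod N), ZMod.natCast_zmod_val]

/-- right normed commutators -/
def kapL (h : ℕ → H) : List ℕ → H
  | [] => 1
  | [x] => h x
  | x :: y :: l => ⁅h x, kapL h (y :: l)⁆

/-- right normed commutators -/
def kap (h : ℕ → H) (w : FreeMonoid ℕ) : H := kapL h w.toList

lemma kap_of (h : ℕ → H) (x : ℕ) : kap h (FreeMonoid.of x) = h x := rfl

lemma kap_of_mul (h : ℕ → H) (x : ℕ) (w : FreeMonoid ℕ) (hw : 1 ≤ w.length) :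
    kap h (FreeMonoid.of x * w) = ⁅h x, kap h w⁆ := by
  induction w using FreeMonoid.recOn with
  | one => simp at hw
  | of_mul i w ih => rfl

lemma kap_mem (h : ℕ → H) (w : FreeMonoid ℕ) : kap h w ∈ gam H w.length := by
  induction w using FreeMonoid.recOn with
  | one => exact Subgroup.mem_top _
  | of_mul i w ih =>
    rcases Nat.eq_zero_or_pos w.length with h0 | h0
    · rw [FreeMonoid.length_eq_zero] at h0
      subst h0
      exact gam_one _
    · rw [kap_of_mul h i w h0, FreeMonoid.length_mul, FreeMonoid.length_of]
      exact gam_comm (gam_one _) ih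

variable (N p) in
/-- the class of a homogeneous component -/
noncomputable def beta (h : ℕ → H) (m : ℕ) : Al (ZMod N) p →ₗ[ZMod N] QQ H m :=
  linA (fun w => if w.length = m then cls m (kap h w) else 0) (fun w hw => by
    split_ifs with hm
    · subst hm
      have := gam_anti hw (kap_mem h w)
      rw [NilC.bot, Subgroup.mem_bot] at this
      rw [this, cls_one]
    · rfl)

lemma beta_wd (h : ℕ → H) (m : ℕ) (w : FreeMonoid ℕ) :
    beta N p h m (wd (ZMod N) p w) = if w.length = m then cls m (kap h w) else 0 := linA_wd _ _ _

lemma beta_Fil (h : ℕ → H) (m : ℕ) {a : Al (ZMod N) p} (ha : a ∈ Fil (ZMod N) p (m + 1)) :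
    beta N p h m a = 0 := by
  have : Fil (ZMod N) p (m + 1) ≤ LinearMap.ker (beta N p h m) := by
    refine Fil_le fun w hw => ?_
    rw [LinearMap.mem_ker, beta_wd, if_neg (by omega)]
  exact this ha

lemma rel_exists (h : ℕ → H) {m : ℕ} (hm : 1 ≤ m) (a : Al (ZMod N) p) :
    ∃ g ∈ gam H m, beta N p h m a = cls m g ∧
      ∀ x, beta N p h (m + 1) (xx (ZMod N) p x * a) = cls (m + 1) ⁅h x, g⁆ := by
  induction a using Al.induction with
  | h0 => 
    refine ⟨1, Subgroup.one_mem _, ?_, fun x => ?_⟩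
    · rw [map_zero, cls_one]
    · rw [mul_zero, map_zero, commutatorElement_one_right, cls_one]
  | hadd a b ha hb =>
    obtain ⟨g, hg, h1, h2⟩ := ha
    obtain ⟨g', hg', h1', h2'⟩ := hb
    refine ⟨g * g', Subgroup.mul_mem _ hg hg', ?_, fun x => ?_⟩
    · rw [map_add, cls_mul hg hg', h1, h1']
    · rw [mul_add, map_add, h2, h2', cls_comm_mul hm (add_comm 1 m) (gam_one _) hg hg']
  | hs c w =>
    by_cases hw : w.length = m
    · subst hw
      have hk := kap_mem h w
      refine ⟨kap h w ^ c.val, Subgroup.pow_mem _ hk _, ?_, fun x => ?_⟩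
      · rw [map_smul, beta_wd, if_pos rfl, cls_pow hk, val_smul]
      · rw [mul_smul_comm, ← wd_of_mul, map_smul, beta_wd, if_pos (by
          rw [FreeMonoid.length_mul, FreeMonoid.length_of, add_comm]), kap_of_mul h x w hm,
          cls_comm_pow hm (add_comm _ _) (gam_one _) hk, val_smul]
    · refine ⟨1, Subgroup.one_mem _, ?_, fun x => ?_⟩
      · rw [map_smul, beta_wd, if_neg hw, cls_one, smul_zero]
      · rw [mul_smul_comm, ← wd_of_mul, map_smul, beta_wd, if_neg (by
          rw [FreeMonoid.length_mul, FreeMonoid.length_of]; omega), commutatorElement_one_right,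
          cls_one, smul_zero]

lemma rel (h : ℕ → H) {m m' : ℕ} (hm : 1 ≤ m) (hm' : m + 1 = m') {a : Al (ZMod N) p} {g : H}
    (hg : g ∈ gam H m) (e : beta N p h m a = cls m g) (x : ℕ) :
    beta N p h m' (xx (ZMod N) p x * a) = cls m' ⁅h x, g⁆ := by
  subst hm'
  obtain ⟨g', hg', h1, h2⟩ := rel_exists h hm a
  rw [h2, cls_comm_congr hm (add_comm 1 m) (gam_one _) hg' hg (h1.symm.trans e)]

lemma DA_of_mul (x : ℕ) (w : FreeMonoid ℕ) (hw : 1 ≤ w.length) :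
    DA (ZMod N) p (wd (ZMod N) p (FreeMonoid.of x * w)) =
      xx (ZMod N) p x * DA (ZMod N) p (wd (ZMod N) p w) -
      DA (ZMod N) p (wd (ZMod N) p w) * xx (ZMod N) p x := by
  rw [wd_of_mul, DD_xx_mul, eps_Fil (wd_mem_Fil hw), zero_smul, add_zero, Ring.lie_def]

lemma beta_lemma1 (h : ℕ → H) (u : FreeMonoid ℕ) (hu : 1 ≤ u.length) :
    ∀ (v : FreeMonoid ℕ), 1 ≤ v.length → ∀ m, u.length + v.length = m →
    beta N p h m (DA (ZMod N) p (wd (ZMod N) p u) * wd (ZMod N) p v) = cls m ⁅kap h u, kap h v⁆ := by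
  induction u using FreeMonoid.recOn with
  | one => simp at hu
  | of_mul x u ih =>
    intro v hv m hm
    rw [FreeMonoid.length_mul, FreeMonoid.length_of] at hm
    rcases Nat.eq_zero_or_pos u.length with h0 | h0
    · rw [FreeMonoid.length_eq_zero] at h0
      subst h0
      rw [mul_one]
      change beta N p h m (DA (ZMod N) p (xx (ZMod N) p x) * wd (ZMod N) p v) = _
      rw [DD_xx, ← wd_of_mul, beta_wd, if_pos (by
        rw [FreeMonoid.length_mul, FreeMonoid.length_of]; simpa using hm), kap_of_mul h x v hv]
      rfl
    · have ku := kap_mem h u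
      have kv := kap_mem h v
      rw [DA_of_mul x u h0, sub_mul, map_sub, mul_assoc, mul_assoc, ← wd_of_mul,
        ih h0 (FreeMonoid.of x * v) (by rw [FreeMonoid.length_mul, FreeMonoid.length_of]; omega) m
          (by rw [FreeMonoid.length_mul, FreeMonoid.length_of]; omega),
        rel h (m := u.length + v.length) (by omega) (by omega) (gam_comm ku kv) (ih h0 v hv _ rfl),
        kap_of_mul h x u h0, kap_of_mul h x v hv, cls_jacobi h0 hv (by omega) ku kv]

lemma beta_lemma2 (h : ℕ → H) (w : FreeMonoid ℕ) (hw : 1 ≤ w.length) :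
    beta N p h w.length (DA (ZMod N) p (wd (ZMod N) p w)) =
      w.length • cls w.length (kap h w) := by
  induction w using FreeMonoid.recOn with
  | one => simp at hw
  | of_mul x w ih =>
    rcases Nat.eq_zero_or_pos w.length with h0 | h0
    · rw [FreeMonoid.length_eq_zero] at h0
      subst h0
      rw [mul_one]
      change beta N p h _ (DA (ZMod N) p (xx (ZMod N) p x)) = _
      rw [DD_xx, xx, beta_wd, if_pos rfl, FreeMonoid.length_of, one_smul]
    · have kw := kap_mem h w
      have e := ih h0
      rw [← cls_pow kw] at e
      have e1 : (FreeMonoid.of x * w).length = w.length + 1 := by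
        rw [FreeMonoid.length_mul, FreeMonoid.length_of, add_comm]
      generalize hm : (FreeMonoid.of x * w).length = m at *
      subst e1
      have l1 := beta_lemma1 (N := N) (p := p) h w h0 (FreeMonoid.of x)
        (by rw [FreeMonoid.length_of]) (w.length + 1) (by rw [FreeMonoid.length_of])
      change beta N p h (w.length + 1) (DA (ZMod N) p (wd (ZMod N) p w) * xx (ZMod N) p x) = _ at l1
      rw [DA_of_mul x w h0, map_sub, rel h h0 rfl (Subgroup.pow_mem _ kw _) e, l1,
        cls_comm_pow h0 (add_comm _ _) (gam_one _) kw, kap_of_mul h x w h0, kap_of,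
        cls_comm_swap (i := w.length) (j := 1) rfl kw (gam_one _), sub_neg_eq_add, succ_nsmul]

lemma beta_DA (h : ℕ → H) {m : ℕ} (hm : 1 ≤ m) {a : Al (ZMod N) p} (ha : a ∈ Fil (ZMod N) p m) :
    beta N p h m (DA (ZMod N) p a) = m • beta N p h m a := by
  have : Fil (ZMod N) p m ≤ LinearMap.eqLocus (beta N p h m ∘ₗ DA (ZMod N) p)
      (m • beta N p h m) := by
    refine Fil_le fun w hw => ?_
    rw [LinearMap.mem_eqLocus, LinearMap.comp_apply, LinearMap.smul_apply]
    rcases hw.eq_or_lt with rfl | hw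
    · rw [beta_lemma2 h w hm, beta_wd, if_pos rfl]
    · rw [beta_Fil h m (DA_mem (wd_mem_Fil hw)), beta_Fil h m (wd_mem_Fil hw), smul_zero]
  exact this ha

end Beta
end Laz

namespace Laz

section Pi
variable {k : Type} [CommRing k] {p : ℕ} [PC k p] {H : Type} [Group H]
  {h : ℕ → H} (hgen : Subgroup.closure (Set.range h) = ⊤)
  (π : H →* Al k p) (hπ : ∀ i, π (h i) = ex k p (xx k p i))

lemma pi_inv_mul (π : H →* Al k p) (g : H) : π g * π g⁻¹ = 1 := by
  rw [← map_mul, mul_inv_cancel, map_one]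

include hgen hπ in
lemma pi_one (g : H) : π g - 1 ∈ Fil k p 1 := by
  have hg : g ∈ Subgroup.closure (Set.range h) := hgen ▸ Subgroup.mem_top g
  induction hg using Subgroup.closure_induction with
  | mem x hx => obtain ⟨i, rfl⟩ := hx; rw [hπ]; exact ex_sub_one le_rfl (xx_mem_Fil i)
  | one => rw [map_one, sub_self]; exact Submodule.zero_mem _
  | mul x y _ _ hx hy =>
    have e : π (x * y) - 1 = (π x - 1) * (π y - 1) + (π x - 1) + (π y - 1) := by
      rw [map_mul]; noncomm_ring
    rw [e]
    exact Submodule.add_mem _ (Submodule.add_mem _ (Fil_anti (by omega) (Fil_mul hx hy)) hx) hy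
  | inv x _ hx =>
    have e : π x⁻¹ - 1 = - ((π x - 1) * π x⁻¹) := by
      rw [sub_mul, pi_inv_mul]; noncomm_ring
    rw [e]
    have := Fil_mul hx (Fil_zero (π x⁻¹))
    exact Submodule.neg_mem _ this

include hgen hπ in
lemma pi_comm {i j : ℕ} {g g' : H} (hg : π g - 1 ∈ Fil k p i) (hg' : π g' - 1 ∈ Fil k p j) :
    π ⁅g, g'⁆ - 1 - ⁅π g - 1, π g' - 1⁆ ∈ Fil k p (i + j + 1) := by
  have e0 : π ⁅g, g'⁆ * π (g' * g) = π g * π g' := by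
    rw [← map_mul, ← map_mul, commutatorElement_def]; congr 1; group
  have e1 : (π ⁅g, g'⁆ - 1) * π (g' * g) = ⁅π g - 1, π g' - 1⁆ := by
    rw [sub_mul, e0, map_mul, Ring.lie_def]; noncomm_ring
  have e2 : π ⁅g, g'⁆ - 1 - ⁅π g - 1, π g' - 1⁆ =
      ⁅π g - 1, π g' - 1⁆ * (π (g' * g)⁻¹ - 1) := by
    rw [mul_sub, ← e1, mul_assoc, pi_inv_mul]; noncomm_ring
  rw [e2]
  exact Fil_mul (Fil_lie hg hg') (pi_one hgen π hπ _)

/-- subgroup of elements deep in the filtration -/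
def dep (π : H →* Al k p) (h1 : ∀ g, π g - 1 ∈ Fil k p 1) (m : ℕ) : Subgroup H where
  carrier := {g | π g - 1 ∈ Fil k p m}
  one_mem' := by change π 1 - 1 ∈ Fil k p m; rw [map_one, sub_self]; exact Submodule.zero_mem _
  mul_mem' := by
    intro x y hx hy
    change π (x * y) - 1 ∈ Fil k p m
    have e : π (x * y) - 1 = (π x - 1) * (π y - 1) + (π x - 1) + (π y - 1) := by
      rw [map_mul]; noncomm_ring
    rw [e]
    exact Submodule.add_mem _ (Submodule.add_mem _ (Fil_anti (by omega) (Fil_mul hx hy)) hx) hy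
  inv_mem' := by
    intro x hx
    change π x⁻¹ - 1 ∈ Fil k p m
    have e : π x⁻¹ - 1 = - ((π x - 1) * π x⁻¹) := by
      rw [sub_mul, pi_inv_mul]; noncomm_ring
    rw [e]
    have := Fil_mul hx (Fil_zero (π x⁻¹))
    exact Submodule.neg_mem _ this

include hgen hπ in
lemma pi_gam {m : ℕ} {g : H} (hg : g ∈ gam H m) : π g - 1 ∈ Fil k p m := by
  have h1 := pi_one hgen π hπ
  rcases Nat.eq_zero_or_pos m with rfl | hm
  · exact Fil_zero _
  obtain ⟨q, rfl⟩ : ∃ q, m = q + 1 := ⟨m - 1, by omega⟩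
  clear hm
  have key : gam H (q + 1) ≤ dep π h1 (q + 1) := by
    clear hg
    induction q with
    | zero => intro g _; exact h1 g
    | succ q ih =>
      rw [gam_succ (by omega), Subgroup.commutator_le]
      intro x hx y _
      change π ⁅x, y⁆ - 1 ∈ Fil k p (q + 1 + 1)
      have hx' : π x - 1 ∈ Fil k p (q + 1) := ih hx
      have := Submodule.add_mem _ (Fil_anti (Nat.le_succ _) (pi_comm hgen π hπ hx' (h1 y)))
        (Fil_lie hx' (h1 y))
      rwa [sub_add_cancel] at this
  exact key hg

end Pi

section Tr
variable {N p : ℕ} [NeZero N] [PC (ZMod N) p] {H : Type} [Group H] [ExpN N H] [NilC p H]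
  {h : ℕ → H} (hgen : Subgroup.closure (Set.range h) = ⊤)
  (π : H →* Al (ZMod N) p) (hπ : ∀ i, π (h i) = ex (ZMod N) p (xx (ZMod N) p i))

/-- correspondence between elements of the lower central series and homogeneous tensors -/
structure Tr (h : ℕ → H) (π : H →* Al (ZMod N) p) (m : ℕ) (a : Al (ZMod N) p) (g : H) : Prop where
  mg : g ∈ gam H m
  ma : a ∈ Fil (ZMod N) p m
  eq : beta N p h m a = cls m g
  eq2 : π g - 1 - DA (ZMod N) p a ∈ Fil (ZMod N) p (m + 1)

include hgen hπ in
lemma Tr.deep {m : ℕ} {g : H} (hg : g ∈ gam H (m + 1)) : Tr h π m 0 g where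
  mg := gam_anti (Nat.le_succ _) hg
  ma := Submodule.zero_mem _
  eq := by rw [map_zero, cls_zero hg]
  eq2 := by rw [map_zero, sub_zero]; exact pi_gam hgen π hπ hg

include hgen hπ in
lemma Tr.mul {m : ℕ} (hm : 1 ≤ m) {a a' : Al (ZMod N) p} {g g' : H} (t : Tr h π m a g)
    (t' : Tr h π m a' g') : Tr h π m (a + a') (g * g') where
  mg := Subgroup.mul_mem _ t.mg t'.mg
  ma := Submodule.add_mem _ t.ma t'.ma
  eq := by rw [map_add, cls_mul t.mg t'.mg, t.eq, t'.eq]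
  eq2 := by
    have e : π (g * g') - 1 - DA (ZMod N) p (a + a') = (π g - 1 - DA (ZMod N) p a) +
      (π g' - 1 - DA (ZMod N) p a') + (π g - 1) * (π g' - 1) := by
      rw [map_mul, map_add]; noncomm_ring
    rw [e]
    exact Submodule.add_mem _ (Submodule.add_mem _ t.eq2 t'.eq2)
      (Fil_anti (by omega) (Fil_mul (pi_gam hgen π hπ t.mg) (pi_gam hgen π hπ t'.mg)))

include hgen hπ in
lemma Tr.inv {m : ℕ} (hm : 1 ≤ m) {a : Al (ZMod N) p} {g : H} (t : Tr h π m a g) :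
    Tr h π m (-a) g⁻¹ where
  mg := Subgroup.inv_mem _ t.mg
  ma := Submodule.neg_mem _ t.ma
  eq := by rw [map_neg, cls_inv t.mg, t.eq]
  eq2 := by
    have e : π g⁻¹ - 1 - DA (ZMod N) p (-a) = -(π g - 1 - DA (ZMod N) p a) -
      (π g - 1) * (π g⁻¹ - 1) := by
      rw [map_neg, mul_sub, sub_mul, pi_inv_mul]; noncomm_ring
    rw [e]
    exact Submodule.sub_mem _ (Submodule.neg_mem _ t.eq2)
      (Fil_anti (by omega) (Fil_mul (pi_gam hgen π hπ t.mg) 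
        (pi_gam hgen π hπ (Subgroup.inv_mem _ t.mg))))

include hgen hπ in
lemma Tr.pow {m : ℕ} (hm : 1 ≤ m) {a : Al (ZMod N) p} {g : H} (t : Tr h π m a g) (c : ℕ) :
    Tr h π m (c • a) (g ^ c) := by
  induction c with
  | zero => rw [zero_smul, pow_zero]; exact Tr.deep hgen π hπ (Subgroup.one_mem _)
  | succ c ih => rw [succ_nsmul, pow_succ]; exact ih.mul hgen π hπ hm t

include hπ in
lemma Tr.gen (i : ℕ) : Tr h π 1 (xx (ZMod N) p i) (h i) where
  mg := gam_one _
  ma := xx_mem_Fil i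
  eq := by rw [xx, beta_wd, if_pos (FreeMonoid.length_of i)]; rfl
  eq2 := by rw [hπ, DD_xx]; exact ex_sub le_rfl (xx_mem_Fil i)

include hgen hπ in
lemma Tr.comm {m : ℕ} (hm : 1 ≤ m) {a : Al (ZMod N) p} {g : H} (t : Tr h π m a g) (i : ℕ) :
    Tr h π (m + 1) (xx (ZMod N) p i * a) ⁅h i, g⁆ where
  mg := by rw [add_comm]; exact gam_comm (gam_one _) t.mg
  ma := by rw [add_comm]; exact Fil_mul (xx_mem_Fil i) t.ma
  eq := rel h hm rfl t.mg t.eq i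
  eq2 := by
    have ht := (Tr.gen (N := N) (p := p) π hπ i).eq2
    rw [DD_xx] at ht
    have hg := pi_gam hgen π hπ t.mg
    have h1 := pi_comm hgen π hπ (pi_one hgen π hπ (h i)) hg
    rw [DD_xx_mul, eps_Fil (Fil_anti hm t.ma), zero_smul, add_zero]
    have e : π ⁅h i, g⁆ - 1 - ⁅xx (ZMod N) p i, DA (ZMod N) p a⁆ =
      (π ⁅h i, g⁆ - 1 - ⁅π (h i) - 1, π g - 1⁆) + ⁅π (h i) - 1 - xx (ZMod N) p i, π g - 1⁆ +
        ⁅xx (ZMod N) p i, π g - 1 - DA (ZMod N) p a⁆ := by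
      simp only [Ring.lie_def]; noncomm_ring
    rw [e]
    refine Submodule.add_mem _ (Submodule.add_mem _ ?_ ?_) ?_
    · exact Fil_anti (by omega) h1
    · exact Fil_anti (by omega) (Fil_lie ht hg)
    · exact Fil_anti (by omega) (Fil_lie (xx_mem_Fil i) t.eq2)

/-- subgroup of elements having a tensor -/
def trS (hm : 1 ≤ m) : Subgroup H where
  carrier := {g | ∃ a, Tr h π m a g}
  one_mem' := ⟨0, Tr.deep hgen π hπ (Subgroup.one_mem _)⟩
  mul_mem' := by rintro x y ⟨a, ha⟩ ⟨b, hb⟩; exact ⟨a + b, ha.mul hgen π hπ hm hb⟩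
  inv_mem' := by rintro x ⟨a, ha⟩; exact ⟨-a, ha.inv hgen π hπ hm⟩

include hgen hπ in
lemma Tr.exists_a {m : ℕ} (hm : 1 ≤ m) {g : H} (hg : g ∈ gam H m) : ∃ a, Tr h π m a g := by
  obtain ⟨q, rfl⟩ : ∃ q, m = q + 1 := ⟨m - 1, by omega⟩
  have key : gam H (q + 1) ≤ trS hgen π hπ (m := q + 1) hm := by
    clear hg
    induction q with
    | zero =>
      intro g _
      have : Subgroup.closure (Set.range h) ≤ trS hgen π hπ (m := 0 + 1) hm := by
        rw [Subgroup.closure_le]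
        rintro _ ⟨i, rfl⟩
        exact ⟨_, Tr.gen π hπ i⟩
      exact this (hgen ▸ Subgroup.mem_top g)
    | succ q ih =>
      rw [gam_succ (by omega), Subgroup.commutator_le]
      intro g hg y _
      have ds : gam H (q + 1 + 1 + 1) ≤ trS hgen π hπ (m := q + 1 + 1) hm :=
        fun x hx => ⟨0, Tr.deep hgen π hπ hx⟩
      set S := trS hgen π hπ (m := q + 1 + 1) hm with hS
      have hy : y ∈ Subgroup.closure (Set.range h) := hgen ▸ Subgroup.mem_top y
      have conj : ∀ x y, ⁅g, x⁆ ∈ S → y * ⁅g, x⁆ * y⁻¹ ∈ S := by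
        intro x y hx
        have e : y * ⁅g, x⁆ * y⁻¹ = ⁅y, ⁅g, x⁆⁆ * ⁅g, x⁆ := by
          rw [commutatorElement_def y]; group
        rw [e]
        refine S.mul_mem (ds ?_) hx
        have := gam_comm (gam_one y) (gam_comm hg (gam_one x))
        rwa [add_comm] at this
      induction hy using Subgroup.closure_induction with
      | mem x hx => 
        obtain ⟨i, rfl⟩ := hx
        obtain ⟨a, ha⟩ := ih (by omega) hg
        rw [← commutatorElement_inv]
        exact S.inv_mem ⟨_, ha.comm hgen π hπ (by omega) i⟩
      | one => rw [commutatorElement_one_right]; exact S.one_mem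
      | mul x y _ _ hx hy =>
        have e : ⁅g, x * y⁆ = ⁅g, x⁆ * (x * ⁅g, y⁆ * x⁻¹) := by
          simp only [commutatorElement_def]; group
        rw [e]
        exact S.mul_mem (hx trivial) (conj _ _ (hy trivial))
      | inv x _ hx =>
        have e : ⁅g, x⁻¹⁆ = (x⁻¹ * ⁅g, x⁆ * x⁻¹⁻¹)⁻¹ := by
          simp only [commutatorElement_def]; group
        rw [e]
        exact S.inv_mem (conj _ _ (hx trivial))
  exact key hg

include hgen hπ in
theorem pi_injective : Function.Injective π := by
  rw [injective_iff_map_eq_one]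
  intro g hg
  have key : ∀ m, m + 1 ≤ p → g ∈ gam H (m + 1) := by
    intro m
    induction m with
    | zero => intro _; exact gam_one g
    | succ m ih =>
      intro hmp
      have hgm := ih (by omega)
      obtain ⟨a, t⟩ := Tr.exists_a hgen π hπ (by omega) hgm
      rw [← cls_eq_zero hgm, ← t.eq]
      have h2 := t.eq2
      rw [hg, sub_self, zero_sub] at h2
      have h3 := beta_Fil h _ h2
      rw [map_neg, neg_eq_zero, beta_DA h (by omega) t.ma, ← Nat.cast_smul_eq_nsmul (ZMod N)] at h3
      have hu : IsUnit ((m + 1 : ℕ) : ZMod N) := unit_of_fact PC.unit (by omega) (by omega : _ < p)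
      exact hu.smul_eq_zero.1 h3
  have hp := PC.two (k := ZMod N) (p := p)
  have := key (p - 1) (by omega)
  rw [Nat.sub_add_cancel (by omega), NilC.bot, Subgroup.mem_bot] at this
  exact this

include hgen hπ in
lemma Tr.exists_g {m : ℕ} (hm : 1 ≤ m) {a : Al (ZMod N) p} (ha : a ∈ Fil (ZMod N) p m) :
    ∃ g, Tr h π m a g := by
  have hw : ∀ w : FreeMonoid ℕ, 1 ≤ w.length → Tr h π w.length (wd (ZMod N) p w) (kap h w) := by
    intro w hw
    induction w using FreeMonoid.recOn with
    | one => simp at hw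
    | of_mul x w ih =>
      rcases Nat.eq_zero_or_pos w.length with h0 | h0
      · rw [FreeMonoid.length_eq_zero] at h0
        subst h0
        rw [mul_one]
        exact Tr.gen π hπ x
      · rw [kap_of_mul h x w h0, wd_of_mul, FreeMonoid.length_mul, FreeMonoid.length_of, add_comm]
        exact (ih h0).comm hgen π hπ h0 x
  refine Submodule.span_induction (p := fun a _ => ∃ g, Tr h π m a g) ?_ ?_ ?_ ?_ ha
  · rintro _ ⟨w, hl, rfl⟩
    rcases hl.eq_or_lt with rfl | hl
    · exact ⟨_, hw w hm⟩
    · refine ⟨1, Subgroup.one_mem _, wd_mem_Fil hl.le, ?_, ?_⟩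
      · rw [beta_Fil h m (wd_mem_Fil hl), cls_one]
      · rw [map_one, sub_self, zero_sub]
        exact Submodule.neg_mem _ (DA_mem (wd_mem_Fil hl))
  · exact ⟨1, Tr.deep hgen π hπ (Subgroup.one_mem _)⟩
  · rintro x y _ _ ⟨g, hg⟩ ⟨g', hg'⟩
    exact ⟨_, hg.mul hgen π hπ hm hg'⟩
  · rintro c x _ ⟨g, hg⟩
    refine ⟨g ^ c.val, ?_⟩
    rw [← val_smul]
    exact hg.pow hgen π hπ hm _

include hgen hπ in
theorem pi_range (g : H) : ∃ u : PP (ZMod N) p, π g = ex (ZMod N) p u := by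
  have hg : g ∈ Subgroup.closure (Set.range h) := hgen ▸ Subgroup.mem_top g
  induction hg using Subgroup.closure_induction with
  | mem x hx => obtain ⟨i, rfl⟩ := hx; exact ⟨yy _ _ i, hπ i⟩
  | one => exact ⟨0, by rw [map_one]; exact ex_zero.symm⟩
  | mul x y _ _ hx hy =>
    obtain ⟨u, hu⟩ := hx
    obtain ⟨v, hv⟩ := hy
    exact ⟨star u v, by rw [ex_star, map_mul, hu, hv]⟩
  | inv x _ hx =>
    obtain ⟨u, hu⟩ := hx
    refine ⟨-u, ?_⟩
    have h1 := pi_inv_mul π x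
    have h2 := ex_neg_mul u.2.1
    rw [hu] at h1
    calc π x⁻¹ = (ex (ZMod N) p (-(u : Al (ZMod N) p)) * ex (ZMod N) p u) * π x⁻¹ := by
          rw [h2, one_mul]
      _ = _ := by rw [mul_assoc, h1, mul_one]; rfl

include hgen hπ in
theorem pi_surj (u : PP (ZMod N) p) : ∃ g, π g = ex (ZMod N) p u := by
  have key : ∀ q m, 1 ≤ m → p ≤ m + q → ∀ u : PP (ZMod N) p, (u : Al (ZMod N) p) ∈ Fil (ZMod N) p m →
      ∃ g, π g = ex (ZMod N) p u := by
    intro q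
    induction q with
    | zero =>
      intro m _ hmp u hu
      have := Fil_eq_zero (by omega) hu
      exact ⟨1, by rw [this, map_one, ex_zero]⟩
    | succ q ih =>
      intro m hm hmp u hu
      obtain ⟨g, t⟩ := Tr.exists_g hgen π hπ hm (JJ_mem hu)
      have e2 := t.eq2
      rw [PP_eq u.2] at e2
      obtain ⟨v, hv⟩ := pi_range hgen π hπ g⁻¹
      have hw : ((star u v : PP (ZMod N) p) : Al (ZMod N) p) ∈ Fil (ZMod N) p (m + 1) := by
        refine mem_of_ex (star u v).2.1 ?_
        rw [ex_star, ← hv]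
        have e : ex (ZMod N) p u * π g⁻¹ - 1 =
          ((ex (ZMod N) p u - 1 - u) - (π g - 1 - u)) * π g⁻¹ := by
          rw [sub_sub_sub_cancel_right, sub_sub_sub_cancel_right, sub_mul, pi_inv_mul π g]
        rw [e]
        have hs : ex (ZMod N) p u - 1 - u - (π g - 1 - u) ∈ Fil (ZMod N) p (m + 1) :=
          Submodule.sub_mem _ (ex_sub hm hu) e2
        have hs2 := Fil_mul hs (Fil_zero (π g⁻¹))
        rwa [add_zero] at hs2
      obtain ⟨g', hg'⟩ := ih (m + 1) (by omega) (by omega) _ hw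
      refine ⟨g' * g, ?_⟩
      rw [map_mul, hg', ex_star, ← hv, mul_assoc, ← map_mul, inv_mul_cancel, map_one, mul_one]
  exact key p 1 le_rfl (by omega) u u.2.1

end Tr
end Laz

namespace Laz

section PG
variable (k : Type) [CommRing k] (p : ℕ) [PC k p]

/-- the free object as a group -/
def PG : Type := PP k p

noncomputable instance : Group (PG k p) where
  mul := fun u v => star (k := k) (p := p) u v
  one := (0 : PP k p)
  inv := fun u => Neg.neg (α := PP k p) u
  mul_assoc := star_assoc
  one_mul := zero_star
  mul_one := star_zero
  inv_mul_cancel := neg_star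

variable {k p}

/-- cast -/
def toPG (u : PP k p) : PG k p := u
/-- cast -/
def ofPG (u : PG k p) : PP k p := u

@[simp] lemma of_toPG (u : PP k p) : ofPG (toPG u) = u := rfl
@[simp] lemma to_ofPG (u : PG k p) : toPG (ofPG u) = u := rfl
lemma toPG_mul (u v : PP k p) : toPG u * toPG v = toPG (star u v) := rfl
lemma ofPG_mul (u v : PG k p) : ofPG (u * v) = star (ofPG u) (ofPG v) := rfl
lemma toPG_zero : toPG (0 : PP k p) = 1 := rfl
lemma toPG_neg (u : PP k p) : toPG (-u) = (toPG u)⁻¹ := rfl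

variable (k p) in
/-- the exponential as a homomorphism -/
noncomputable def exG : PG k p →* Al k p where
  toFun u := ex k p (ofPG u)
  map_one' := ex_zero
  map_mul' u v := by rw [ofPG_mul, ex_star]

lemma exG_inj : Function.Injective (exG k p) := fun _ _ h => PP_ex_inj h

lemma toPG_pow (u : PP k p) (m : ℕ) : toPG u ^ m = toPG (m • u) := by
  apply exG_inj
  rw [map_pow]
  exact (ex_pow u.2.1 m)

end PG

section Free
variable (N p : ℕ)

/-- relators -/
def relK : Subgroup (FreeGroup ℕ) :=
  Subgroup.normalClosure ({g | ∃ x, g = x ^ N} ∪ (gam (FreeGroup ℕ) p : Set (FreeGroup ℕ)))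

instance : (relK N p).Normal := Subgroup.normalClosure_normal

/-- the relatively free group -/
abbrev HH : Type := FreeGroup ℕ ⧸ relK N p

lemma gam_map {G G' : Type} [Group G] [Group G'] (f : G →* G') (m : ℕ) {x : G} (hx : x ∈ gam G m) :
    f x ∈ gam G' m := by
  have : (gam G m).map f ≤ gam G' m := Subgroup.lowerCentralSeries.map f (m - 1)
  exact this (Subgroup.mem_map_of_mem f hx)

instance : ExpN N (HH N p) := ⟨fun g => by
  induction g using QuotientGroup.induction_on with
  | H g =>
    rw [← QuotientGroup.mk_pow, QuotientGroup.eq_one_iff]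
    exact Subgroup.subset_normalClosure (Or.inl ⟨g, rfl⟩)⟩

instance : NilC p (HH N p) := ⟨by
  have h1 := Subgroup.map_lowerCentralSeries (⊤ : Subgroup (FreeGroup ℕ))
    (QuotientGroup.mk' (relK N p)) (p - 1)
  rw [Subgroup.map_top_of_surjective _ (QuotientGroup.mk'_surjective _)] at h1
  unfold gam
  rw [← h1, Subgroup.map_eq_bot_iff, QuotientGroup.ker_mk']
  exact fun x hx => Subgroup.subset_normalClosure (Or.inr hx)⟩

/-- generators -/
def hh (i : ℕ) : HH N p := QuotientGroup.mk (FreeGroup.of i)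

lemma hh_gen : Subgroup.closure (Set.range (hh N p)) = ⊤ := by
  have h1 := FreeGroup.closure_range_of ℕ
  have h2 := congrArg (Subgroup.map (QuotientGroup.mk' (relK N p))) h1
  rw [Subgroup.map_top_of_surjective _ (QuotientGroup.mk'_surjective _), MonoidHom.map_closure,
    ← Set.range_comp] at h2
  exact h2

variable {N p}

/-- universal property of the relatively free group -/
noncomputable def liftH {G : Type} [Group G] (hG : ∀ g : G, g ^ N = 1) (s : ℕ → G)
    (hc : ∀ g ∈ gam (FreeGroup ℕ) p, FreeGroup.lift s g = 1) : HH N p →* G :=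
  QuotientGroup.lift (relK N p) (FreeGroup.lift s) (by
    have : relK N p ≤ (FreeGroup.lift s).ker := by
      refine Subgroup.normalClosure_le_normal ?_
      rintro g (⟨x, rfl⟩ | hg)
      · change FreeGroup.lift s (x ^ N) = 1
        rw [map_pow, hG]
      · exact hc g hg
    exact this)

lemma liftH_hh {G : Type} [Group G] (hG : ∀ g : G, g ^ N = 1) (s : ℕ → G)
    (hc : ∀ g ∈ gam (FreeGroup ℕ) p, FreeGroup.lift s g = 1) (i : ℕ) :
    liftH hG s hc (hh N p i) = s i := by
  change FreeGroup.lift s (FreeGroup.of i) = s i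
  rw [FreeGroup.lift_apply_of]

variable [NeZero N] [PC (ZMod N) p]

lemma N_smul {M : Type*} [AddCommGroup M] [Module (ZMod N) M] (x : M) : N • x = 0 := by
  rw [← Nat.cast_smul_eq_nsmul (ZMod N), ZMod.natCast_self, zero_smul]

lemma PG_exp (g : PG (ZMod N) p) : g ^ N = 1 := by
  rw [← to_ofPG g, toPG_pow, N_smul, toPG_zero]

variable (N p) in
/-- generators of PG -/
noncomputable def yG (i : ℕ) : PG (ZMod N) p := toPG (yy (ZMod N) p i)

variable (N p) in
/-- map from the relatively free group to the Lie object -/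
noncomputable def toP : HH N p →* PG (ZMod N) p := liftH PG_exp (yG N p) (by
  intro g hg
  apply exG_inj
  rw [map_one, ← sub_eq_zero]
  have := pi_gam (FreeGroup.closure_range_of ℕ)
    ((exG (ZMod N) p).comp (FreeGroup.lift (yG N p)))
    (fun i => by
      rw [MonoidHom.comp_apply, FreeGroup.lift_apply_of]; rfl) hg
  exact Fil_eq_zero le_rfl this)

lemma toP_bij : Function.Bijective (toP N p) := by
  have hpi : ∀ i, ((exG (ZMod N) p).comp (toP N p)) (hh N p i) =
      ex (ZMod N) p (xx (ZMod N) p i) := by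
    intro i
    rw [MonoidHom.comp_apply, toP, liftH_hh]
    rfl
  constructor
  · have := pi_injective (hh_gen N p) _ hpi
    rw [MonoidHom.coe_comp] at this
    exact this.of_comp
  · intro u
    obtain ⟨g, hg⟩ := pi_surj (hh_gen N p) _ hpi (ofPG u)
    exact ⟨g, exG_inj hg⟩

lemma yG_gen : Subgroup.closure (Set.range (yG N p)) = ⊤ := by
  have h2 := congrArg (Subgroup.map (toP N p)) (hh_gen N p)
  rw [Subgroup.map_top_of_surjective _ toP_bij.2, MonoidHom.map_closure,
    ← Set.range_comp] at h2
  rw [← h2]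
  congr 2
  funext i
  rw [Function.comp_apply, toP, liftH_hh]

lemma PG_hom_ext {G : Type} [Group G] {f g : PG (ZMod N) p →* G} (h : ∀ i, f (yG N p i) = g (yG N p i)) :
    f = g := by
  refine MonoidHom.eq_of_eqOn_dense yG_gen ?_
  rintro _ ⟨i, rfl⟩
  exact h i

lemma PG_lift_exists {G : Type} [Group G] [ExpN N G] [NilC p G] (s : ℕ → G) :
    ∃ f : PG (ZMod N) p →* G, ∀ i, f (yG N p i) = s i := by
  let e := MulEquiv.ofBijective (toP N p) toP_bij
  have hc : ∀ g ∈ gam (FreeGroup ℕ) p, FreeGroup.lift s g = 1 := by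
    intro g hg
    have := gam_map (FreeGroup.lift s) p hg
    rwa [NilC.bot, Subgroup.mem_bot] at this
  refine ⟨(liftH (N := N) ExpN.pow s hc).comp e.symm.toMonoidHom, fun i => ?_⟩
  have : e (hh N p i) = yG N p i := by
    have h0 : e (hh N p i) = toP N p (hh N p i) := MulEquiv.ofBijective_apply _ _ _
    rw [h0, toP, liftH_hh]
  rw [← this]
  simp [liftH_hh]

/-- the universal homomorphism -/
noncomputable def phi {G : Type} [Group G] [ExpN N G] [NilC p G] (s : ℕ → G) :
    PG (ZMod N) p →* G := (PG_lift_exists s).choose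

lemma phi_yG {G : Type} [Group G] [ExpN N G] [NilC p G] (s : ℕ → G) (i : ℕ) :
    phi s (yG N p i) = s i := (PG_lift_exists s).choose_spec i

/-- elements of the second term -/
lemma PG_gam_two {u : PP (ZMod N) p} : toPG u ∈ gam (PG (ZMod N) p) 2 ↔ (u : Al (ZMod N) p) ∈ Fil (ZMod N) p 2 := by
  have hy : ∀ i, exG (ZMod N) p (yG N p i) = ex (ZMod N) p (xx (ZMod N) p i) := fun i => rfl
  constructor
  · intro h
    exact mem_of_ex u.2.1 (pi_gam yG_gen (exG (ZMod N) p) hy h)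
  · intro h
    have hpi : ∀ i, ((exG (ZMod N) p).comp (toP N p)) (hh N p i) =
        ex (ZMod N) p (xx (ZMod N) p i) := by
      intro i
      rw [MonoidHom.comp_apply, toP, liftH_hh]
      rfl
    obtain ⟨g, hg⟩ := toP_bij.2 (toPG u)
    rw [← hg]
    apply gam_map
    obtain ⟨a, t⟩ := Tr.exists_a (hh_gen N p) _ hpi le_rfl (gam_one g)
    rw [← cls_eq_zero (gam_one g), ← t.eq]
    have h2 := t.eq2
    rw [MonoidHom.comp_apply, hg] at h2
    have h3 : ex (ZMod N) p u - 1 ∈ Fil (ZMod N) p 2 := ex_sub_one (by omega) h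
    have h4 : DA (ZMod N) p a ∈ Fil (ZMod N) p 2 := by
      have := Submodule.sub_mem _ h3 h2
      have e : ex (ZMod N) p u - 1 - (exG (ZMod N) p (toPG u) - 1 - DA (ZMod N) p a) =
        DA (ZMod N) p a := sub_sub_cancel _ _
      rwa [e] at this
    have h5 := beta_DA (hh N p) le_rfl t.ma
    rw [beta_Fil _ _ h4, one_smul] at h5
    exact h5.symm

end Free
end Laz

namespace Laz

/-- iterated left bracket -/
def lfold {L : Type} [LieRing L] (l : List L) (v : L) : L := l.foldr (fun a b => ⁅a, b⁆) v

@[simp] lemma lfold_nil {L : Type} [LieRing L] (v : L) : lfold [] v = v := rfl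
@[simp] lemma lfold_cons {L : Type} [LieRing L] (a : L) (l : List L) (v : L) :
    lfold (a :: l) v = ⁅a, lfold l v⁆ := rfl

/-- Lie rings in which brackets of length p vanish -/
class NilL (p : ℕ) (L : Type) [LieRing L] : Prop where
  nil : ∀ (l : List L) (v : L), p ≤ l.length + 1 → lfold l v = 0

/-- the Lie algebra as a group -/
@[nolint unusedArguments]
def GrL (k : Type) [CommRing k] (p : ℕ) [PC k p] (L : Type) [LieRing L] [LieAlgebra k L]
    [NilL p L] : Type := L

/-- the group as a Lie ring -/
@[nolint unusedArguments]
def LG (N p : ℕ) (G : Type) [NeZero N] [PC (ZMod N) p] [Group G] [ExpN N G] [NilC p G] : Type := G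

section LG
variable {k : Type} [CommRing k] {p : ℕ}

lemma fold_eq_lfold {L : Type} [LieRing L] [LieAlgebra k L] (f : ℕ → L) (w : FreeMonoid ℕ) (v : L) :
    fold k f w v = lfold (w.toList.map f) v := by
  induction w using FreeMonoid.recOn with
  | one => simp [fold]
  | of_mul i w ih => rw [fold_of_mul, ih]; simp

lemma NilL.nl {L : Type} [LieRing L] [LieAlgebra k L] [NilL p L] (f : ℕ → L) : Nl k p f where
  h1 w hw v := by
    rw [fold_eq_lfold]
    refine NilL.nil (p := p) _ _ ?_
    rw [List.length_map]
    exact le_trans hw (Nat.le_succ _)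
  h2 w hw v := by
    rw [fold_eq_lfold]
    refine NilL.nil (p := p) _ _ ?_
    rw [List.length_map]
    exact hw

variable [PC k p]

instance : NilL p (PP k p) := ⟨by
  intro l v h
  have key : ∀ l : List (PP k p), ((lfold l v : PP k p) : Al k p) ∈ Fil k p (l.length + 1) := by
    intro l
    induction l with
    | nil => exact v.2.1
    | cons a l ih =>
      rw [lfold_cons, List.length_cons]
      have := Fil_lie a.2.1 ih
      rwa [add_comm 1] at this
  exact Subtype.ext (Fil_eq_zero h (key l))⟩

/-- sequence from a list -/
def sq {L : Type} (z : L) (l : List L) : ℕ → L := fun i => l.getD i z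

variable {L L' : Type} [LieRing L] [LieAlgebra k L] [NilL p L] [LieRing L'] [LieAlgebra k L'] [NilL p L']

variable (k p) in
/-- universal Lie homomorphism -/
noncomputable def psiL (s : ℕ → L) : PP k p →ₗ⁅k⁆ L := psi (NilL.nl s)

lemma psiL_yy (s : ℕ → L) (i : ℕ) : psiL k p s (yy k p i) = s i := psi_yy _ i

lemma comp_psiL (s : ℕ → L) (f : L →ₗ⁅k⁆ L') (u : PP k p) :
    f (psiL k p s u) = psiL k p (fun i => f (s i)) u := by
  have : f.comp (psiL k p s) = psiL k p (fun i => f (s i)) := by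
    apply PP_hom_ext
    intro i
    rw [LieHom.comp_apply, psiL_yy, psiL_yy]
  exact DFunLike.congr_fun this u

lemma sq_map {L L' : Type} (f : L → L') (z : L) (l : List L) :
    (fun i => f (sq z l i)) = sq (f z) (l.map f) := by
  funext i
  simp only [sq]
  induction l generalizing i with
  | nil => simp
  | cons a l ih =>
    cases i with
    | zero => simp
    | succ i => simp [ih i]

variable (k p) in
/-- star on a Lie algebra -/
noncomputable def lstar (a b : L) : L := psiL k p (sq 0 [a, b]) (star (yy k p 0) (yy k p 1))

lemma lstar_map (f : L →ₗ⁅k⁆ L') (a b : L) : f (lstar k p a b) = lstar k p (f a) (f b) := by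
  rw [lstar, comp_psiL, sq_map, map_zero]
  rfl

lemma lstar_PP (u v : PP k p) : lstar k p u v = star u v := by
  rw [lstar, map_star_PP, psiL_yy, psiL_yy]
  rfl

lemma hom_star (f : PP k p →ₗ⁅k⁆ L) (u v : PP k p) : f (star u v) = lstar k p (f u) (f v) := by
  rw [← lstar_PP, lstar_map]

variable (k p) in
/-- cast -/
def toGrL (a : L) : GrL k p L := a
/-- cast -/
def ofGrL (a : GrL k p L) : L := a

noncomputable instance : Group (GrL k p L) where
  mul a b := toGrL k p (lstar k p (ofGrL a) (ofGrL b))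
  one := toGrL k p (0 : L)
  inv a := toGrL k p (-(ofGrL a))
  mul_assoc a b c := by
    change lstar k p (lstar k p (ofGrL a) (ofGrL b)) (ofGrL c) =
      lstar k p (ofGrL a) (lstar k p (ofGrL b) (ofGrL c))
    have h0 : ofGrL a = psiL k p (sq 0 [ofGrL a, ofGrL b, ofGrL c]) (yy k p 0) := by rw [psiL_yy]; rfl
    have h1 : ofGrL b = psiL k p (sq 0 [ofGrL a, ofGrL b, ofGrL c]) (yy k p 1) := by rw [psiL_yy]; rfl
    have h2 : ofGrL c = psiL k p (sq 0 [ofGrL a, ofGrL b, ofGrL c]) (yy k p 2) := by rw [psiL_yy]; rfl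
    generalize psiL k p (sq 0 [ofGrL a, ofGrL b, ofGrL c]) = f at h0 h1 h2
    rw [h0, h1, h2, ← hom_star, ← hom_star, ← hom_star, ← hom_star, star_assoc]
  one_mul a := by
    change lstar k p (0 : L) (ofGrL a) = ofGrL a
    have h0 : ofGrL a = psiL k p (sq 0 [ofGrL a]) (yy k p 0) := by rw [psiL_yy]; rfl
    generalize psiL k p (sq 0 [ofGrL a]) = f at h0
    rw [h0, ← map_zero f, ← hom_star, zero_star]
  mul_one a := by
    change lstar k p (ofGrL a) (0 : L) = ofGrL a
    have h0 : ofGrL a = psiL k p (sq 0 [ofGrL a]) (yy k p 0) := by rw [psiL_yy]; rfl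
    generalize psiL k p (sq 0 [ofGrL a]) = f at h0
    rw [h0, ← map_zero f, ← hom_star, star_zero]
  inv_mul_cancel a := by
    change lstar k p (-(ofGrL a)) (ofGrL a) = (0 : L)
    have h0 : ofGrL a = psiL k p (sq 0 [ofGrL a]) (yy k p 0) := by rw [psiL_yy]; rfl
    generalize psiL k p (sq 0 [ofGrL a]) = f at h0
    rw [h0, ← map_neg f, ← hom_star, neg_star, map_zero]

lemma toGrL_mul (a b : L) : toGrL k p a * toGrL k p b = toGrL k p (lstar k p a b) := rfl
lemma toGrL_zero : toGrL k p (0 : L) = 1 := rfl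

/-- a Lie homomorphism as a group homomorphism -/
noncomputable def homG (f : PP k p →ₗ⁅k⁆ L) : PG k p →* GrL k p L where
  toFun u := toGrL k p (f (ofPG u))
  map_one' := by
    change f 0 = (0 : L)
    exact map_zero f
  map_mul' u v := by
    rw [ofPG_mul, hom_star, toGrL_mul]

lemma homG_apply (f : PP k p →ₗ⁅k⁆ L) (u : PP k p) : homG f (toPG u) = toGrL k p (f u) := rfl

/-- a Lie homomorphism as a group homomorphism -/
noncomputable def homPG (f : PP k p →ₗ⁅k⁆ PP k p) : PG k p →* PG k p where
  toFun u := toPG (f (ofPG u))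
  map_one' := by
    change f 0 = 0
    exact map_zero f
  map_mul' u v := by
    rw [ofPG_mul, map_star_PP, toPG_mul]

lemma homPG_apply (f : PP k p →ₗ⁅k⁆ PP k p) (u : PP k p) : homPG f (toPG u) = toPG (f u) := rfl

lemma toGrL_pow (a : L) (m : ℕ) : toGrL k p a ^ m = toGrL k p (m • a) := by
  have h0 : a = psiL k p (sq 0 [a]) (yy k p 0) := by rw [psiL_yy]; rfl
  generalize psiL k p (sq 0 [a]) = f at h0
  rw [h0, ← homG_apply, ← map_pow, toPG_pow, homG_apply, map_nsmul]

/-- functoriality -/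
noncomputable def GrLmap (f : L ≃ₗ⁅k⁆ L') : GrL k p L ≃* GrL k p L' where
  toFun a := toGrL k p (f (ofGrL a))
  invFun a := toGrL k p (f.symm (ofGrL a))
  left_inv a := f.symm_apply_apply (ofGrL a)
  right_inv a := f.apply_symm_apply (ofGrL a)
  map_mul' a b := lstar_map f.toLieHom (ofGrL a) (ofGrL b)

end LG

section GrL
variable {N p : ℕ} [NeZero N] [PC (ZMod N) p]
variable {G G' : Type} [Group G] [ExpN N G] [NilC p G] [Group G'] [ExpN N G'] [NilC p G']

lemma comp_phi (s : ℕ → G) (f : G →* G') (u : PG (ZMod N) p) :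
    f (phi s u) = phi (fun i => f (s i)) u := by
  have : f.comp (phi s) = phi (N := N) (p := p) (fun i => f (s i)) := by
    apply PG_hom_ext
    intro i
    rw [MonoidHom.comp_apply, phi_yG, phi_yG]
  exact DFunLike.congr_fun this u

lemma hom_phi (f : PG (ZMod N) p →* G) (θ : PP (ZMod N) p →ₗ⁅ZMod N⁆ PP (ZMod N) p) (u : PP (ZMod N) p) :
    f (toPG (θ u)) = phi (fun i => f (toPG (θ (yy _ _ i)))) (toPG u) := by
  have : f.comp (homPG θ) = phi (N := N) (p := p) (fun i => f (toPG (θ (yy _ _ i)))) := by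
    apply PG_hom_ext
    intro i
    rw [MonoidHom.comp_apply, phi_yG]
    rfl
  exact DFunLike.congr_fun this (toPG u)

variable (N p) in
/-- addition on a group -/
noncomputable def gadd (a b : G) : G := phi (sq 1 [a, b]) (toPG (yy (ZMod N) p 0 + yy (ZMod N) p 1))

variable (N p) in
/-- bracket on a group -/
noncomputable def glie (a b : G) : G := phi (sq 1 [a, b]) (toPG ⁅yy (ZMod N) p 0, yy (ZMod N) p 1⁆)

lemma gadd_map (f : G →* G') (a b : G) : f (gadd N p a b) = gadd N p (f a) (f b) := by
  rw [gadd, comp_phi, sq_map, map_one]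
  rfl

lemma glie_map (f : G →* G') (a b : G) : f (glie N p a b) = glie N p (f a) (f b) := by
  rw [glie, comp_phi, sq_map, map_one]
  rfl

lemma hom_gadd (f : PG (ZMod N) p →* G) (u v : PP (ZMod N) p) :
    f (toPG (u + v)) = gadd N p (f (toPG u)) (f (toPG v)) := by
  have h := hom_phi f (psiL (ZMod N) p (sq 0 [u, v])) (yy _ _ 0 + yy _ _ 1)
  simp only [psiL_yy, map_add] at h
  change f (toPG (u + v)) = _ at h
  rw [h, gadd, sq_map (fun x : PP (ZMod N) p => f (toPG x)), toPG_zero, map_one]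
  rfl

lemma hom_glie (f : PG (ZMod N) p →* G) (u v : PP (ZMod N) p) :
    f (toPG ⁅u, v⁆) = glie N p (f (toPG u)) (f (toPG v)) := by
  have h := hom_phi f (psiL (ZMod N) p (sq 0 [u, v])) ⁅yy (ZMod N) p 0, yy (ZMod N) p 1⁆
  simp only [psiL_yy, LieHom.map_lie] at h
  change f (toPG ⁅u, v⁆) = _ at h
  rw [h, glie, sq_map (fun x : PP (ZMod N) p => f (toPG x)), toPG_zero, map_one]
  rfl

variable (N p) in
/-- cast -/
def toLG (a : G) : LG N p G := a
/-- cast -/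
def ofLG (a : LG N p G) : G := a

lemma ex_phi3 (a b c : G) : ∃ f : PG (ZMod N) p →* G, f (toPG (yy _ _ 0)) = a ∧
    f (toPG (yy _ _ 1)) = b ∧ f (toPG (yy _ _ 2)) = c :=
  ⟨phi (sq 1 [a, b, c]), phi_yG (sq 1 [a, b, c]) 0, phi_yG (sq 1 [a, b, c]) 1,
    phi_yG (sq 1 [a, b, c]) 2⟩

noncomputable instance : Add (LG N p G) := ⟨fun a b => toLG N p (gadd N p (ofLG a) (ofLG b))⟩
noncomputable instance : Zero (LG N p G) := ⟨toLG N p (1 : G)⟩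
noncomputable instance : Neg (LG N p G) := ⟨fun a => toLG N p ((ofLG a)⁻¹)⟩

noncomputable instance : AddCommGroup (LG N p G) where
  nsmul := nsmulRec
  zsmul := zsmulRec
  add_assoc a b c := by
    change gadd N p (gadd N p (ofLG a) (ofLG b)) (ofLG c) =
      gadd N p (ofLG a) (gadd N p (ofLG b) (ofLG c))
    obtain ⟨f, h0, h1, h2⟩ := ex_phi3 (N := N) (p := p) (ofLG a) (ofLG b) (ofLG c)
    rw [← h0, ← h1, ← h2]
    simp only [← hom_gadd, add_assoc]
  zero_add a := by
    change gadd N p (1 : G) (ofLG a) = ofLG a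
    obtain ⟨f, h0, h1, h2⟩ := ex_phi3 (N := N) (p := p) (ofLG a) 1 1
    rw [← h0, ← map_one f, ← toPG_zero, ← hom_gadd, zero_add]
  add_zero a := by
    change gadd N p (ofLG a) (1 : G) = ofLG a
    obtain ⟨f, h0, h1, h2⟩ := ex_phi3 (N := N) (p := p) (ofLG a) 1 1
    rw [← h0, ← map_one f, ← toPG_zero, ← hom_gadd, add_zero]
  neg_add_cancel a := by
    change gadd N p ((ofLG a)⁻¹) (ofLG a) = (1 : G)
    obtain ⟨f, h0, h1, h2⟩ := ex_phi3 (N := N) (p := p) (ofLG a) 1 1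
    rw [← h0, ← map_inv f, ← toPG_neg, ← hom_gadd, neg_add_cancel, toPG_zero, map_one]
  add_comm a b := by
    change gadd N p (ofLG a) (ofLG b) = gadd N p (ofLG b) (ofLG a)
    obtain ⟨f, h0, h1, h2⟩ := ex_phi3 (N := N) (p := p) (ofLG a) (ofLG b) 1
    rw [← h0, ← h1, ← hom_gadd, ← hom_gadd, add_comm]

noncomputable instance : LieRing (LG N p G) where
  bracket a b := toLG N p (glie N p (ofLG a) (ofLG b))
  add_lie a b c := by
    change glie N p (gadd N p (ofLG a) (ofLG b)) (ofLG c) =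
      gadd N p (glie N p (ofLG a) (ofLG c)) (glie N p (ofLG b) (ofLG c))
    obtain ⟨f, h0, h1, h2⟩ := ex_phi3 (N := N) (p := p) (ofLG a) (ofLG b) (ofLG c)
    rw [← h0, ← h1, ← h2]
    simp only [← hom_gadd, ← hom_glie, add_lie]
  lie_add a b c := by
    change glie N p (ofLG a) (gadd N p (ofLG b) (ofLG c)) =
      gadd N p (glie N p (ofLG a) (ofLG b)) (glie N p (ofLG a) (ofLG c))
    obtain ⟨f, h0, h1, h2⟩ := ex_phi3 (N := N) (p := p) (ofLG a) (ofLG b) (ofLG c)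
    rw [← h0, ← h1, ← h2]
    simp only [← hom_gadd, ← hom_glie, lie_add]
  lie_self a := by
    change glie N p (ofLG a) (ofLG a) = (1 : G)
    obtain ⟨f, h0, h1, h2⟩ := ex_phi3 (N := N) (p := p) (ofLG a) 1 1
    rw [← h0, ← hom_glie, lie_self, toPG_zero, map_one]
  leibniz_lie a b c := by
    change glie N p (ofLG a) (glie N p (ofLG b) (ofLG c)) =
      gadd N p (glie N p (glie N p (ofLG a) (ofLG b)) (ofLG c))
        (glie N p (ofLG b) (glie N p (ofLG a) (ofLG c)))
    obtain ⟨f, h0, h1, h2⟩ := ex_phi3 (N := N) (p := p) (ofLG a) (ofLG b) (ofLG c)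
    rw [← h0, ← h1, ← h2]
    simp only [← hom_gadd, ← hom_glie]
    rw [leibniz_lie]

/-- group homomorphism as additive homomorphism -/
noncomputable def homA (f : PG (ZMod N) p →* G) : PP (ZMod N) p →+ LG N p G where
  toFun u := toLG N p (f (toPG u))
  map_zero' := map_one f
  map_add' u v := hom_gadd f u v

lemma homA_lie (f : PG (ZMod N) p →* G) (u v : PP (ZMod N) p) :
    homA f ⁅u, v⁆ = ⁅homA f u, homA f v⁆ := hom_glie f u v

lemma toLG_nsmul (a : G) (m : ℕ) : m • toLG N p a = toLG N p (a ^ m) := by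
  obtain ⟨f, h0, h1, h2⟩ := ex_phi3 (N := N) (p := p) a 1 1
  have : toLG N p a = homA f (yy _ _ 0) := h0.symm
  rw [this, ← map_nsmul, ← h0, ← map_pow, toPG_pow]
  rfl

lemma LG_N (a : LG N p G) : N • a = 0 := by
  have := toLG_nsmul (N := N) (p := p) (ofLG a) N
  rw [ExpN.pow] at this
  exact this

/-- Lie algebra structure over ZMod N -/
@[reducible] def zLie (N : ℕ) {L : Type} [LieRing L] (h : ∀ x : L, N • x = 0) : LieAlgebra (ZMod N) L :=
  { AddCommGroup.zmodModule h with
    lie_smul := fun c x y => by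
      letI := AddCommGroup.zmodModule h
      change ⁅x, c • y⁆ = c • ⁅x, y⁆
      obtain ⟨m, rfl⟩ := ZMod.intCast_surjective c
      rw [Int.cast_smul_eq_zsmul, Int.cast_smul_eq_zsmul, lie_zsmul] }

noncomputable instance : LieAlgebra (ZMod N) (LG N p G) := zLie N LG_N

/-- group homomorphism as Lie homomorphism -/
noncomputable def homL (f : PG (ZMod N) p →* G) : PP (ZMod N) p →ₗ⁅ZMod N⁆ LG N p G :=
  { AddMonoidHom.toZModLinearMap N (homA f) with
    map_lie' := fun {u v} => homA_lie f u v }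

lemma homL_apply (f : PG (ZMod N) p →* G) (u : PP (ZMod N) p) : homL f u = toLG N p (f (toPG u)) := rfl

lemma lfold_hom {L L' : Type} [LieRing L] [LieRing L'] (f : L →+ L') (hf : ∀ a b, f ⁅a, b⁆ = ⁅f a, f b⁆)
    (l : List L) (v : L) : f (lfold l v) = lfold (l.map f) (f v) := by
  induction l with
  | nil => rfl
  | cons a l ih => rw [lfold_cons, hf, ih]; rfl

instance : NilL p (LG N p G) := ⟨by
  intro l v h
  let f := phi (N := N) (p := p) (G := G) (sq 1 ((v :: l).map ofLG))
  have h1 : ∀ i, homA f (yy _ _ i) = sq 0 (v :: l) i := by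
    intro i
    change toLG N p (f (yG N p i)) = _
    rw [phi_yG]
    have := congrFun (sq_map (toLG N p) 1 ((v :: l).map ofLG)) i
    refine this.trans ?_
    congr 1
    rw [List.map_map]
    exact List.map_id _
  have h2 : l = ((List.range l.length).map fun i => yy (ZMod N) p (i + 1)).map (homA f) := by
    rw [List.map_map]
    refine List.ext_getElem (by simp) fun i h1' h2' => ?_
    simp [h1, sq, h1']
  have h3 : v = homA f (yy _ _ 0) := by rw [h1]; rfl
  rw [h2, h3, ← lfold_hom _ (homA_lie f), NilL.nil (p := p), map_zero]
  simpa using h⟩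

/-- functoriality -/
noncomputable def LGmap (f : G ≃* G') : LG N p G ≃ₗ⁅ZMod N⁆ LG N p G' :=
  let f0 : LG N p G →+ LG N p G' :=
    { toFun := fun a => toLG N p (f (ofLG a))
      map_zero' := map_one f
      map_add' := fun a b => gadd_map f.toMonoidHom (ofLG a) (ofLG b) }
  { AddMonoidHom.toZModLinearMap N f0 with
    map_lie' := fun {a b} => glie_map f.toMonoidHom (ofLG a) (ofLG b)
    invFun := fun a => toLG N p (f.symm (ofLG a))
    left_inv := fun a => f.symm_apply_apply (ofLG a)
    right_inv := fun a => f.apply_symm_apply (ofLG a) }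

end GrL

section Round
variable {N p : ℕ} [NeZero N] [PC (ZMod N) p]

/-- round trip on groups -/
noncomputable def roundG (G : Type) [Group G] [ExpN N G] [NilC p G] : GrL (ZMod N) p (LG N p G) ≃* G where
  toFun a := ofLG (ofGrL a)
  invFun a := toGrL (ZMod N) p (toLG N p a)
  left_inv _ := rfl
  right_inv _ := rfl
  map_mul' a b := by
    change ofLG (psiL (ZMod N) p (sq 0 [ofGrL a, ofGrL b]) (star (yy _ _ 0) (yy _ _ 1))) = _
    have : psiL (ZMod N) p (sq 0 [ofGrL a, ofGrL b]) = homL (phi (sq 1 [ofLG (ofGrL a), ofLG (ofGrL b)])) := by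
      apply PP_hom_ext
      intro i
      rw [psiL_yy, homL_apply]
      change _ = toLG N p (phi (sq 1 [ofLG (ofGrL a), ofLG (ofGrL b)]) (yG N p i))
      rw [phi_yG]
      rfl
    rw [this, homL_apply, ← toPG_mul, map_mul]
    have h0 := phi_yG (N := N) (p := p) (sq 1 [ofLG (ofGrL a), ofLG (ofGrL b)]) 0
    have h1 := phi_yG (N := N) (p := p) (sq 1 [ofLG (ofGrL a), ofLG (ofGrL b)]) 1
    exact congrArg₂ (· * ·) h0 h1

variable {L : Type} [LieRing L] [LieAlgebra (ZMod N) L] [NilL p L]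

instance : ExpN N (GrL (ZMod N) p L) := ⟨fun g => by
  have := toGrL_pow (k := ZMod N) (p := p) (ofGrL g) N
  rw [N_smul] at this
  exact this⟩

lemma phi_eq_homG [NilC p (GrL (ZMod N) p L)] (a b : L) :
    phi (sq 1 [toGrL (ZMod N) p a, toGrL (ZMod N) p b]) = homG (psiL (ZMod N) p (sq 0 [a, b])) := by
  apply PG_hom_ext
  intro i
  rw [phi_yG, yG, homG_apply, psiL_yy]
  rfl

variable (L) in
/-- round trip on Lie algebras -/
noncomputable def roundL [NilC p (GrL (ZMod N) p L)] : LG N p (GrL (ZMod N) p L) ≃+ L where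
  toFun a := ofGrL (ofLG a)
  invFun a := toLG N p (toGrL (ZMod N) p a)
  left_inv _ := rfl
  right_inv _ := rfl
  map_add' a b := by
    change ofGrL (phi (sq 1 [toGrL (ZMod N) p (ofGrL (ofLG a)), toGrL (ZMod N) p (ofGrL (ofLG b))])
      (toPG (yy _ _ 0 + yy _ _ 1))) = _
    rw [phi_eq_homG, homG_apply, map_add, psiL_yy, psiL_yy]
    rfl

lemma roundL_lie [NilC p (GrL (ZMod N) p L)] (a b : LG N p (GrL (ZMod N) p L)) :
    roundL L ⁅a, b⁆ = ⁅roundL L a, roundL L b⁆ := by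
  change ofGrL (phi (sq 1 [toGrL (ZMod N) p (ofGrL (ofLG a)), toGrL (ZMod N) p (ofGrL (ofLG b))])
      (toPG ⁅yy _ _ 0, yy _ _ 1⁆)) = _
  rw [phi_eq_homG, homG_apply, LieHom.map_lie, psiL_yy, psiL_yy]
  rfl

end Round
end Laz

namespace Laz

section Cls

lemma group_class {p : ℕ} (hp : p.Prime) (n : ℕ) : ∀ (G : Type) [Group G], Nat.card G = p ^ n →
    Group.IsNilpotent G ∧ Group.nilpotencyClass G ≤ max (n - 1) 1 := by
  haveI := Fact.mk hp
  induction n using Nat.strong_induction_on with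
  | _ n ih =>
  intro G _ hG
  haveI : Finite G := Nat.finite_of_card_ne_zero (by rw [hG]; exact pow_ne_zero _ hp.ne_zero)
  have hpG : IsPGroup p G := IsPGroup.of_card hG
  haveI := hpG.isNilpotent
  refine ⟨inferInstance, ?_⟩
  rcases subsingleton_or_nontrivial G with hs | hs
  · have := (Group.nilpotencyClass_zero_iff_subsingleton (G := G)).2 hs
    omega
  obtain ⟨m, hm⟩ : ∃ m, Nat.card (G ⧸ Subgroup.center G) = p ^ m := by
    have : IsPGroup p (G ⧸ Subgroup.center G) := hpG.to_quotient _
    exact IsPGroup.iff_card.1 this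
  have hmn : m < n := by
    have h1 := Subgroup.card_eq_card_quotient_mul_card_subgroup (Subgroup.center G)
    haveI : Nontrivial (Subgroup.center G) := hpG.center_nontrivial
    have h2 : 1 < Nat.card (Subgroup.center G) := Finite.one_lt_card
    rw [hG, hm] at h1
    have h3 : p ^ m < p ^ n := by
      rw [h1]
      exact lt_mul_of_one_lt_right (pow_pos hp.pos _) h2
    exact (Nat.pow_lt_pow_iff_right hp.one_lt).1 h3
  have h4 := (ih m hmn _ hm).2
  rw [Group.nilpotencyClass_quotient_center] at h4
  rcases Nat.lt_or_ge m 2 with h | h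
  · have : m = 0 ∨ m = 1 := by omega
    rcases this with rfl | rfl
    · have h5 : Subsingleton (G ⧸ Subgroup.center G) := by
        rw [pow_zero] at hm
        exact (Nat.card_eq_one_iff_unique.1 hm).1
      have h6 := Group.nilpotencyClass_zero_iff_subsingleton.2 h5
      rw [Group.nilpotencyClass_quotient_center] at h6
      omega
    · rw [pow_one] at hm
      haveI := isCyclic_of_prime_card hm
      have h6 := MonoidHom.isMulCommutative_of_isCyclic_of_ker_le_center
        (QuotientGroup.mk' (Subgroup.center G)) (by rw [QuotientGroup.ker_mk'])
      have h7 : Subgroup.center G = ⊤ := by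
        rw [Subgroup.eq_top_iff']
        intro x
        rw [Subgroup.mem_center_iff]
        intro g
        exact h6.is_comm.comm g x
      have h8 : Nat.card (G ⧸ Subgroup.center G) = 1 := by
        rw [h7]
        exact Nat.card_eq_one_iff_unique.2 ⟨QuotientGroup.subsingleton_quotient_top, ⟨1⟩⟩
      exact absurd (hm.symm.trans h8) hp.ne_one
  · omega

lemma group_NilC {p n : ℕ} (hp : p.Prime) (hn : n ≤ p) (G : Type) [Group G] (hG : Nat.card G = p ^ n) :
    NilC p G := ⟨by
  obtain ⟨h1, h2⟩ := group_class hp n G hG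
  have := hp.two_le
  rw [gam, Subgroup.lowerCentralSeries_eq_bot_iff_nilpotencyClass_le]
  omega⟩

/-- nilpotency in terms of iterated brackets -/
def NilE (L : Type) [LieRing L] : Prop := ∃ m, ∀ (l : List L) (v : L), m ≤ l.length → lfold l v = 0

lemma lfold_add {L : Type} [LieRing L] (l : List L) (v w : L) : lfold l (v + w) = lfold l v + lfold l w := by
  induction l with
  | nil => rfl
  | cons a l ih => rw [lfold_cons, ih, lie_add]; rfl

lemma lfold_zsmul {L : Type} [LieRing L] (l : List L) (c : ℤ) (w : L) : lfold l (c • w) = c • lfold l w := by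
  induction l with
  | nil => rfl
  | cons a l ih => rw [lfold_cons, ih, lie_zsmul]; rfl

lemma lfold_zero {L : Type} [LieRing L] (l : List L) : lfold l (0 : L) = 0 := by
  induction l with
  | nil => rfl
  | cons a l ih => rw [lfold_cons, ih, lie_zero]

lemma lfold_append {L : Type} [LieRing L] (l l' : List L) (v : L) :
    lfold (l ++ l') v = lfold l (lfold l' v) := by
  simp [lfold, List.foldr_append]

lemma nilE_iff (L : Type) [LieRing L] : LieRing.IsNilpotent L ↔ NilE L := by
  constructor
  · rintro ⟨m, hm⟩
    refine ⟨m, fun l v h => ?_⟩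
    have key : ∀ l : List L, lfold l v ∈ LieModule.lowerCentralSeries ℤ L L l.length := by
      intro l
      induction l with
      | nil => simp
      | cons a l ih =>
        rw [lfold_cons, List.length_cons, LieModule.lowerCentralSeries_succ]
        exact LieSubmodule.lie_mem_lie (LieSubmodule.mem_top a) ih
    have h2 := LieModule.antitone_lowerCentralSeries ℤ L L h (key l)
    rw [hm] at h2
    simpa using h2
  · rintro ⟨m, hm⟩
    refine ⟨m, ?_⟩
    have key : ∀ i, ∀ x ∈ LieModule.lowerCentralSeries ℤ L L i, ∀ l : List L, m ≤ l.length + i →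
        lfold l x = 0 := by
      intro i
      induction i with
      | zero => intro x _ l hl; exact hm l x hl
      | succ i ih =>
        intro x hx l hl
        rw [LieModule.lowerCentralSeries_succ, ← LieSubmodule.mem_toSubmodule,
          LieSubmodule.lieIdeal_oper_eq_linear_span'] at hx
        induction hx using Submodule.span_induction with
        | mem x h =>
          obtain ⟨a, -, y, hy, rfl⟩ := h
          have := ih y hy (l ++ [a]) (by rw [List.length_append, List.length_singleton]; omega)
          rwa [lfold_append] at this
        | zero => exact lfold_zero l
        | add x y _ _ hx hy => rw [lfold_add, hx, hy, add_zero]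
        | smul c x _ hx => rw [lfold_zsmul, hx, smul_zero]
    rw [eq_bot_iff]
    intro x hx
    have := key m x hx [] (by simp)
    simpa using this

lemma lie_class {p : ℕ} (hp : p.Prime) (n : ℕ) : ∀ (L : Type) [LieRing L], Nat.card L = p ^ n →
    NilE L → ∀ (l : List L) (v : L), max (n - 1) 1 ≤ l.length → lfold l v = 0 := by
  haveI := Fact.mk hp
  induction n using Nat.strong_induction_on with
  | _ n ih =>
  intro L _ hL hnil l v hl
  haveI : Finite L := Nat.finite_of_card_ne_zero (by rw [hL]; exact pow_ne_zero _ hp.ne_zero)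
  rcases subsingleton_or_nontrivial L with hs | hs
  · exact Subsingleton.elim _ _
  let Z : LieIdeal ℤ L := LieAlgebra.center ℤ L
  have hZ : ∀ x, x ∈ Z ↔ ∀ a : L, ⁅a, x⁆ = 0 := fun x => LieModule.mem_maxTrivSubmodule ℤ L L x
  have hZn : ∃ x ∈ Z, x ≠ 0 := by
    classical
    have h1 := Nat.find_spec hnil
    have h2 := fun m => Nat.find_min hnil (m := m)
    set m := Nat.find hnil
    obtain ⟨x, hx⟩ := exists_ne (0 : L)
    have hm : 0 < m := by
      by_contra hm
      exact hx (h1 [] x (by simp; omega))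
    have h3 := h2 (m - 1) (by omega)
    push Not at h3
    obtain ⟨l, v, h4, h5⟩ := h3
    refine ⟨lfold l v, (hZ _).2 fun a => ?_, h5⟩
    exact h1 (a :: l) v (by rw [List.length_cons]; omega)
  let Za : AddSubgroup L := Z.toSubmodule.toAddSubgroup
  have hcard : p ^ n = Nat.card (L ⧸ Z) * Nat.card Za := by
    rw [← hL]
    exact AddSubgroup.card_eq_card_quotient_mul_card_addSubgroup Za
  obtain ⟨m, hmn, hm⟩ := (Nat.dvd_prime_pow hp).1 (Dvd.intro _ hcard.symm)
  have hmn : m < n := by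
    refine lt_of_le_of_ne hmn ?_
    rintro rfl
    rw [hm] at hcard
    have h1 : Nat.card Za = 1 := by
      have h0 : 0 < p ^ m := pow_pos hp.pos _
      exact Nat.eq_of_mul_eq_mul_left h0 (by omega)
    obtain ⟨x, hx, hx0⟩ := hZn
    have h2 := (Nat.card_eq_one_iff_unique.1 h1).1
    exact hx0 (congrArg Subtype.val (Subsingleton.elim (⟨x, hx⟩ : Za) 0))
  let q : L →+ L ⧸ Z := (LieSubmodule.Quotient.mk' Z : L →ₗ[ℤ] L ⧸ Z).toAddMonoidHom
  have hq0 : ∀ x, q x = 0 → x ∈ Z := fun x hx => (LieSubmodule.Quotient.mk_eq_zero' (N := Z)).1 hx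
  have hqs : Function.Surjective q := LieSubmodule.Quotient.surjective_mk' Z
  have hql : ∀ a b, q ⁅a, b⁆ = ⁅q a, q b⁆ := fun a b => LieSubmodule.Quotient.mk_bracket Z a b
  have hnil' : NilE (L ⧸ Z) := by
    obtain ⟨m, hm⟩ := hnil
    refine ⟨m, fun l v h => ?_⟩
    obtain ⟨v, rfl⟩ := hqs v
    obtain ⟨l, rfl⟩ := List.map_surjective_iff.2 hqs l
    rw [← lfold_hom q hql, hm, map_zero]
    simpa using h
  obtain ⟨a, l, rfl⟩ : ∃ a l', l = a :: l' := by
    cases l with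
    | nil => simp at hl
    | cons a l => exact ⟨a, l, rfl⟩
  rw [lfold_cons]
  rw [List.length_cons] at hl
  refine (hZ _).1 ?_ a
  apply hq0
  rcases Nat.lt_or_ge m 2 with h | h
  · have : m = 0 ∨ m = 1 := by omega
    rcases this with rfl | rfl
    · rw [pow_zero] at hm
      have := (Nat.card_eq_one_iff_unique.1 hm).1
      exact Subsingleton.elim _ _
    · exfalso
      rw [pow_one] at hm
      have hcyc := isAddCyclic_of_prime_card hm
      obtain ⟨x, hx⟩ := hcyc.exists_generator
      obtain ⟨x, rfl⟩ := hqs x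
      have h1 : ∀ a, ∃ c : ℤ, ∃ z ∈ Z, a = c • x + z := by
        intro a
        obtain ⟨c, hc⟩ := AddSubgroup.mem_zmultiples_iff.1 (hx (q a))
        refine ⟨c, a - c • x, hq0 _ ?_, by abel⟩
        rw [map_sub, map_zsmul, hc, sub_self]
      have h2 : ∀ a, a ∈ Z := by
        intro a
        rw [hZ]
        intro b
        obtain ⟨c, z, hz, rfl⟩ := h1 a
        obtain ⟨d, w, hw, rfl⟩ := h1 b
        rw [lie_add, (hZ z).1 hz, add_lie, ← lie_skew w, (hZ w).1 hw]
        simp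
      have h3 : Subsingleton (L ⧸ Z) := by
        refine ⟨fun a b => ?_⟩
        obtain ⟨a, rfl⟩ := hqs a
        obtain ⟨b, rfl⟩ := hqs b
        rw [(LieSubmodule.Quotient.mk_eq_zero' (N := Z)).2 (h2 a) |> fun t => (show q a = 0 from t),
          (LieSubmodule.Quotient.mk_eq_zero' (N := Z)).2 (h2 b) |> fun t => (show q b = 0 from t)]
      have h4 : Nat.card (L ⧸ Z) = 1 := Nat.card_eq_one_iff_unique.2 ⟨h3, ⟨0⟩⟩
      exact hp.ne_one (hm.symm.trans h4)
  · rw [lfold_hom q hql]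
    refine ih m hmn _ hm hnil' _ _ ?_
    rw [List.length_map]
    omega

lemma lie_NilL {p n : ℕ} (hp : p.Prime) (hn : n ≤ p) (L : Type) [LieRing L] (hL : Nat.card L = p ^ n)
    (h : LieRing.IsNilpotent L) : NilL p L := ⟨fun l v hl => by
  have := hp.two_le
  exact lie_class hp n L hL ((nilE_iff L).1 h) l v (by omega)⟩

lemma NilL.isNilpotent {p : ℕ} (L : Type) [LieRing L] [NilL p L] : LieRing.IsNilpotent L :=
  (nilE_iff L).2 ⟨p, fun l v h => NilL.nil (p := p) l v (by omega)⟩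

lemma PC_zmod {p n : ℕ} (hp : p.Prime) : PC (ZMod (p ^ n)) p where
  two := hp.two_le
  unit m hm := by
    rw [ZMod.isUnit_iff_coprime]
    exact Nat.Coprime.pow_right _ ((hp.coprime_factorial_of_lt hm).symm)

end Cls

section K
variable {k : Type} [CommRing k] {p : ℕ} [PC k p] {L : Type} [LieRing L] [LieAlgebra k L] [NilL p L]

lemma kill_fil {q : ℕ} (hq : ∀ a b : L, q • ⁅a, b⁆ = 0) (s : ℕ → L) {u : PP k p}
    (hu : (u : Al k p) ∈ Fil k p 2) : q • psiL k p s u = 0 := by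
  change q • DD (NilL.nl s) (JJ k p u) = 0
  have key : Fil k p 2 ≤ LinearMap.ker ((q : k) • DD (NilL.nl (k := k) (p := p) s)) := by
    refine Fil_le fun w hw => ?_
    rw [LinearMap.mem_ker, LinearMap.smul_apply, Nat.cast_smul_eq_nsmul]
    induction w using FreeMonoid.recOn with
    | one => simp at hw
    | of_mul i w =>
      rw [FreeMonoid.length_mul, FreeMonoid.length_of] at hw
      rw [wd_of_mul, DD_xx_mul, eps_Fil (wd_mem_Fil (by omega)), zero_smul, add_zero, hq]
  have := key (JJ_mem hu)
  rwa [LinearMap.mem_ker, LinearMap.smul_apply, Nat.cast_smul_eq_nsmul] at this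

lemma kill_lstar {q : ℕ} {a b : L} (ha : q • a = 0) (hb : q • b = 0) : q • lstar k p a b = 0 := by
  have hs : ∀ i, q • sq 0 [a, b] i = 0 := by
    intro i
    match i with
    | 0 => exact ha
    | 1 => exact hb
    | i + 2 => simp [sq]
  have key : ∀ u, q • psiL k p (sq 0 [a, b]) u = 0 := by
    intro u
    induction u using PP_induction with
    | h0 => simp
    | ha u v hu hv => rw [map_add, smul_add, hu, hv, add_zero]
    | hs c u hu => rw [map_smul, smul_comm, hu, smul_zero]
    | hx i => rw [psiL_yy, hs]
    | hl i u hu => rw [LieHom.map_lie, ← lie_nsmul, hu, lie_zero]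
  exact key _

end K

section K2
variable {N p : ℕ} [NeZero N] [PC (ZMod N) p]

lemma comm_of_lie {L : Type} [LieRing L] [LieAlgebra (ZMod N) L] [NilL p L] {q : ℕ}
    (hq : ∀ a b : L, q • ⁅a, b⁆ = 0) (x y : GrL (ZMod N) p L) : ⁅x, y⁆ ^ q = 1 := by
  let f := psiL (ZMod N) p (sq 0 [ofGrL x, ofGrL y])
  have hx : x = homG f (toPG (yy _ _ 0)) := (psiL_yy (k := ZMod N) (p := p) (sq 0 [ofGrL x, ofGrL y]) 0).symm
  have hy : y = homG f (toPG (yy _ _ 1)) := (psiL_yy (k := ZMod N) (p := p) (sq 0 [ofGrL x, ofGrL y]) 1).symm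
  have h1 : ⁅x, y⁆ = homG f ⁅toPG (yy (ZMod N) p 0), toPG (yy (ZMod N) p 1)⁆ := by
    rw [map_commutatorElement, ← hx, ← hy]
  have h2 : ⁅toPG (yy (ZMod N) p 0), toPG (yy (ZMod N) p 1)⁆ ∈ gam (PG (ZMod N) p) 2 :=
    gam_comm (gam_one _) (gam_one _)
  rw [← to_ofPG ⁅toPG (yy (ZMod N) p 0), toPG (yy (ZMod N) p 1)⁆] at h1 h2
  rw [PG_gam_two] at h2
  rw [h1, homG_apply, toGrL_pow, kill_fil hq _ h2, toGrL_zero]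

lemma lie_of_comm {G : Type} [Group G] [ExpN N G] [NilC p G] {q : ℕ}
    (hq : ∀ x y : G, ⁅x, y⁆ ^ q = 1) (a b : LG N p G) : q • ⁅a, b⁆ = 0 := by
  have hmul : ∀ x y : G, x ^ q = 1 → y ^ q = 1 → (x * y) ^ q = 1 := by
    intro x y hx hy
    have e1 : ∀ z : G, q • toLG N p z = 0 ↔ z ^ q = 1 := fun z => by rw [toLG_nsmul]; rfl
    rw [← e1] at hx hy ⊢
    have := kill_lstar (k := ZMod N) (p := p) hx hy
    have h3 : toLG N p (x * y) = lstar (ZMod N) p (toLG N p x) (toLG N p y) :=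
      ((roundG (N := N) (p := p) G).map_mul (toGrL _ _ (toLG N p x)) (toGrL _ _ (toLG N p y))).symm
    rw [h3]
    exact this
  let Om : Subgroup G :=
    { carrier := {x | x ^ q = 1}
      mul_mem' := fun {x y} hx hy => hmul x y hx hy
      one_mem' := one_pow q
      inv_mem' := fun {x} hx => by
        change x⁻¹ ^ q = 1
        rw [inv_pow, show x ^ q = 1 from hx, inv_one] }
  have h1 : gam G 2 ≤ Om := by
    rw [gam_succ le_rfl, Subgroup.commutator_le]
    intro x _ y _
    exact hq x y
  have h2 : toPG ⁅yy (ZMod N) p 0, yy (ZMod N) p 1⁆ ∈ gam (PG (ZMod N) p) 2 := by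
    rw [PG_gam_two]
    have h := Fil_lie (k := ZMod N) (p := p) (xx_mem_Fil 0) (xx_mem_Fil 1)
    rw [LieSubalgebra.coe_bracket]
    exact h
  have h3 := h1 (gam_map (phi (N := N) (p := p) (sq 1 [ofLG a, ofLG b])) 2 h2)
  change (glie N p (ofLG a) (ofLG b)) ^ q = 1 at h3
  change q • toLG N p (glie N p (ofLG a) (ofLG b)) = 0
  rw [toLG_nsmul, h3]
  rfl

end K2

end Laz

namespace Laz

/-- typed nilpotent Lie algebras over a general base -/
def TypedO (O : Type) [CommRing O] (pi : O) (p n t : ℕ) (lam : Fin t → ℕ) : Type 1 :=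
  { q : Σ (L : Type) (lr : LieRing L), @LieAlgebra O L _ lr //
      letI := q.2.1; letI := q.2.2
      Nat.card q.1 = p ^ n ∧
        (∀ i : ℕ, Nat.card {x : q.1 // pi ^ i • x = 0} = p ^ (∑ j, min (lam j) i)) ∧
        LieRing.IsNilpotent q.1 ∧
        ∀ a b : q.1, pi • ⁅a, b⁆ = 0 }

/-- isomorphism -/
def typedORel (O : Type) [CommRing O] (pi : O) (p n t : ℕ) (lam : Fin t → ℕ)
    (q₁ q₂ : TypedO O pi p n t lam) : Prop :=
  letI := q₁.1.2.1; letI := q₁.1.2.2; letI := q₂.1.2.1; letI := q₂.1.2.2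
  Nonempty (q₁.1.1 ≃ₗ⁅O⁆ q₂.1.1)

/-- equivalence of quotients -/
def quotEquiv {α β : Type 1} {r : α → α → Prop} {s : β → β → Prop} (F : α → β) (G : β → α)
    (hF : ∀ a b, r a b → s (F a) (F b)) (hG : ∀ a b, s a b → r (G a) (G b))
    (h1 : ∀ a, r (G (F a)) a) (h2 : ∀ b, s (F (G b)) b) : Quot r ≃ Quot s where
  toFun := Quot.map F hF
  invFun := Quot.map G hG
  left_inv := by rintro ⟨a⟩; exact Quot.sound (h1 a)
  right_inv := by rintro ⟨b⟩; exact Quot.sound (h2 b)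

/-- additive bracket-preserving equivalences are linear -/
def mkLE (R : Type) [CommRing R] (hR : Function.Surjective (Int.cast : ℤ → R)) {L L' : Type}
    [LieRing L] [LieRing L'] [LieAlgebra R L] [LieAlgebra R L'] (e : L ≃+ L')
    (he : ∀ a b, e ⁅a, b⁆ = ⁅e a, e b⁆) : L ≃ₗ⁅R⁆ L' :=
  { e with
    map_smul' := fun c x => by
      obtain ⟨m, rfl⟩ := hR c
      exact map_intCast_smul e R R m x
    map_lie' := fun {a b} => he a b }

section
variable {p n t : ℕ} (hp : p.Prime) (hpn : n ≤ p) (lam : Fin t → ℕ)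
include hp hpn

lemma pc_inst : PC (ZMod (p ^ n)) p := PC_zmod hp

lemma ne_inst : NeZero (p ^ n) := ⟨pow_ne_zero _ hp.ne_zero⟩

lemma exp_inst (G : Type) [Group G] (hG : Nat.card G = p ^ n) : ExpN (p ^ n) G :=
  ⟨fun g => by rw [← hG]; exact pow_card_eq_one'⟩

lemma smul_card (L : Type) [AddCommGroup L] (hL : Nat.card L = p ^ n) (x : L) : (p ^ n) • x = 0 := by
  rw [← hL]; exact card_nsmul_eq_zero'

end

section
variable {p n : ℕ}

lemma zsmul_eq {O : Type} [CommRing O] {L : Type} [AddCommGroup L] [Module O L] (q : ℕ) (x : L) : (q : O) • x = q • x := by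
  rw [Nat.cast_smul_eq_nsmul O]

lemma zpow_eq {O : Type} [CommRing O] {L : Type} [AddCommGroup L] [Module O L] (i : ℕ) (x : L) : (p : O) ^ i • x = (p ^ i) • x := by
  rw [← zsmul_eq (O := O), Nat.cast_pow]

variable [PC (ZMod (p ^ n)) p] [NeZero (p ^ n)]

lemma GtoL_card (G : Type) [Group G] [ExpN (p ^ n) G] [NilC p G] (i : ℕ) :
    Nat.card {x : LG (p ^ n) p G // (p : ℤ) ^ i • x = 0} = Nat.card {x : G // x ^ p ^ i = 1} := by
  refine Nat.card_congr (Equiv.subtypeEquivRight fun x => ?_)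
  have := toLG_nsmul (N := p ^ n) (p := p) (ofLG x) (p ^ i)
  rw [zpow_eq]
  change (p ^ i) • toLG (p ^ n) p (ofLG x) = 0 ↔ _
  rw [this]
  rfl

lemma GtoL_kill (G : Type) [Group G] [ExpN (p ^ n) G] [NilC p G] (h : ∀ x y : G, ⁅x, y⁆ ^ p = 1)
    (a b : LG (p ^ n) p G) : (p : ℤ) • ⁅a, b⁆ = 0 := by
  rw [zsmul_eq]
  exact lie_of_comm (N := p ^ n) (p := p) h a b

lemma LtoG_card {O : Type} [CommRing O] (L : Type) [LieRing L] [LieAlgebra O L] [LieAlgebra (ZMod (p ^ n)) L] [NilL p L] (i : ℕ) :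
    Nat.card {x : GrL (ZMod (p ^ n)) p L // x ^ p ^ i = 1} = Nat.card {x : L // (p : O) ^ i • x = 0} := by
  refine Nat.card_congr (Equiv.subtypeEquivRight fun x => ?_)
  have h1 := toGrL_pow (k := ZMod (p ^ n)) (p := p) (ofGrL x) (p ^ i)
  change (toGrL (ZMod (p ^ n)) p (ofGrL x)) ^ p ^ i = 1 ↔ _
  rw [h1]
  have h2 := zpow_eq (O := O) (p := p) i (ofGrL x)
  change _ ↔ (p : O) ^ i • ofGrL x = 0
  rw [h2]
  rfl

lemma LtoG_kill {O : Type} [CommRing O] (L : Type) [LieRing L] [LieAlgebra O L] [LieAlgebra (ZMod (p ^ n)) L] [NilL p L]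
    (h : ∀ a b : L, (p : O) • ⁅a, b⁆ = 0) (x y : GrL (ZMod (p ^ n)) p L) : ⁅x, y⁆ ^ p = 1 := by
  refine comm_of_lie (N := p ^ n) (p := p) (q := p) (fun a b => ?_) x y
  rw [← zsmul_eq (O := O), h]

lemma relZ {O : Type} [CommRing O] {L L' : Type} [LieRing L] [LieRing L'] [LieAlgebra O L] [LieAlgebra O L'] (f : L ≃ₗ⁅O⁆ L') :
    ∃ e : L ≃+ L', ∀ a b, e ⁅a, b⁆ = ⁅e a, e b⁆ :=
  ⟨f.toLinearEquiv.toAddEquiv, fun a b => LieEquiv.map_lie f a b⟩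

end

section
variable {p n t : ℕ} (hp : p.Prime) (hpn : n ≤ p) (lam : Fin t → ℕ)
include hp hpn

/-- from groups to Lie rings -/
noncomputable def GtoL (q : TypedGroup p n t lam) : TypedO ℤ (p : ℤ) p n t lam :=
  letI := q.1.2
  haveI := pc_inst hp hpn
  haveI := ne_inst hp hpn
  haveI := exp_inst hp hpn q.1.1 q.2.1
  haveI := group_NilC hp hpn q.1.1 q.2.1
  ⟨⟨LG (p ^ n) p q.1.1, inferInstance, inferInstance⟩, q.2.1,
    fun i => (GtoL_card q.1.1 i).trans (q.2.2.1 i),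
    NilL.isNilpotent (p := p) (LG (p ^ n) p q.1.1), GtoL_kill q.1.1 q.2.2.2⟩

/-- from Lie rings to groups -/
noncomputable def LtoG (q : TypedO ℤ (p : ℤ) p n t lam) : TypedGroup p n t lam :=
  letI := q.1.2.1
  letI inst := q.1.2.2
  haveI := pc_inst hp hpn
  haveI := ne_inst hp hpn
  letI := zLie (p ^ n) (smul_card hp hpn q.1.1 q.2.1)
  haveI := lie_NilL hp hpn q.1.1 q.2.1 q.2.2.2.1
  ⟨⟨GrL (ZMod (p ^ n)) p q.1.1, inferInstance⟩, q.2.1,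
    fun i => (@LtoG_card p n _ _ ℤ _ q.1.1 _ inst _ _ i).trans (q.2.2.1 i), @LtoG_kill p n _ _ ℤ _ q.1.1 _ inst _ _ q.2.2.2.2⟩

theorem equiv_GL : Nonempty (Quot (typedGroupIsoRel p n t lam) ≃ Quot (typedORel ℤ (p : ℤ) p n t lam)) := by
  have hp1 := pc_inst hp hpn
  have hp2 := ne_inst hp hpn
  refine ⟨quotEquiv (GtoL hp hpn lam) (LtoG hp hpn lam) ?_ ?_ ?_ ?_⟩
  · rintro ⟨⟨G, i1⟩, h1⟩ ⟨⟨G', i2⟩, h2⟩ ⟨f⟩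
    haveI := exp_inst hp hpn G h1.1
    haveI := group_NilC hp hpn G h1.1
    haveI := exp_inst hp hpn G' h2.1
    haveI := group_NilC hp hpn G' h2.1
    let e := LGmap (N := p ^ n) (p := p) f
    exact ⟨mkLE ℤ (fun x => ⟨x, rfl⟩) (L := LG (p ^ n) p G) (L' := LG (p ^ n) p G')
      e.toLinearEquiv.toAddEquiv (fun a b => LieEquiv.map_lie e a b)⟩
  · rintro ⟨⟨L, i1, j1⟩, h1⟩ ⟨⟨L', i2, j2⟩, h2⟩ ⟨f⟩
    obtain ⟨e, he⟩ := @relZ ℤ _ L L' i1 i2 j1 j2 f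
    haveI := lie_NilL hp hpn L h1.1 h1.2.2.1
    haveI := lie_NilL hp hpn L' h2.1 h2.2.2.1
    letI := zLie (p ^ n) (smul_card hp hpn L h1.1)
    letI := zLie (p ^ n) (smul_card hp hpn L' h2.1)
    exact ⟨GrLmap (k := ZMod (p ^ n)) (p := p) (L := L) (L' := L')
      (mkLE (ZMod (p ^ n)) ZMod.intCast_surjective e he)⟩
  · rintro ⟨⟨G, i1⟩, h1⟩
    haveI := exp_inst hp hpn G h1.1
    haveI := group_NilC hp hpn G h1.1
    exact ⟨roundG (N := p ^ n) (p := p) G⟩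
  · rintro ⟨⟨L, i1, j1⟩, h1⟩
    haveI := lie_NilL hp hpn L h1.1 h1.2.2.1
    letI := zLie (p ^ n) (smul_card hp hpn L h1.1)
    haveI := group_NilC hp hpn (GrL (ZMod (p ^ n)) p L) h1.1
    exact ⟨mkLE ℤ (fun x => ⟨x, rfl⟩) (L := LG (p ^ n) p (GrL (ZMod (p ^ n)) p L)) (L' := L)
      (roundL L) (fun a b => roundL_lie a b)⟩

end
end Laz

namespace Laz

/-- base ring data -/
structure Base (O : Type) [CommRing O] (p : ℕ) where
  /-- uniformizer -/
  pi : O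
  /-- residue map -/
  res : O →+* ZMod p
  hres : ∀ c, res c = 0 ↔ pi ∣ c

/-- the standard relation -/
def RR {p t : ℕ} (lam : Fin t → ℕ) (i : ℕ) (a b : Fin t → ZMod p) : Prop :=
  ∃ c : Fin t → ZMod p, (∀ j, a j = if lam j ≤ i + 1 then c j else 0) ∧
    (∀ j, b j = if i + 1 ≤ lam j then c j else 0)

section
variable {O : Type} [CommRing O] {p : ℕ} [Fact p.Prime] (D : Base O p) {t : ℕ} (lam : Fin t → ℕ) (n : ℕ)

/-- lift of residues -/
def lft (O : Type) [CommRing O] {p : ℕ} (b : ZMod p) : O := ((b.val : ℕ) : O)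

lemma res_lft (b : ZMod p) : D.res (lft O b) = b := by
  rw [lft, map_natCast, ZMod.natCast_zmod_val]

lemma pi_dvd_sub (D : Base O p) {c d : O} (h : D.res c = D.res d) : ∃ x, c - d = D.pi * x := by
  have : D.res (c - d) = 0 := by rw [map_sub, h, sub_self]
  exact (D.hres _).1 this

/-- frames -/
structure Frame (M : Type) [AddCommGroup M] [Module O M] where
  /-- top coordinates -/
  v : M →+ (Fin t → ZMod p)
  /-- socle coordinates -/
  w : (Fin t → ZMod p) →+ M
  v_ker : ∀ x, v x = 0 ↔ ∃ y, x = D.pi • y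
  w_inj : Function.Injective w
  w_range : ∀ x, (∃ b, w b = x) ↔ D.pi • x = 0
  rel : ∀ i a b, (∃ x, D.pi ^ (i + 1) • x = 0 ∧ v x = a ∧ D.pi ^ i • x = w b) ↔ RR lam i a b
  top : ∀ x : M, D.pi ^ n • x = 0

/-- bases -/
structure PB (M : Type) [AddCommGroup M] [Module O M] where
  /-- the basis -/
  e : Fin t → M
  h0 : ∀ j, D.pi ^ lam j • e j = 0
  ind : ∀ c : Fin t → O, ∑ j, c j • D.pi ^ (lam j - 1) • e j = 0 → ∀ j, D.res (c j) = 0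
  spn : ∀ i (x : M), D.pi ^ (i + 1) • x = 0 → ∃ c : Fin t → O,
    D.pi ^ i • x = ∑ j, if i + 1 ≤ lam j then c j • D.pi ^ (lam j - 1) • e j else 0
  top : ∀ x : M, D.pi ^ n • x = 0

variable {D lam n} {M : Type} [AddCommGroup M] [Module O M]

namespace PB
variable (P : PB D lam n M)

/-- linear combinations -/
def phi : (Fin t → O) →ₗ[O] M := Fintype.linearCombination O P.e

lemma phi_apply (c : Fin t → O) : P.phi c = ∑ j, c j • P.e j := by
  rw [phi, Fintype.linearCombination_apply]

lemma phi_congr {c d : Fin t → O} (h : ∀ j, ∃ x, c j - d j = D.pi ^ lam j * x) : P.phi c = P.phi d := by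
  rw [← sub_eq_zero, ← map_sub, phi_apply]
  refine Finset.sum_eq_zero fun j _ => ?_
  obtain ⟨x, hx⟩ := h j
  rw [Pi.sub_apply, hx, mul_comm, mul_smul, P.h0, smul_zero]

lemma dvd_of_phi (hpos : ∀ j, 1 ≤ lam j) {c : Fin t → O} (h : P.phi c = 0) (r : ℕ) (hr : r ≤ n)
    (hlam : ∀ j, lam j ≤ n) : ∀ j, D.pi ^ (lam j - (n - r)) ∣ c j := by
  induction r with
  | zero => intro j; rw [Nat.sub_eq_zero_of_le (by have := hlam j; omega), pow_zero]; exact one_dvd _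
  | succ r ih =>
    have ih := ih (by omega)
    choose d hd using ih
    have h1 : ∑ j, (if n - r ≤ lam j then d j else 0) • D.pi ^ (lam j - 1) • P.e j = 0 := by
      have h' : D.pi ^ (n - (r + 1)) • P.phi c = 0 := by rw [h, smul_zero]
      refine Eq.trans ?_ h'
      rw [phi_apply, Finset.smul_sum]
      refine Finset.sum_congr rfl fun j _ => ?_
      rw [hd j, smul_smul, smul_smul]
      split_ifs with hj
      · have e : n - (r + 1) + (lam j - (n - r)) = lam j - 1 := by omega
        rw [← mul_assoc, ← pow_add, e, mul_comm]
      · have e : lam j - (n - r) = 0 := by omega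
        have e2 : n - (r + 1) = (n - (r + 1) - lam j) + lam j := by omega
        rw [e, pow_zero, one_mul, zero_mul, zero_smul, mul_comm, mul_smul, e2, pow_add, mul_smul, P.h0,
          smul_zero, smul_zero]
    intro j
    have h2 := P.ind _ h1 j
    by_cases hj : n - r ≤ lam j
    · rw [if_pos hj, D.hres] at h2
      have e : lam j - (n - (r + 1)) = lam j - (n - r) + 1 := by omega
      rw [hd j, e, pow_succ]
      exact mul_dvd_mul_left _ h2
    · have e : lam j - (n - (r + 1)) = 0 := by omega
      rw [e, pow_zero]
      exact one_dvd _

lemma phi_eq_zero (hpos : ∀ j, 1 ≤ lam j) (hlam : ∀ j, lam j ≤ n) {c : Fin t → O} :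
    P.phi c = 0 ↔ ∀ j, D.pi ^ lam j ∣ c j := by
  constructor
  · intro h j
    have := P.dvd_of_phi hpos h n le_rfl hlam j
    rwa [Nat.sub_self, Nat.sub_zero] at this
  · intro h
    rw [← map_zero P.phi]
    refine P.phi_congr fun j => ?_
    obtain ⟨x, hx⟩ := h j
    exact ⟨x, by rw [Pi.zero_apply, sub_zero, hx]⟩

lemma exists_phi (i : ℕ) : ∀ (x : M), D.pi ^ i • x = 0 →
    ∃ c : Fin t → O, x = P.phi (fun j => c j * D.pi ^ (lam j - i)) := by
  induction i with
  | zero =>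
    intro x hx
    rw [pow_zero, one_smul] at hx
    refine ⟨0, ?_⟩
    rw [hx, phi_apply]
    simp
  | succ i ih =>
    intro x hx
    obtain ⟨c, hc⟩ := P.spn i x hx
    have h1 : D.pi ^ i • (x - P.phi (fun j => if i + 1 ≤ lam j then c j * D.pi ^ (lam j - (i + 1)) else 0)) = 0 := by
      rw [smul_sub, hc, phi_apply, Finset.smul_sum, sub_eq_zero]
      refine Finset.sum_congr rfl fun j _ => ?_
      split_ifs with hj
      · have e : lam j - 1 = i + (lam j - (i + 1)) := by omega
        rw [smul_smul, smul_smul, e, pow_add]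
        congr 1
        ring
      · simp
    obtain ⟨d, hd⟩ := ih _ h1
    refine ⟨fun j => (if i + 1 ≤ lam j then d j * D.pi + c j else d j), ?_⟩
    rw [sub_eq_iff_eq_add, ← map_add] at hd
    rw [hd]
    congr 1
    funext j
    rw [Pi.add_apply]
    dsimp only
    split_ifs with hj
    · have e : lam j - i = lam j - (i + 1) + 1 := by omega
      rw [e, pow_succ]
      ring
    · have e : lam j - i = 0 := by omega
      have e' : lam j - (i + 1) = 0 := by omega
      rw [e, e', add_zero]

lemma phi_surj : Function.Surjective P.phi := fun x => by
  obtain ⟨c, hc⟩ := P.exists_phi n x (P.top x)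
  exact ⟨_, hc.symm⟩

section mk
variable (hpos : ∀ j, 1 ≤ lam j) (hlam : ∀ j, lam j ≤ n)

/-- coordinates -/
noncomputable def vf (x : M) : Fin t → ZMod p := fun j => D.res ((P.phi_surj x).choose j)

include hpos hlam in
lemma vf_phi (c : Fin t → O) : P.vf (P.phi c) = fun j => D.res (c j) := by
  funext j
  have h := (P.phi_surj (P.phi c)).choose_spec
  rw [← sub_eq_zero, ← map_sub, P.phi_eq_zero hpos hlam] at h
  have h2 := h j
  have h3 : D.pi ∣ (((P.phi_surj (P.phi c)).choose - c) j) :=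
    dvd_trans (dvd_pow_self _ (by have := hpos j; omega)) h2
  rw [← D.hres, Pi.sub_apply, map_sub, sub_eq_zero] at h3
  exact h3

/-- socle -/
def wf (b : Fin t → ZMod p) : M := P.phi fun j => lft O (b j) * D.pi ^ (lam j - 1)

include hpos in
lemma wf_res (c : Fin t → O) (b : Fin t → ZMod p) (h : ∀ j, D.res (c j) = b j) :
    P.wf b = P.phi fun j => c j * D.pi ^ (lam j - 1) := by
  refine P.phi_congr fun j => ?_
  have h1 : D.res (lft O (b j)) = D.res (c j) := by rw [res_lft, h]
  obtain ⟨x, hx⟩ := pi_dvd_sub D h1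
  refine ⟨x, ?_⟩
  have e : lam j = lam j - 1 + 1 := by have := hpos j; omega
  rw [← sub_mul, hx]
  conv_rhs => rw [e, pow_succ]
  ring

include hpos in
lemma wf_add (a b : Fin t → ZMod p) : P.wf (a + b) = P.wf a + P.wf b := by
  rw [P.wf_res hpos (fun j => lft O (a j) + lft O (b j)) (a + b)
    (fun j => by rw [map_add, res_lft, res_lft]; rfl), wf, wf, ← map_add]
  congr 1
  funext j
  simp [add_mul]

include hpos in
lemma wf_eq_zero {b : Fin t → ZMod p} (h : P.wf b = 0) : b = 0 := by
  rw [wf, phi_apply] at h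
  funext j
  have := P.ind (fun j => lft O (b j)) (by simpa only [mul_smul] using h) j
  rwa [res_lft] at this

/-- frame from a basis -/
noncomputable def frame : Frame D lam n M where
  v :=
    { toFun := P.vf
      map_zero' := by
        rw [← map_zero P.phi, P.vf_phi hpos hlam]; funext j; simp
      map_add' := fun x y => by
        obtain ⟨c, rfl⟩ := P.phi_surj x
        obtain ⟨d, rfl⟩ := P.phi_surj y
        rw [← map_add, P.vf_phi hpos hlam, P.vf_phi hpos hlam, P.vf_phi hpos hlam]
        funext j
        simp }
  w :=
    { toFun := P.wf
      map_zero' := by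
        rw [P.wf_res hpos 0 0 (fun j => by simp), phi_apply]; simp
      map_add' := P.wf_add hpos }
  v_ker x := by
    change P.vf x = 0 ↔ _
    obtain ⟨c, rfl⟩ := P.phi_surj x
    rw [P.vf_phi hpos hlam]
    constructor
    · intro h
      have h1 : ∀ j, D.pi ∣ c j := fun j => (D.hres _).1 (congrFun h j)
      choose d hd using h1
      refine ⟨P.phi d, ?_⟩
      rw [← map_smul]
      congr 1
      funext j
      exact hd j
    · rintro ⟨y, hy⟩
      obtain ⟨d, rfl⟩ := P.phi_surj y
      rw [← map_smul] at hy
      have h2 := congrArg P.vf hy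
      rw [P.vf_phi hpos hlam, P.vf_phi hpos hlam] at h2
      rw [h2]
      funext j
      rw [Pi.zero_apply, D.hres]
      exact ⟨d j, rfl⟩
  w_inj := by
    rw [injective_iff_map_eq_zero]
    intro b hb
    exact P.wf_eq_zero hpos hb
  w_range x := by
    constructor
    · rintro ⟨b, rfl⟩
      change D.pi • P.wf b = 0
      rw [wf, ← map_smul, P.phi_eq_zero hpos hlam]
      intro j
      have e : lam j = lam j - 1 + 1 := by have := hpos j; omega
      refine ⟨lft O (b j), ?_⟩
      rw [Pi.smul_apply, smul_eq_mul]
      conv_rhs => rw [e, pow_succ]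
      ring
    · intro h
      obtain ⟨c, rfl⟩ := P.exists_phi 1 x (by rwa [pow_one])
      exact ⟨fun j => D.res (c j), P.wf_res hpos c _ fun j => rfl⟩
  rel i a b := by
    change (∃ x, D.pi ^ (i + 1) • x = 0 ∧ P.vf x = a ∧ D.pi ^ i • x = P.wf b) ↔ _
    have key1 : ∀ c : Fin t → O, P.vf (P.phi (fun j => c j * D.pi ^ (lam j - (i + 1)))) =
        fun j => if lam j ≤ i + 1 then D.res (c j) else 0 := by
      intro c
      rw [P.vf_phi hpos hlam]
      funext j
      split_ifs with h
      · rw [Nat.sub_eq_zero_of_le h, pow_zero, mul_one]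
      · rw [D.hres]
        exact dvd_mul_of_dvd_right (dvd_pow_self _ (by omega)) _
    have key2 : ∀ c : Fin t → O, D.pi ^ i • (P.phi (fun j => c j * D.pi ^ (lam j - (i + 1)))) =
        P.wf (fun j => if i + 1 ≤ lam j then D.res (c j) else 0) := by
      intro c
      rw [P.wf_res hpos (fun j => if i + 1 ≤ lam j then c j else 0) _ (fun j => by split_ifs <;> simp),
        ← map_smul]
      refine P.phi_congr fun j => ?_
      rw [Pi.smul_apply, smul_eq_mul]
      split_ifs with h
      · refine ⟨0, ?_⟩
        have e : lam j - 1 = i + (lam j - (i + 1)) := by omega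
        rw [e, pow_add]
        ring
      · refine ⟨D.pi ^ (i - lam j) * (c j), ?_⟩
        have e : lam j - (i + 1) = 0 := by omega
        have e2 : i = lam j + (i - lam j) := by omega
        rw [e, pow_zero, mul_one, zero_mul, sub_zero, ← mul_assoc, ← pow_add, ← e2]
    constructor
    · rintro ⟨x, h1, h2, h3⟩
      obtain ⟨c, rfl⟩ := P.exists_phi (i + 1) x h1
      rw [key1] at h2
      rw [key2] at h3
      refine ⟨fun j => D.res (c j), fun j => (congrFun h2 j).symm, fun j => ?_⟩
      have h4 : P.wf ((fun j => if i + 1 ≤ lam j then D.res (c j) else 0) - b) = 0 := by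
        have := P.wf_add hpos ((fun j => if i + 1 ≤ lam j then D.res (c j) else 0) - b) b
        rw [sub_add_cancel, h3] at this
        simpa using this
      have h5 := congrFun (P.wf_eq_zero hpos h4) j
      exact (sub_eq_zero.1 h5).symm
    · rintro ⟨c, h1, h2⟩
      refine ⟨P.phi (fun j => lft O (c j) * D.pi ^ (lam j - (i + 1))), ?_, ?_, ?_⟩
      · rw [← map_smul, P.phi_eq_zero hpos hlam]
        intro j
        rw [Pi.smul_apply, smul_eq_mul, mul_left_comm, ← pow_add]
        exact dvd_mul_of_dvd_right (pow_dvd_pow _ (by omega)) _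
      · rw [key1]
        funext j
        rw [h1, res_lft]
      · rw [key2]
        congr 1
        funext j
        rw [h2, res_lft]
  top := P.top

end mk
end PB

end
end Laz

namespace Laz

section
variable {O : Type} [CommRing O] {p : ℕ} [Fact p.Prime] {D : Base O p} {t : ℕ} {lam : Fin t → ℕ} {n : ℕ}
variable {M : Type} [AddCommGroup M] [Module O M]

lemma smul_zmod_hom {A B : Type} [AddCommGroup A] [Module (ZMod p) A] [AddCommGroup B] [Module O B]
    (f : A →+ B) (k : ZMod p) (b : A) : f (k • b) = lft O k • f b := by
  conv_lhs => rw [← ZMod.natCast_zmod_val k]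
  rw [Nat.cast_smul_eq_nsmul, map_nsmul, lft, Nat.cast_smul_eq_nsmul]

namespace Frame
variable (F : Frame D lam n M)

lemma pi_w (b : Fin t → ZMod p) : D.pi • F.w b = 0 := (F.w_range _).1 ⟨b, rfl⟩

lemma v_pi (x : M) : F.v (D.pi • x) = 0 := (F.v_ker _).2 ⟨x, rfl⟩

lemma w_smul (c : O) (b : Fin t → ZMod p) : F.w (D.res c • b) = c • F.w b := by
  rw [smul_zmod_hom (O := O)]
  obtain ⟨x, hx⟩ := pi_dvd_sub D (c := c) (d := lft O (D.res c)) (by rw [res_lft])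
  rw [sub_eq_iff_eq_add] at hx
  conv_rhs => rw [hx]
  rw [add_smul, mul_comm, mul_smul, pi_w, smul_zero, zero_add]

lemma v_smul (c : O) (x : M) : F.v (c • x) = D.res c • F.v x := by
  obtain ⟨y, hx⟩ := pi_dvd_sub D (c := c) (d := lft O (D.res c)) (by rw [res_lft])
  rw [sub_eq_iff_eq_add] at hx
  conv_lhs => rw [hx]
  rw [add_smul, mul_smul, map_add, v_pi, zero_add, lft, Nat.cast_smul_eq_nsmul, map_nsmul,
    ← Nat.cast_smul_eq_nsmul (ZMod p), ZMod.natCast_zmod_val]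

lemma v_w_iff (a b : Fin t → ZMod p) : F.v (F.w b) = a ↔ RR lam 0 a b := by
  rw [← F.rel]
  constructor
  · intro h
    exact ⟨F.w b, by rw [zero_add, pow_one, pi_w], h, by rw [pow_zero, one_smul]⟩
  · rintro ⟨x, h1, h2, h3⟩
    rw [pow_zero, one_smul] at h3
    rw [← h3, h2]

lemma v_surj (hlam : ∀ j, lam j ≤ n) : Function.Surjective F.v := by
  intro a
  obtain ⟨x, _, h, _⟩ := (F.rel n a (fun j => 0)).2 ⟨a, fun j => by rw [if_pos]; have := hlam j; omega,
    fun j => by rw [if_neg]; have := hlam j; omega⟩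
  exact ⟨x, h⟩

lemma exists_e (hpos : ∀ j, 1 ≤ lam j) (j : Fin t) : ∃ x : M, D.pi ^ lam j • x = 0 ∧ F.v x = Pi.single j 1 ∧
    D.pi ^ (lam j - 1) • x = F.w (Pi.single j 1) := by
  obtain ⟨x, h1, h2, h3⟩ := (F.rel (lam j - 1) (Pi.single j 1) (Pi.single j 1)).2 ⟨Pi.single j 1, fun k => by
      by_cases h : k = j
      · subst h; rw [if_pos]; have := hpos k; omega
      · simp [h], fun k => by
      by_cases h : k = j
      · subst h; rw [if_pos]; have := hpos k; omega
      · simp [h]⟩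
  refine ⟨x, ?_, h2, h3⟩
  have e : lam j - 1 + 1 = lam j := by have := hpos j; omega
  rwa [e] at h1

lemma sum_single_smul (b : Fin t → ZMod p) : b = ∑ j, b j • (Pi.single j 1 : Fin t → ZMod p) := by
  funext k
  rw [Finset.sum_apply]
  simp [Pi.single_apply]

lemma w_sum (c : Fin t → O) : ∑ j, c j • F.w (Pi.single j 1) = F.w (fun j => D.res (c j)) := by
  conv_rhs => rw [sum_single_smul (fun j => D.res (c j)), map_sum]
  refine Finset.sum_congr rfl fun j _ => ?_
  rw [w_smul]

/-- basis from a frame -/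
noncomputable def pb (hpos : ∀ j, 1 ≤ lam j) : PB D lam n M where
  e j := (F.exists_e hpos j).choose
  h0 j := (F.exists_e hpos j).choose_spec.1
  ind c h := by
    have h2 : ∑ j, c j • F.w (Pi.single j 1) = 0 := by
      rw [← h]
      exact Finset.sum_congr rfl fun j _ => by rw [(F.exists_e hpos j).choose_spec.2.2]
    rw [w_sum] at h2
    have h3 := F.w_inj (h2.trans (map_zero F.w).symm)
    exact fun j => congrFun h3 j
  spn i x hx := by
    obtain ⟨b, hb⟩ := (F.w_range (D.pi ^ i • x)).2 (by rw [smul_smul, ← pow_succ', hx])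
    obtain ⟨c, _, hc⟩ := (F.rel i (F.v x) b).1 ⟨x, hx, rfl, hb.symm⟩
    refine ⟨fun j => lft O (c j), ?_⟩
    have h4 : b = fun j => D.res (if i + 1 ≤ lam j then lft O (c j) else 0) := by
      funext j
      rw [hc]
      split_ifs
      · rw [res_lft]
      · simp
    rw [← hb, h4, ← w_sum]
    refine Finset.sum_congr rfl fun j _ => ?_
    split_ifs
    · rw [(F.exists_e hpos j).choose_spec.2.2]
    · simp
  top := F.top

lemma v_phi (hpos : ∀ j, 1 ≤ lam j) (c : Fin t → O) : F.v ((F.pb hpos).phi c) = fun j => D.res (c j) := by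
  rw [PB.phi_apply, map_sum]
  conv_rhs => rw [sum_single_smul (fun j => D.res (c j))]
  refine Finset.sum_congr rfl fun j _ => ?_
  rw [v_smul]
  congr 1
  exact (F.exists_e hpos j).choose_spec.2.1

lemma phi_w (hpos : ∀ j, 1 ≤ lam j) (b : Fin t → ZMod p) :
    F.w b = (F.pb hpos).phi (fun j => lft O (b j) * D.pi ^ (lam j - 1)) := by
  rw [PB.phi_apply]
  have : b = fun j => D.res (lft O (b j)) := by funext j; rw [res_lft]
  conv_lhs => rw [this, ← w_sum]
  refine Finset.sum_congr rfl fun j _ => ?_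
  rw [mul_smul]
  congr 1
  exact (F.exists_e hpos j).choose_spec.2.2.symm

lemma exists_equiv (hpos : ∀ j, 1 ≤ lam j) (hlam : ∀ j, lam j ≤ n) {M' : Type} [AddCommGroup M'] [Module O M']
    (F' : Frame D lam n M') : ∃ f : M ≃ₗ[O] M', (∀ x, F'.v (f x) = F.v x) ∧ ∀ b, f (F.w b) = F'.w b := by
  have hk : LinearMap.ker (F.pb hpos).phi = LinearMap.ker (F'.pb hpos).phi := by
    ext c
    rw [LinearMap.mem_ker, LinearMap.mem_ker, PB.phi_eq_zero _ hpos hlam, PB.phi_eq_zero _ hpos hlam]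
  let e1 := (F.pb hpos).phi.quotKerEquivOfSurjective (F.pb hpos).phi_surj
  let e2 := (F'.pb hpos).phi.quotKerEquivOfSurjective (F'.pb hpos).phi_surj
  let f : M ≃ₗ[O] M' := e1.symm.trans ((Submodule.quotEquivOfEq _ _ hk).trans e2)
  have hf : ∀ c, f ((F.pb hpos).phi c) = (F'.pb hpos).phi c := by
    intro c
    have h1 : (F.pb hpos).phi c = e1 (Submodule.Quotient.mk c) := rfl
    change e2 (Submodule.quotEquivOfEq _ _ hk (e1.symm _)) = _
    rw [h1, LinearEquiv.symm_apply_apply]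
    rfl
  refine ⟨f, fun x => ?_, fun b => ?_⟩
  · obtain ⟨c, rfl⟩ := (F.pb hpos).phi_surj x
    rw [hf, v_phi, v_phi]
  · rw [F.phi_w hpos, hf, F'.phi_w hpos]

end Frame

/-- transport of frames -/
def Frame.map {M' : Type} [AddCommGroup M'] [Module O M'] (F : Frame D lam n M) (f : M ≃ₗ[O] M') :
    Frame D lam n M' where
  v := F.v.comp f.symm.toLinearMap.toAddMonoidHom
  w := f.toLinearMap.toAddMonoidHom.comp F.w
  v_ker x := by
    change F.v (f.symm x) = 0 ↔ _
    rw [F.v_ker]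
    constructor
    · rintro ⟨y, hy⟩
      exact ⟨f y, by rw [← map_smul, ← hy, f.apply_symm_apply]⟩
    · rintro ⟨y, hy⟩
      exact ⟨f.symm y, by rw [← map_smul, ← hy]⟩
  w_inj := f.injective.comp F.w_inj
  w_range x := by
    change (∃ b, f (F.w b) = x) ↔ _
    rw [← f.symm.map_eq_zero_iff, map_smul, ← F.w_range]
    exact exists_congr fun b => by rw [← f.eq_symm_apply]
  rel i a b := by
    rw [← F.rel]
    constructor
    · rintro ⟨x, h1, h2, h3⟩
      refine ⟨f.symm x, by rw [← map_smul, h1, map_zero], h2, ?_⟩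
      rw [← map_smul, h3]
      exact f.symm_apply_apply _
    · rintro ⟨x, h1, h2, h3⟩
      refine ⟨f x, by rw [← map_smul, h1, map_zero], ?_, ?_⟩
      · change F.v (f.symm (f x)) = a
        rw [f.symm_apply_apply, h2]
      · rw [← map_smul, h3]
        rfl
  top x := by
    have := F.top (f.symm x)
    rwa [← map_smul, f.symm.map_eq_zero_iff] at this

end

section
variable {O : Type} [CommRing O] {p : ℕ} [Fact p.Prime] {t : ℕ} {n : ℕ}

/-- presentation of the bracket -/
def Pres (D : Base O p) (lam : Fin t → ℕ) (n : ℕ) (L : Type) [LieRing L] [LieAlgebra O L]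
    (β : (Fin t → ZMod p) → (Fin t → ZMod p) → (Fin t → ZMod p)) : Prop :=
  ∃ F : Frame D lam n L, ∀ x y : L, ⁅x, y⁆ = F.w (β (F.v x) (F.v y))

variable {D : Base O p} {lam : Fin t → ℕ} {L L' : Type} [LieRing L] [LieAlgebra O L] [LieRing L'] [LieAlgebra O L']
  {β : (Fin t → ZMod p) → (Fin t → ZMod p) → (Fin t → ZMod p)}

lemma Pres.equiv (hpos : ∀ j, 1 ≤ lam j) (hlam : ∀ j, lam j ≤ n) (h : Pres D lam n L β)
    (h' : Pres D lam n L' β) : Nonempty (L ≃ₗ⁅O⁆ L') := by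
  obtain ⟨F, hF⟩ := h
  obtain ⟨F', hF'⟩ := h'
  obtain ⟨f, h1, h2⟩ := F.exists_equiv hpos hlam F'
  exact ⟨{ f with
    map_lie' := fun {x y} => by
      change f ⁅x, y⁆ = ⁅f x, f y⁆
      rw [hF, hF', h1, h1, h2] }⟩

lemma Pres.transport (h : Pres D lam n L β) (f : L ≃ₗ⁅O⁆ L') : Pres D lam n L' β := by
  obtain ⟨F, hF⟩ := h
  refine ⟨F.map f.toLinearEquiv, fun x y => ?_⟩
  change _ = f (F.w (β (F.v (f.symm x)) (F.v (f.symm y))))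
  rw [← hF, ← LieEquiv.map_lie, LieEquiv.apply_symm_apply]

/-- the change of frame -/
lemma Pres.change {O' : Type} [CommRing O'] {D' : Base O' p} {L' : Type} [LieRing L'] [LieAlgebra O' L']
    (hlam : ∀ j, lam j ≤ n)
    {β₁ β₂ : (Fin t → ZMod p) → (Fin t → ZMod p) → (Fin t → ZMod p)}
    (h1 : Pres D lam n L β₁) (h2 : Pres D lam n L β₂) (h3 : Pres D' lam n L' β₂) : Pres D' lam n L' β₁ := by
  obtain ⟨F1, hF1⟩ := h1
  obtain ⟨F2, hF2⟩ := h2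
  obtain ⟨F', hF'⟩ := h3
  have mkA : ∀ (F G : Frame D lam n L), ∃ A : (Fin t → ZMod p) →+ (Fin t → ZMod p), ∀ x, A (F.v x) = G.v x := by
    intro F G
    have hs := F.v_surj hlam
    have key : ∀ x y, F.v x = F.v y → G.v x = G.v y := by
      intro x y h
      rw [← sub_eq_zero, ← map_sub, F.v_ker, ← G.v_ker, map_sub, sub_eq_zero] at h
      exact h
    have hA : ∀ x, G.v (Function.surjInv hs (F.v x)) = G.v x := fun x => key _ _ (Function.surjInv_eq hs _)
    refine ⟨{ toFun := fun a => G.v (Function.surjInv hs a)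
              map_zero' := ?_
              map_add' := ?_ }, hA⟩
    · have h0 := hA 0
      rwa [map_zero F.v, map_zero G.v] at h0
    · intro a b
      obtain ⟨x, rfl⟩ := hs a
      obtain ⟨y, rfl⟩ := hs b
      rw [← map_add, hA, hA, hA, map_add]
  have mkB : ∀ (F G : Frame D lam n L), ∃ B : (Fin t → ZMod p) →+ (Fin t → ZMod p), ∀ b, G.w (B b) = F.w b := by
    intro F G
    have : ∀ b, ∃ c, G.w c = F.w b := fun b => by rw [G.w_range, ← F.w_range]; exact ⟨b, rfl⟩
    choose B hB using this
    refine ⟨{ toFun := B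
              map_zero' := ?_
              map_add' := ?_ }, hB⟩
    · apply G.w_inj; rw [hB, map_zero, map_zero]
    · intro a b; apply G.w_inj; rw [hB, map_add, map_add, hB, hB]
  obtain ⟨A, hA⟩ := mkA F1 F2
  obtain ⟨A', hA'⟩ := mkA F2 F1
  obtain ⟨B, hB⟩ := mkB F1 F2
  obtain ⟨B', hB'⟩ := mkB F2 F1
  have hAA : ∀ a, A (A' a) = a := fun a => by
    obtain ⟨x, rfl⟩ := F2.v_surj hlam a
    rw [hA', hA]
  have hAA' : ∀ a, A' (A a) = a := fun a => by
    obtain ⟨x, rfl⟩ := F1.v_surj hlam a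
    rw [hA, hA']
  have hBB : ∀ b, B (B' b) = b := fun b => F2.w_inj (by rw [hB, hB'])
  have hBB' : ∀ b, B' (B b) = b := fun b => F1.w_inj (by rw [hB', hB])
  have hR : ∀ i a b, RR lam i (A a) (B b) ↔ RR lam i a b := by
    intro i a b
    rw [← F2.rel, ← F1.rel]
    refine exists_congr fun x => and_congr_right fun _ => and_congr ?_ (by rw [hB])
    constructor
    · intro h; rw [← hA', h, hAA']
    · intro h; rw [← hA, h]
  have hβ : ∀ a b, B (β₁ (A' a) (A' b)) = β₂ a b := by
    intro a b
    obtain ⟨x, rfl⟩ := F2.v_surj hlam a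
    obtain ⟨y, rfl⟩ := F2.v_surj hlam b
    apply F2.w_inj
    rw [hB, hA', hA', ← hF1, ← hF2]
  refine ⟨{ v := A'.comp F'.v
            w := F'.w.comp B
            v_ker := fun x => ?_
            w_inj := F'.w_inj.comp (Function.LeftInverse.injective hBB')
            w_range := fun x => ?_
            rel := fun i a b => ?_
            top := F'.top }, fun x y => ?_⟩
  · rw [← F'.v_ker]
    change A' (F'.v x) = 0 ↔ _
    constructor
    · intro h; rw [← hAA (F'.v x), h, map_zero]
    · intro h; rw [h, map_zero]
  · rw [← F'.w_range]
    constructor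
    · rintro ⟨b, hb⟩; exact ⟨B b, hb⟩
    · rintro ⟨b, hb⟩; exact ⟨B' b, by rw [← hb, ← hBB b]; change F'.w (B (B' (B (B' b)))) = _; rw [hBB']⟩
  · rw [← hR, ← F'.rel]
    refine exists_congr fun x => and_congr_right fun _ => and_congr ?_ Iff.rfl
    change A' (F'.v x) = a ↔ _
    constructor
    · intro h; rw [← h, hAA]
    · intro h; rw [h, hAA']
  · change _ = F'.w (B (β₁ (A' (F'.v x)) (A' (F'.v y))))
    rw [hβ, hF']

end
end Laz

namespace Laz

lemma card_hom {A B : Type} [AddCommGroup A] [AddCommGroup B] (f : A →+ B) :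
    Nat.card A = Nat.card f.range * Nat.card f.ker := by
  rw [AddSubgroup.card_eq_card_quotient_mul_card_addSubgroup f.ker,
    Nat.card_congr (QuotientAddGroup.quotientKerEquivRange f).toEquiv]

lemma cardK_succ {O : Type} [CommRing O] (pi : O) (M : Type) [AddCommGroup M] [Module O M] (i : ℕ) :
    Nat.card {x : M // pi ^ (i + 1) • x = 0} =
      Nat.card {w : M // ∃ x, pi ^ (i + 1) • x = 0 ∧ pi ^ i • x = w} * Nat.card {x : M // pi ^ i • x = 0} := by
  let K : Submodule O M := LinearMap.ker (LinearMap.lsmul O M (pi ^ (i + 1)))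
  let f : K →+ M := ((LinearMap.lsmul O M (pi ^ i)).comp K.subtype).toAddMonoidHom
  have h := card_hom f
  have hK : ∀ x : M, x ∈ K ↔ pi ^ (i + 1) • x = 0 := fun x => by rw [LinearMap.mem_ker]; rfl
  have e1 : Nat.card K = Nat.card {x : M // pi ^ (i + 1) • x = 0} :=
    Nat.card_congr (Equiv.subtypeEquivRight hK)
  have e2 : Nat.card f.range = Nat.card {w : M // ∃ x, pi ^ (i + 1) • x = 0 ∧ pi ^ i • x = w} := by
    refine Nat.card_congr (Equiv.subtypeEquivRight fun w => ?_)
    rw [AddMonoidHom.mem_range]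
    constructor
    · rintro ⟨x, hx⟩; exact ⟨x, (hK _).1 x.2, hx⟩
    · rintro ⟨x, hx, hw⟩; exact ⟨⟨x, (hK _).2 hx⟩, hw⟩
  have e3 : Nat.card f.ker = Nat.card {x : M // pi ^ i • x = 0} := by
    refine Nat.card_congr
      { toFun := fun x => ⟨x.1.1, x.2⟩
        invFun := fun x => ⟨⟨x.1, (hK _).2 (by rw [pow_succ', mul_smul, x.2, smul_zero])⟩, x.2⟩
        left_inv := fun x => rfl
        right_inv := fun x => rfl }
  rw [← e1, h, e2, e3]

section
variable {O : Type} [CommRing O] {p : ℕ} [Fact p.Prime] {D : Base O p} {t : ℕ} {lam : Fin t → ℕ} {n : ℕ}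
variable {M : Type} [AddCommGroup M] [Module O M]

lemma Frame.card_F (F : Frame D lam n M) (i : ℕ) :
    Nat.card {w : M // ∃ x, D.pi ^ (i + 1) • x = 0 ∧ D.pi ^ i • x = w} =
      Nat.card {b : Fin t → ZMod p // ∃ a, RR lam i a b} := by
  symm
  have hr : ∀ b, (∃ a, RR lam i a b) ↔ ∃ x, D.pi ^ (i + 1) • x = 0 ∧ D.pi ^ i • x = F.w b := by
    intro b
    simp only [← F.rel i]
    constructor
    · rintro ⟨a, x, h1, h2, h3⟩; exact ⟨x, h1, h3⟩
    · rintro ⟨x, h1, h3⟩; exact ⟨_, x, h1, rfl, h3⟩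
  refine Nat.card_congr (Equiv.ofBijective (fun b => ⟨F.w b.1, (hr _).1 b.2⟩) ⟨?_, ?_⟩)
  · intro b b' h
    exact Subtype.ext (F.w_inj (congrArg Subtype.val h))
  · rintro ⟨w, x, h1, h2⟩
    obtain ⟨b, hb⟩ := (F.w_range w).2 (by rw [← h2, smul_smul, ← pow_succ', h1])
    exact ⟨⟨b, (hr _).2 ⟨x, h1, by rw [h2, hb]⟩⟩, Subtype.ext hb⟩

lemma Frame.card_eq {O' : Type} [CommRing O'] {D' : Base O' p} {M' : Type} [AddCommGroup M'] [Module O' M']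
    (F : Frame D lam n M) (F' : Frame D' lam n M') (i : ℕ) :
    Nat.card {x : M // D.pi ^ i • x = 0} = Nat.card {x : M' // D'.pi ^ i • x = 0} := by
  induction i with
  | zero =>
    simp only [pow_zero, one_smul]
    simp
  | succ i ih => rw [cardK_succ, cardK_succ, ih, F.card_F, F'.card_F]

lemma Frame.card_top (F : Frame D lam n M) : Nat.card M = Nat.card {x : M // D.pi ^ n • x = 0} :=
  (Nat.card_congr (Equiv.subtypeUnivEquiv F.top)).symm

lemma exists_model (D : Base O p) (lam : Fin t → ℕ) (n : ℕ) (hpos : ∀ j, 1 ≤ lam j) (hlam : ∀ j, lam j ≤ n)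
    (H1 : ∀ (l i : ℕ) (c : O), i ≤ l → l ≤ n → D.pi ^ l ∣ D.pi ^ i * c → D.pi ^ (l - i) ∣ c) :
    ∃ (M : Type) (_ : AddCommGroup M) (_ : Module O M), Nonempty (PB D lam n M) := by
  have hs : ∀ c : Fin t → O, ∑ j, c j • (Pi.single j 1 : (j : Fin t) → O ⧸ Ideal.span {D.pi ^ lam j}) =
      fun j => Ideal.Quotient.mk _ (c j) := by
    intro c
    conv_rhs => rw [← Finset.univ_sum_single (fun j => (Ideal.Quotient.mk (Ideal.span {D.pi ^ lam j})) (c j))]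
    refine Finset.sum_congr rfl fun j _ => ?_
    rw [← Pi.single_smul]
    congr 1
    change Ideal.Quotient.mk _ (c j * 1) = _
    rw [mul_one]
  have hz : ∀ (j : Fin t) (c : O), Ideal.Quotient.mk (Ideal.span {D.pi ^ lam j}) c = 0 ↔ D.pi ^ lam j ∣ c := by
    intro j c
    rw [Ideal.Quotient.eq_zero_iff_mem, Ideal.mem_span_singleton]
  have hsm : ∀ (j : Fin t) (c y : O), c • Ideal.Quotient.mk (Ideal.span {D.pi ^ lam j}) y =
     Ideal.Quotient.mk (Ideal.span {D.pi ^ lam j}) (c * y) := fun j c y => rfl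
  refine ⟨(j : Fin t) → O ⧸ Ideal.span {D.pi ^ lam j}, inferInstance, inferInstance, ⟨
    { e := fun j => Pi.single j 1
      h0 := fun j => ?_
      ind := fun c h j => ?_
      spn := fun i x hx => ?_
      top := fun x => ?_ }⟩⟩
  · rw [← Pi.single_smul]
    have : D.pi ^ lam j • (1 : O ⧸ Ideal.span {D.pi ^ lam j}) = 0 := by
      change Ideal.Quotient.mk _ (D.pi ^ lam j * 1) = 0
      rw [mul_one, hz]
    rw [this, Pi.single_zero]
  · simp only [smul_smul] at h
    rw [hs] at h
    have h2 := congrFun h j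
    have h3 := (hz j _).1 h2
    rw [mul_comm] at h3
    have h4 := H1 _ _ _ (Nat.sub_le _ _) (hlam j) h3
    have e : lam j - (lam j - 1) = 1 := by have := hpos j; omega
    rw [e, pow_one] at h4
    exact (D.hres _).2 h4
  · have hx' : ∀ j, ∃ y, Ideal.Quotient.mk _ y = x j := fun j => Ideal.Quotient.mk_surjective (x j)
    choose y hy using hx'
    obtain rfl : x = fun j => Ideal.Quotient.mk _ (y j) := by funext j; rw [hy]
    have h1 : ∀ j, D.pi ^ lam j ∣ D.pi ^ (i + 1) * y j := fun j => (hz j _).1 (congrFun hx j)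
    have h2 : ∀ j, ∃ c, i + 1 ≤ lam j → y j = D.pi ^ (lam j - (i + 1)) * c := by
      intro j
      by_cases h : i + 1 ≤ lam j
      · obtain ⟨c, hc⟩ := H1 _ _ _ h (hlam j) (h1 j)
        exact ⟨c, fun _ => hc⟩
      · exact ⟨0, fun h' => absurd h' h⟩
    choose c hc using h2
    refine ⟨c, ?_⟩
    have h3 : (∑ j, if i + 1 ≤ lam j then
        c j • D.pi ^ (lam j - 1) • (Pi.single j 1 : (j : Fin t) → O ⧸ Ideal.span {D.pi ^ lam j}) else 0) =
        ∑ j, (if i + 1 ≤ lam j then c j * D.pi ^ (lam j - 1) else 0) •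
          (Pi.single j 1 : (j : Fin t) → O ⧸ Ideal.span {D.pi ^ lam j}) := by
      refine Finset.sum_congr rfl fun j _ => ?_
      split_ifs
      · rw [mul_smul]
      · rw [zero_smul]
    rw [h3, hs]
    funext j
    rw [Pi.smul_apply, hsm]
    split_ifs with h
    · have e : lam j - 1 = i + (lam j - (i + 1)) := by omega
      congr 1
      rw [hc j h, e, pow_add]
      ring
    · rw [map_zero, hz]
      exact dvd_mul_of_dvd_left (pow_dvd_pow _ (by omega)) _
  · funext j
    obtain ⟨y, hy⟩ := Ideal.Quotient.mk_surjective (x j)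
    rw [Pi.smul_apply, Pi.zero_apply, ← hy, hsm, hz]
    exact dvd_mul_of_dvd_left (pow_dvd_pow _ (hlam j)) _

/-- the same bracket over another base -/
lemma exists_other {O' : Type} [CommRing O'] (D' : Base O' p) {L : Type} [LieRing L] [LieAlgebra O L]
    {β : (Fin t → ZMod p) → (Fin t → ZMod p) → (Fin t → ZMod p)}
    (hpos : ∀ j, 1 ≤ lam j) (hlam : ∀ j, lam j ≤ n)
    (H1 : ∀ (l i : ℕ) (c : O'), i ≤ l → l ≤ n → D'.pi ^ l ∣ D'.pi ^ i * c → D'.pi ^ (l - i) ∣ c)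
    (h : Pres D lam n L β) (hN : NilE L) :
    ∃ (L' : Type) (_ : LieRing L') (_ : LieAlgebra O' L'), Pres D' lam n L' β ∧ NilE L' ∧
      (∀ a b : L', D'.pi • ⁅a, b⁆ = 0) ∧ Nat.card L' = Nat.card L ∧
      ∀ i, Nat.card {x : L' // D'.pi ^ i • x = 0} = Nat.card {x : L // D.pi ^ i • x = 0} := by
  obtain ⟨F, hF⟩ := h
  obtain ⟨M, iA, iM, ⟨P⟩⟩ := exists_model D' lam n hpos hlam H1
  let F' := P.frame hpos hlam
  have hs := F.v_surj hlam
  have hN' : ∀ b, F'.v (F'.w b) = F.v (F.w b) := fun b => (F'.v_w_iff _ b).2 ((F.v_w_iff _ b).1 rfl)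
  have hβ : ∀ x y, F.w (β (F.v x) (F.v y)) = ⁅x, y⁆ := fun x y => (hF x y).symm
  have b1 : ∀ a b c, β (a + b) c = β a c + β b c := by
    intro a b c
    obtain ⟨x, rfl⟩ := hs a
    obtain ⟨y, rfl⟩ := hs b
    obtain ⟨z, rfl⟩ := hs c
    apply F.w_inj
    rw [← map_add, map_add F.w, hβ, hβ, hβ, add_lie]
  have b2 : ∀ a b c, β a (b + c) = β a b + β a c := by
    intro a b c
    obtain ⟨x, rfl⟩ := hs a
    obtain ⟨y, rfl⟩ := hs b
    obtain ⟨z, rfl⟩ := hs c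
    apply F.w_inj
    rw [← map_add, map_add F.w, hβ, hβ, hβ, lie_add]
  have b3 : ∀ a, β a a = 0 := by
    intro a
    obtain ⟨x, rfl⟩ := hs a
    apply F.w_inj
    rw [hβ, lie_self, map_zero]
  have b4 : ∀ (k : ZMod p) a b, β a (k • b) = k • β a b := by
    intro k a b
    obtain ⟨x, rfl⟩ := hs a
    obtain ⟨y, rfl⟩ := hs b
    apply F.w_inj
    rw [← res_lft D k, ← F.v_smul, hβ, F.w_smul, hβ, lie_smul]
  have b5 : ∀ a b c, β a (F.v (F.w (β b c))) = β (F.v (F.w (β a b))) c + β b (F.v (F.w (β a c))) := by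
    intro a b c
    obtain ⟨x, rfl⟩ := hs a
    obtain ⟨y, rfl⟩ := hs b
    obtain ⟨z, rfl⟩ := hs c
    apply F.w_inj
    rw [map_add F.w, hβ, hβ, hβ, hβ, hβ, hβ]
    exact leibniz_lie x y z
  have b6 : ∀ a, β a 0 = 0 := by
    intro a
    have := b4 0 a 0
    rwa [zero_smul, zero_smul] at this
  letI iL : LieRing M :=
    { iA with
      bracket := fun x y => F'.w (β (F'.v x) (F'.v y))
      add_lie := fun x y z => by
        change F'.w (β (F'.v (x + y)) (F'.v z)) = F'.w _ + F'.w _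
        rw [map_add F'.v, b1, map_add F'.w]
      lie_add := fun x y z => by
        change F'.w (β (F'.v x) (F'.v (y + z))) = F'.w _ + F'.w _
        rw [map_add F'.v, b2, map_add F'.w]
      lie_self := fun x => by
        change F'.w (β (F'.v x) (F'.v x)) = 0
        rw [b3, map_zero]
      leibniz_lie := fun x y z => by
        change F'.w (β (F'.v x) (F'.v (F'.w (β (F'.v y) (F'.v z))))) =
          F'.w (β (F'.v (F'.w (β (F'.v x) (F'.v y)))) (F'.v z)) +
          F'.w (β (F'.v y) (F'.v (F'.w (β (F'.v x) (F'.v z)))))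
        rw [hN', hN', hN', b5, map_add F'.w] }
  letI iLA : LieAlgebra O' M :=
    { iM with
      lie_smul := fun c x y => by
        change F'.w (β (F'.v x) (F'.v (c • y))) = c • F'.w (β (F'.v x) (F'.v y))
        rw [F'.v_smul, b4, F'.w_smul] }
  have hbr : ∀ x y : M, ⁅x, y⁆ = F'.w (β (F'.v x) (F'.v y)) := fun x y => rfl
  refine ⟨M, iL, iLA, ⟨F', hbr⟩, ?_, ?_, ?_, ?_⟩
  · obtain ⟨m, hm⟩ := hN
    have key : ∀ (l' : List M) (v' : M), ∃ (l : List L) (v : L), l.length = l'.length ∧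
        F'.v (lfold l' v') = F.v (lfold l v) := by
      intro l' v'
      induction l' with
      | nil =>
        obtain ⟨v, hv⟩ := hs (F'.v v')
        exact ⟨[], v, rfl, hv.symm⟩
      | cons a l' ih =>
        obtain ⟨l, v, h1, h2⟩ := ih
        obtain ⟨b, hb⟩ := hs (F'.v a)
        refine ⟨b :: l, v, by simp [h1], ?_⟩
        rw [lfold_cons, lfold_cons, hbr, hF, hN', h2, hb]
    refine ⟨m + 1, fun l' v' hl => ?_⟩
    cases l' with
    | nil => simp at hl
    | cons a l' =>
      obtain ⟨l, v, h1, h2⟩ := key l' v'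
      rw [List.length_cons] at hl
      rw [lfold_cons, hbr, h2, hm l v (by omega), map_zero F.v, b6, map_zero F'.w]
  · intro a b
    rw [hbr]
    exact F'.pi_w _
  · rw [F.card_top]
    exact (F'.card_top).trans (F'.card_eq F n)
  · intro i
    exact F'.card_eq F i

end
end Laz

namespace Laz

lemma exists_indep {k W : Type} [Field k] [AddCommGroup W] [Module k W] [Module.Finite k W] (m : ℕ) :
    ∀ (F : Fin m → Submodule k W), (∀ j, j.1 + 1 ≤ Module.finrank k (F j)) →
      ∃ s : Fin m → W, LinearIndependent k s ∧ ∀ j, s j ∈ F j := by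
  induction m with
  | zero => intro F _; exact ⟨Fin.elim0, linearIndependent_empty_type, fun j => j.elim0⟩
  | succ m ih =>
    intro F hF
    obtain ⟨s, h1, h2⟩ := ih (fun j => F j.castSucc) (fun j => hF j.castSucc)
    have h3 : ∃ x ∈ F (Fin.last m), x ∉ Submodule.span k (Set.range s) := by
      by_contra hc
      push Not at hc
      have h4 : F (Fin.last m) ≤ Submodule.span k (Set.range s) := hc
      have h5 := Submodule.finrank_mono h4
      have h6 := hF (Fin.last m)
      rw [finrank_span_eq_card h1, Fintype.card_fin] at h5
      rw [Fin.val_last] at h6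
      omega
    obtain ⟨x, hx, hx'⟩ := h3
    refine ⟨Fin.snoc s x, ?_, ?_⟩
    · rw [linearIndependent_finSnoc]
      exact ⟨h1, hx'⟩
    · intro j
      refine Fin.lastCases ?_ (fun j => ?_) j
      · rw [Fin.snoc_last]; exact hx
      · rw [Fin.snoc_castSucc]; exact h2 j

section
variable {O : Type} [CommRing O] {p : ℕ} [Fact p.Prime] (D : Base O p) {t : ℕ} (lam : Fin t → ℕ) (n : ℕ)
variable (M : Type) [AddCommGroup M] [Module O M]

lemma exists_pb (hmono : Antitone lam) (hpos : ∀ j, 1 ≤ lam j) (hsum : ∑ j, lam j = n)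
    (hcard : Nat.card M = p ^ n)
    (hK : ∀ i, Nat.card {x : M // D.pi ^ i • x = 0} = p ^ (∑ j, min (lam j) i)) : Nonempty (PB D lam n M) := by
  have hp : p.Prime := Fact.out
  have hlam : ∀ j, lam j ≤ n := fun j => by
    rw [← hsum]; exact Finset.single_le_sum (f := lam) (fun _ _ => Nat.zero_le _) (Finset.mem_univ j)
  haveI : Finite M := Nat.finite_of_card_ne_zero (by rw [hcard]; exact pow_ne_zero _ hp.ne_zero)
  have hpz : ∀ x : M, D.pi • x = 0 → p • x = 0 := by
    intro x hx
    obtain ⟨d, hd⟩ := (D.hres (p : O)).1 (by rw [map_natCast, ZMod.natCast_self])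
    rw [← Nat.cast_smul_eq_nsmul O, hd, mul_comm, mul_smul, hx, smul_zero]
  let W : Submodule O M := LinearMap.ker (LinearMap.lsmul O M D.pi)
  have hW : ∀ x, x ∈ W ↔ D.pi • x = 0 := fun x => by rw [LinearMap.mem_ker]; rfl
  letI : Module (ZMod p) W := AddCommGroup.zmodModule (n := p) (fun x => Subtype.ext (hpz x.1 ((hW _).1 x.2)))
  have hsm : ∀ (c : O) (w : W), ((D.res c • w : W) : M) = c • w.1 := by
    intro c w
    have h1 : ((D.res c • w : W) : M) = lft O (D.res c) • w.1 :=
      smul_zmod_hom (O := O) W.subtype.toAddMonoidHom (D.res c) w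
    rw [h1]
    obtain ⟨x, hx⟩ := pi_dvd_sub D (c := c) (d := lft O (D.res c)) (by rw [res_lft])
    rw [sub_eq_iff_eq_add] at hx
    conv_rhs => rw [hx]
    rw [add_smul, mul_comm, mul_smul, (hW _).1 w.2, smul_zero, zero_add]
  let Fi : ℕ → Submodule (ZMod p) W := fun i =>
    { carrier := {w | ∃ x : M, D.pi ^ i • x = w.1}
      add_mem' := by
        rintro a b ⟨x, hx⟩ ⟨y, hy⟩
        exact ⟨x + y, by rw [smul_add, hx, hy]; rfl⟩
      zero_mem' := ⟨0, by rw [smul_zero]; rfl⟩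
      smul_mem' := by
        rintro k a ⟨x, hx⟩
        refine ⟨lft O k • x, ?_⟩
        rw [← res_lft D k, hsm, ← hx, res_lft, smul_comm] }
  have hFi : ∀ i (w : W), w ∈ Fi i ↔ ∃ x : M, D.pi ^ i • x = w.1 := fun i w => Iff.rfl
  have hrank : ∀ i, Module.finrank (ZMod p) (Fi i) = (Finset.univ.filter fun j => i + 1 ≤ lam j).card := by
    intro i
    have h1 : Nat.card (Fi i) = Nat.card {w : M // ∃ x, D.pi ^ (i + 1) • x = 0 ∧ D.pi ^ i • x = w} := by
      refine Nat.card_congr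
        { toFun := fun w => ⟨w.1.1, by
            obtain ⟨x, hx⟩ := w.2
            exact ⟨x, by rw [pow_succ', mul_smul, hx]; exact (hW _).1 w.1.2, hx⟩⟩
          invFun := fun w => ⟨⟨w.1, by
            obtain ⟨x, hx, hx'⟩ := w.2
            rw [hW, ← hx', smul_smul, ← pow_succ', hx]⟩, by
            obtain ⟨x, hx, hx'⟩ := w.2
            exact ⟨x, hx'⟩⟩
          left_inv := fun w => rfl
          right_inv := fun w => rfl }
    have h2 := cardK_succ D.pi M i
    have h3 : ∑ j, min (lam j) (i + 1) = (Finset.univ.filter fun j => i + 1 ≤ lam j).card + ∑ j, min (lam j) i := by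
      rw [Finset.card_filter, ← Finset.sum_add_distrib]
      refine Finset.sum_congr rfl fun j _ => ?_
      split_ifs <;> omega
    rw [hK, hK, ← h1, h3, pow_add] at h2
    have h4 := Nat.eq_of_mul_eq_mul_right (pow_pos hp.pos _) h2
    rw [Module.natCard_eq_pow_finrank (K := ZMod p), Nat.card_zmod] at h4
    exact (Nat.pow_right_injective hp.two_le h4).symm
  obtain ⟨s, hs1, hs2⟩ := exists_indep (k := ZMod p) t (fun j => Fi (lam j - 1)) (by
    intro j
    rw [hrank]
    have e : lam j - 1 + 1 = lam j := by have := hpos j; omega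
    rw [e, ← Fin.card_Iic j]
    refine Finset.card_le_card fun k hk => ?_
    rw [Finset.mem_filter]
    exact ⟨Finset.mem_univ _, hmono (Finset.mem_Iic.1 hk)⟩)
  choose e he using hs2
  refine ⟨{ e := e, h0 := fun j => ?_, ind := fun c h j => ?_, spn := fun i x hx => ?_, top := ?_ }⟩
  · have e1 : lam j = lam j - 1 + 1 := by have := hpos j; omega
    rw [e1, pow_succ', mul_smul, he]
    exact (hW _).1 (s j).2
  · have h1 : ∑ j, D.res (c j) • s j = 0 := by
      apply Subtype.ext
      rw [AddSubmonoidClass.coe_finset_sum]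
      refine Eq.trans (Finset.sum_congr rfl fun j _ => ?_) h
      rw [hsm, he]
    exact Fintype.linearIndependent_iff.1 hs1 _ h1 j
  · have hspan : Submodule.span (ZMod p) (Set.range fun j : {j // i + 1 ≤ lam j} => s j.1) = Fi i := by
      refine Submodule.eq_of_le_of_finrank_eq ?_ ?_
      · rw [Submodule.span_le]
        rintro _ ⟨⟨j, hj⟩, rfl⟩
        refine ⟨D.pi ^ (lam j - 1 - i) • e j, ?_⟩
        have e1 : i + (lam j - 1 - i) = lam j - 1 := by omega
        rw [smul_smul, ← pow_add, e1]
        exact he j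
      · have hli : LinearIndependent (ZMod p) (fun j : {j // i + 1 ≤ lam j} => s j.1) :=
          hs1.comp _ Subtype.val_injective
        rw [hrank, finrank_span_eq_card hli, Fintype.card_subtype]
    have hmem : (⟨D.pi ^ i • x, (hW _).2 (by rw [smul_smul, ← pow_succ', hx])⟩ : W) ∈ Fi i := ⟨x, rfl⟩
    rw [← hspan, Submodule.mem_span_range_iff_exists_fun] at hmem
    obtain ⟨c, hc⟩ := hmem
    refine ⟨fun j => if h : i + 1 ≤ lam j then lft O (c ⟨j, h⟩) else 0, ?_⟩
    have hc' := congrArg Subtype.val hc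
    rw [AddSubmonoidClass.coe_finset_sum] at hc'
    refine hc'.symm.trans ?_
    rw [← Finset.sum_filter, Finset.sum_subtype (Finset.univ.filter fun j => i + 1 ≤ lam j)
      (p := fun j => i + 1 ≤ lam j) (by simp)]
    refine Finset.sum_congr rfl fun j _ => ?_
    beta_reduce
    rw [dif_pos j.2, he, ← hsm, res_lft]
  · have h1 : Function.Injective (Subtype.val : {x : M // D.pi ^ n • x = 0} → M) := Subtype.val_injective
    have h2 := h1.bijective_of_nat_card_le (by
      rw [hK, hcard, ← hsum]
      refine Nat.pow_le_pow_right hp.pos (Finset.sum_le_sum fun j _ => ?_)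
      rw [hsum]
      exact le_min le_rfl (hlam j))
    intro x
    obtain ⟨y, rfl⟩ := h2.2 x
    exact y.2

lemma exists_pres (hmono : Antitone lam) (hpos : ∀ j, 1 ≤ lam j) (hsum : ∑ j, lam j = n)
    (L : Type) [LieRing L] [LieAlgebra O L]
    (hcard : Nat.card L = p ^ n)
    (hK : ∀ i, Nat.card {x : L // D.pi ^ i • x = 0} = p ^ (∑ j, min (lam j) i))
    (hbr : ∀ a b : L, D.pi • ⁅a, b⁆ = 0) : ∃ β, Pres D lam n L β := by
  have hlam : ∀ j, lam j ≤ n := fun j => by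
    rw [← hsum]; exact Finset.single_le_sum (f := lam) (fun _ _ => Nat.zero_le _) (Finset.mem_univ j)
  obtain ⟨P⟩ := exists_pb D lam n L hmono hpos hsum hcard hK
  let F := P.frame hpos hlam
  have hs := F.v_surj hlam
  have h1 : ∀ a b : Fin t → ZMod p, ∃ c, F.w c = ⁅Function.surjInv hs a, Function.surjInv hs b⁆ :=
    fun a b => (F.w_range _).2 (hbr _ _)
  choose β hβ using h1
  have hl : ∀ x x' y : L, F.v x = F.v x' → ⁅x, y⁆ = ⁅x', y⁆ := by
    intro x x' y h
    rw [← sub_eq_zero, ← map_sub, F.v_ker] at h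
    obtain ⟨z, hz⟩ := h
    rw [← sub_eq_zero, ← sub_lie, hz, smul_lie, hbr]
  have hr : ∀ x y y' : L, F.v y = F.v y' → ⁅x, y⁆ = ⁅x, y'⁆ := by
    intro x y y' h
    rw [← lie_skew, hl y y' x h, lie_skew]
  refine ⟨β, F, fun x y => ?_⟩
  rw [hβ, hl _ x _ (Function.surjInv_eq hs _), hr _ _ y (Function.surjInv_eq hs _)]

end

section
variable {O O' : Type} [CommRing O] [CommRing O'] {p : ℕ} [Fact p.Prime] (D : Base O p) (D' : Base O' p)
  {t : ℕ} (lam : Fin t → ℕ) (n : ℕ)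

/-- common structure constants -/
def Common (q : TypedO O D.pi p n t lam) (q' : TypedO O' D'.pi p n t lam) : Prop :=
  letI := q.1.2.1; letI := q.1.2.2; letI := q'.1.2.1; letI := q'.1.2.2
  ∃ β, Pres D lam n q.1.1 β ∧ Pres D' lam n q'.1.1 β

lemma Common.symm {q : TypedO O D.pi p n t lam} {q' : TypedO O' D'.pi p n t lam} (h : Common D D' lam n q q') :
    Common D' D lam n q' q := by
  obtain ⟨β, h1, h2⟩ := h
  exact ⟨β, h2, h1⟩

lemma exists_common (hmono : Antitone lam) (hpos : ∀ j, 1 ≤ lam j) (hsum : ∑ j, lam j = n)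
    (H1 : ∀ (l i : ℕ) (c : O'), i ≤ l → l ≤ n → D'.pi ^ l ∣ D'.pi ^ i * c → D'.pi ^ (l - i) ∣ c)
    (q : TypedO O D.pi p n t lam) : ∃ q' : TypedO O' D'.pi p n t lam, Common D D' lam n q q' := by
  have hlam : ∀ j, lam j ≤ n := fun j => by
    rw [← hsum]; exact Finset.single_le_sum (f := lam) (fun _ _ => Nat.zero_le _) (Finset.mem_univ j)
  obtain ⟨⟨L, iL, iLA⟩, hcard, hK, hN, hbr⟩ := q
  obtain ⟨β, hβ⟩ := exists_pres D lam n hmono hpos hsum L hcard hK hbr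
  obtain ⟨L', iL', iLA', h1, h2, h3, h4, h5⟩ := exists_other D' hpos hlam H1 hβ ((nilE_iff L).1 hN)
  exact ⟨⟨⟨L', iL', iLA'⟩, h4.trans hcard, fun i => (h5 i).trans (hK i), (nilE_iff L').2 h2, h3⟩, β, hβ, h1⟩

lemma Common.rel (hpos : ∀ j, 1 ≤ lam j) (hsum : ∑ j, lam j = n)
    {q₁ q₂ : TypedO O D.pi p n t lam} {q₁' q₂' : TypedO O' D'.pi p n t lam}
    (h1 : Common D D' lam n q₁ q₁') (h2 : Common D D' lam n q₂ q₂')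
    (h : typedORel O D.pi p n t lam q₁ q₂) : typedORel O' D'.pi p n t lam q₁' q₂' := by
  have hlam : ∀ j, lam j ≤ n := fun j => by
    rw [← hsum]; exact Finset.single_le_sum (f := lam) (fun _ _ => Nat.zero_le _) (Finset.mem_univ j)
  letI := q₁.1.2.1; letI := q₁.1.2.2; letI := q₁'.1.2.1; letI := q₁'.1.2.2
  letI := q₂.1.2.1; letI := q₂.1.2.2; letI := q₂'.1.2.1; letI := q₂'.1.2.2
  obtain ⟨β₁, h3, h4⟩ := h1
  obtain ⟨β₂, h5, h6⟩ := h2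
  obtain ⟨f⟩ := h
  have h7 : Pres D lam n q₂.1.1 β₁ := h3.transport f
  have h8 : Pres D' lam n q₂'.1.1 β₁ := Pres.change hlam h7 h5 h6
  exact Pres.equiv hpos hlam h4 h8

lemma rel_refl (q : TypedO O D.pi p n t lam) : typedORel O D.pi p n t lam q q := by
  letI := q.1.2.1; letI := q.1.2.2
  exact ⟨LieEquiv.refl⟩

theorem equiv_OO (hmono : Antitone lam) (hpos : ∀ j, 1 ≤ lam j) (hsum : ∑ j, lam j = n)
    (H1 : ∀ (l i : ℕ) (c : O), i ≤ l → l ≤ n → D.pi ^ l ∣ D.pi ^ i * c → D.pi ^ (l - i) ∣ c)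
    (H1' : ∀ (l i : ℕ) (c : O'), i ≤ l → l ≤ n → D'.pi ^ l ∣ D'.pi ^ i * c → D'.pi ^ (l - i) ∣ c) :
    Nonempty (Quot (typedORel O D.pi p n t lam) ≃ Quot (typedORel O' D'.pi p n t lam)) := by
  choose F hF using exists_common D D' lam n hmono hpos hsum H1'
  choose G hG using exists_common D' D lam n hmono hpos hsum H1
  refine ⟨quotEquiv F G (fun a b h => (hF a).rel D D' lam n hpos hsum (hF b) h)
    (fun a b h => (hG a).rel D' D lam n hpos hsum (hG b) h) (fun a => ?_) (fun b => ?_)⟩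
  · exact (hG (F a)).rel D' D lam n hpos hsum ((hF a).symm D D' lam n) (rel_refl D' lam n _)
  · exact (hF (G b)).rel D D' lam n hpos hsum ((hG b).symm D' D lam n) (rel_refl D lam n _)

end

section
variable (p n : ℕ) [Fact p.Prime]

/-- integers -/
def baseZ : Base ℤ p where
  pi := p
  res := Int.castRingHom (ZMod p)
  hres c := by
    rw [eq_intCast, ZMod.intCast_zmod_eq_zero_iff_dvd]

lemma H1Z (l i : ℕ) (c : ℤ) (h : i ≤ l) (_ : l ≤ n) (hd : (baseZ p).pi ^ l ∣ (baseZ p).pi ^ i * c) :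
    (baseZ p).pi ^ (l - i) ∣ c := by
  have e : l = i + (l - i) := by omega
  rw [e, pow_add] at hd
  have hne : ((baseZ p).pi : ℤ) ^ i ≠ 0 := pow_ne_zero _ (by
    change (p : ℤ) ≠ 0
    exact_mod_cast (Fact.out : p.Prime).ne_zero)
  exact (mul_dvd_mul_iff_left hne).1 hd

/-- truncated polynomials -/
noncomputable def baseR (hn : 1 ≤ n) : Base (Rn p n) p where
  pi := Tn p n
  res := Ideal.Quotient.lift _ (Polynomial.constantCoeff (R := ZMod p)) (by
    intro a ha
    rw [Ideal.mem_span_singleton] at ha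
    obtain ⟨b, rfl⟩ := ha
    rw [map_mul, map_pow, Polynomial.constantCoeff_apply, Polynomial.coeff_X_zero, zero_pow (by omega), zero_mul])
  hres c := by
    obtain ⟨f, rfl⟩ := Ideal.Quotient.mk_surjective c
    rw [Ideal.Quotient.lift_mk, Polynomial.constantCoeff_apply, ← Polynomial.X_dvd_iff]
    constructor
    · rintro ⟨g, rfl⟩
      exact ⟨Ideal.Quotient.mk _ g, by rw [map_mul]; rfl⟩
    · rintro ⟨g, hg⟩
      obtain ⟨g, rfl⟩ := Ideal.Quotient.mk_surjective g
      rw [Tn, ← map_mul, Ideal.Quotient.eq, Ideal.mem_span_singleton] at hg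
      have h1 : (X : Polynomial (ZMod p)) ∣ f - X * g := dvd_trans (dvd_pow_self _ (by omega)) hg
      have h2 := dvd_add h1 (dvd_mul_right X g)
      rwa [sub_add_cancel] at h2

lemma H1R (hn : 1 ≤ n) (l i : ℕ) (c : Rn p n) (h : i ≤ l) (hl : l ≤ n)
    (hd : (baseR p n hn).pi ^ l ∣ (baseR p n hn).pi ^ i * c) :
    (baseR p n hn).pi ^ (l - i) ∣ c := by
  change (Tn p n) ^ l ∣ (Tn p n) ^ i * c at hd
  change (Tn p n) ^ (l - i) ∣ c
  obtain ⟨f, rfl⟩ := Ideal.Quotient.mk_surjective c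
  obtain ⟨g, hg⟩ := hd
  obtain ⟨g, rfl⟩ := Ideal.Quotient.mk_surjective g
  rw [Tn, ← map_pow, ← map_pow, ← map_mul, ← map_mul, Ideal.Quotient.eq, Ideal.mem_span_singleton] at hg
  have h1 : (X : Polynomial (ZMod p)) ^ l ∣ X ^ i * f - X ^ l * g := dvd_trans (pow_dvd_pow _ hl) hg
  have h2 := dvd_add h1 (dvd_mul_right (X ^ l) g)
  rw [sub_add_cancel] at h2
  have e : l = i + (l - i) := by omega
  rw [e, pow_add] at h2
  obtain ⟨k, hk⟩ := (mul_dvd_mul_iff_left (pow_ne_zero i X_ne_zero)).1 h2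
  refine ⟨Ideal.Quotient.mk _ k, ?_⟩
  rw [hk, map_mul, map_pow]
  rfl

end
end Laz

/-- For `p ≥ n` prime and a partition `λ₁ ≥ ⋯ ≥ λ_t` of `n`, there is a bijection between
isomorphism classes of groups of order `p ^ n` of type `λ` with `⁅x,y⁆ ^ p = 1`,
and isomorphism classes of nilpotent `R_n`-Lie algebras of type `λ` with `T • ⁅a,b⁆ = 0`. -/
theorem typed_correspondence (p n t : ℕ) (hp : p.Prime) (hn : 1 ≤ n) (hpn : n ≤ p)
    (lam : Fin t → ℕ) (hmono : Antitone lam) (hpos : ∀ j, 1 ≤ lam j)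
    (hsum : ∑ j, lam j = n) :
    Nonempty (Quot (typedGroupIsoRel p n t lam) ≃ Quot (typedLieIsoRel p n t lam)) := by
  haveI : Fact p.Prime := ⟨hp⟩
  obtain ⟨e1⟩ := Laz.equiv_GL hp hpn lam
  obtain ⟨e2⟩ := Laz.equiv_OO (Laz.baseZ p) (Laz.baseR p n hn) lam n hmono hpos hsum
    (Laz.H1Z p n) (Laz.H1R p n hn)
  exact ⟨e1.trans e2⟩
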